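/- Let k be an algebraically closed field of characteristic 0 and k_q = k[q,q^{-1}]. For each (m,n) there is a (unique) k_q-algebra homomorphism ρ^q_{(m,n)} : k_q[b]_{m,n} → k_q[b]_{m,n} ⊗_{k_q} k_q[SL_{m,0}] with ρ^q_{(m,n)}(b_{i,j}) = Σ_{k=-m}^{-1} b_{i,k} ⊗ g_{k,j}, and for every compatible family x = (x_{(m,n)}) ∈ k_q[M_∞] the following are equivalent: (i) ρ^q_{(m,n)}(x_{(m,n)}) = x_{(m,n)} ⊗ 1 for all (m,n); (ii) x_{(m,n)} ∈ k_q[Δ_{m,n}] for all (m,n). In other words, the ring of coinvariants k_q[M_∞]^{k_q[SL_{∞,0}]} equals the quantum infinite dimensional grassmannian k̂_q[Δ_∞], viewed inside k_q[M_∞] as the subring of families with all components in the quantum grassmannians k_q[Δ_{m,n}]. -/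

import Mathlib

set_option maxHeartbeats 2000000
set_option synthInstance.maxHeartbeats 400000

noncomputable section

open TensorProduct

/-- `k_q = k[q, q⁻¹]`, the ring of Laurent polynomials over `k`. -/
abbrev kq (k : Type) [Field k] : Type := LaurentPolynomial k

/-- The parameter `q ∈ k_q`. -/
def qParam (k : Type) [Field k] : kq k := LaurentPolynomial.T 1

/-- The inverse parameter `q⁻¹ ∈ k_q`. -/
def qInv (k : Type) [Field k] : kq k := LaurentPolynomial.T (-1)

/-- Row indices of the generic `(m+n) × m` quantum matrix: integers `-m, ..., n-1`. -/
abbrev RowI (m n : ℕ) : Type := ↥(Finset.Icc (-(m : ℤ)) ((n : ℤ) - 1))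

/-- Column indices: integers `-m, ..., -1`. -/
abbrev ColI (m : ℕ) : Type := ↥(Finset.Icc (-(m : ℤ)) (-1 : ℤ))

/-- The defining relations of a quantum matrix algebra, with rows indexed by `R` and
columns indexed by `C`. -/
inductive QMRel (k : Type) [Field k] (R C : Type) [LinearOrder R] [LinearOrder C] :
    FreeAlgebra (kq k) (R × C) → FreeAlgebra (kq k) (R × C) → Prop
  | col (i i' : R) (j : C) (h : i < i') :
      QMRel k R C (FreeAlgebra.ι (kq k) (i, j) * FreeAlgebra.ι (kq k) (i', j))
        (qInv k • (FreeAlgebra.ι (kq k) (i', j) * FreeAlgebra.ι (kq k) (i, j)))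
  | row (i : R) (j j' : C) (h : j < j') :
      QMRel k R C (FreeAlgebra.ι (kq k) (i, j) * FreeAlgebra.ι (kq k) (i, j'))
        (qInv k • (FreeAlgebra.ι (kq k) (i, j') * FreeAlgebra.ι (kq k) (i, j)))
  | comm (i i' : R) (j j' : C) (h1 : i < i') (h2 : j' < j) :
      QMRel k R C (FreeAlgebra.ι (kq k) (i, j) * FreeAlgebra.ι (kq k) (i', j'))
        (FreeAlgebra.ι (kq k) (i', j') * FreeAlgebra.ι (kq k) (i, j))
  | qcomm (i i' : R) (j j' : C) (h1 : i < i') (h2 : j < j') :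
      QMRel k R C
        (FreeAlgebra.ι (kq k) (i, j) * FreeAlgebra.ι (kq k) (i', j') -
          FreeAlgebra.ι (kq k) (i', j') * FreeAlgebra.ι (kq k) (i, j))
        ((qInv k - qParam k) • (FreeAlgebra.ι (kq k) (i', j) * FreeAlgebra.ι (kq k) (i, j')))

/-- The quantum matrix algebra with rows indexed by `R` and columns indexed by `C`. -/
abbrev QMatG (k : Type) [Field k] (R C : Type) [LinearOrder R] [LinearOrder C] : Type :=
  RingQuot (QMRel k R C)

/-- The generator `a_{r,c}` of the quantum matrix algebra. -/
def qgen (k : Type) [Field k] (R C : Type) [LinearOrder R] [LinearOrder C] (r : R) (c : C) :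
    QMatG k R C :=
  RingQuot.mkAlgHom (kq k) (QMRel k R C) (FreeAlgebra.ι (kq k) (r, c))

/-- The rectangular quantum matrix algebra `k_q[a]_{m,n}`. -/
abbrev QMat (k : Type) [Field k] (m n : ℕ) : Type := QMatG k (RowI m n) (ColI m)

/-- The generator `a_{i,j}` of `k_q[a]_{m,n}`. -/
def av (k : Type) [Field k] (m n : ℕ) (i : RowI m n) (j : ColI m) : QMat k m n :=
  qgen k (RowI m n) (ColI m) i j

/-- The number of inversions of a map between finite linearly ordered sets. -/
def inversions {a b : ℕ} (f : Fin a → Fin b) : ℕ :=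
  ((Finset.univ : Finset (Fin a × Fin a)).filter fun p => p.1 < p.2 ∧ f p.2 < f p.1).card

/-- The coefficient `(-q)^{-ℓ}`. -/
def qCoeff (k : Type) [Field k] (l : ℕ) : kq k :=
  (-1 : kq k) ^ l * LaurentPolynomial.T (-(l : ℤ))

/-- The general quantum minor on rows `row 0 < row 1 < ⋯` and columns
`col 0 < col 1 < ⋯`:
`Σ_σ (-q)^{-ℓ(σ)} a_{row 0, col (σ 0)} ⋯ a_{row (s-1), col (σ (s-1))}`. -/
def qMinorG (k : Type) [Field k] (R C : Type) [LinearOrder R] [LinearOrder C]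
    (s : ℕ) (row : Fin s → R) (col : Fin s → C) : QMatG k R C :=
  ∑ σ : Equiv.Perm (Fin s),
    qCoeff k (inversions ⇑σ) •
      (List.ofFn fun t : Fin s => qgen k R C (row t) (col (σ t))).prod

/-- The quantum minor `D_{i_0 … i_{m-1}}` of `k_q[a]_{m,n}` on the rows in `I`. -/
def qMinor (k : Type) [Field k] (m n : ℕ) (I : Finset ℤ) (hI : I.card = m)
    (hsub : I ⊆ Finset.Icc (-(m : ℤ)) ((n : ℤ) - 1)) : QMat k m n :=
  qMinorG k (RowI m n) (ColI m) m
    (fun s => ⟨I.orderEmbOfFin hI s, hsub (Finset.orderEmbOfFin_mem I hI s)⟩)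
    (fun t => ⟨-(m : ℤ) + (t : ℕ), by
      have := t.2
      simp only [Finset.mem_Icc]
      omega⟩)

/-- The quantum grassmannian `k_q[Δ_{m,n}]`: the subalgebra of `k_q[a]_{m,n}` generated
by the quantum minors. -/
def QDeltaSub (k : Type) [Field k] (m n : ℕ) : Subalgebra (kq k) (QMat k m n) :=
  Algebra.adjoin (kq k) {x | ∃ I hI hsub, x = qMinor k m n I hI hsub}

/-- The square quantum matrix algebra on the indices `-m, ..., n-1`. -/
abbrev SqMat (k : Type) [Field k] (m n : ℕ) : Type := QMatG k (RowI m n) (RowI m n)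

/-- `N = m + n`, the size of the square generic quantum matrix, as the cardinality of
the index set. -/
def NN (m n : ℕ) : ℕ := (Finset.Icc (-(m : ℤ)) ((n : ℤ) - 1)).card

/-- The quantum determinant of the generic square quantum matrix. -/
def sqDet (k : Type) [Field k] (m n : ℕ) : SqMat k m n :=
  qMinorG k (RowI m n) (RowI m n) (NN m n)
    (fun t => (Finset.Icc (-(m : ℤ)) ((n : ℤ) - 1)).orderIsoOfFin rfl t)
    (fun t => (Finset.Icc (-(m : ℤ)) ((n : ℤ) - 1)).orderIsoOfFin rfl t)

/-- The quantum special linear group ring `k_q[SL_{m,n}]`: the quotient of the square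
quantum matrix algebra by the two-sided ideal generated by `(quantum determinant) − 1`. -/
abbrev QSL (k : Type) [Field k] (m n : ℕ) : Type :=
  RingQuot (fun x y : SqMat k m n => x = sqDet k m n ∧ y = 1)

/-- The quotient map onto `k_q[SL_{m,n}]`. -/
def qslMk (k : Type) [Field k] (m n : ℕ) : SqMat k m n →ₐ[kq k] QSL k m n :=
  RingQuot.mkAlgHom (kq k) _

/-- The generator `g_{i,j}` of `k_q[SL_{m,n}]`. -/
def qgSL (k : Type) [Field k] (m n : ℕ) (i j : RowI m n) : QSL k m n :=
  qslMk k m n (qgen k (RowI m n) (RowI m n) i j)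

/-- `(-q)^z` for an integer exponent `z`. -/
def negqPow (k : Type) [Field k] (z : ℤ) : kq k :=
  (if Even z then 1 else -1) * LaurentPolynomial.T z

lemma card_erase_univ (m n : ℕ) (i : RowI m n) :
    ((Finset.univ : Finset (RowI m n)).erase i).card = NN m n - 1 := by
  simp [Finset.card_erase_of_mem, Finset.card_univ, NN]

/-- The inverse limit of an inverse system of rings, realized concretely as the
subring of the product consisting of the compatible families. -/
def ringInvLim {ι : Type*} [Preorder ι] (G : ι → Type*) [∀ i, Ring (G i)]
    (f : ∀ i j : ι, i ≤ j → (G j →+* G i)) : Subring (∀ i, G i) where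
  carrier := {x | ∀ (i j : ι) (h : i ≤ j), f i j h (x j) = x i}
  zero_mem' := by intro i j h; simp
  one_mem' := by intro i j h; simp
  add_mem' := by
    intro a b ha hb i j h
    simp only [Pi.add_apply, map_add, ha i j h, hb i j h]
  mul_mem' := by
    intro a b ha hb i j h
    simp only [Pi.mul_apply, map_mul, ha i j h, hb i j h]
  neg_mem' := by
    intro a ha i j h
    simp only [Pi.neg_apply, map_neg, ha i j h]

/-- The index set: pairs of positive integers, ordered componentwise. -/
abbrev PIdx : Type := {p : ℕ × ℕ // 0 < p.1 ∧ 0 < p.2}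

/-- The defining property of the quantum coaction
`ρ^q_{(m,n)} : k_q[b]_{m,n} → k_q[b]_{m,n} ⊗ k_q[SL_{m,0}]` on the generators:
`b_{i,j} ↦ Σ_l b_{i,l} ⊗ g_{l,j}`. -/
def rhoqProp (k : Type) [Field k] (m n : ℕ)
    (ρ : QMat k m n →ₐ[kq k] QMat k m n ⊗[kq k] QSL k m 0) : Prop :=
  ∀ (i : RowI m n) (j : ColI m),
    ρ (av k m n i j) =
      ∑ l : RowI m 0,
        av k m n i ⟨l.1, by
          have hl := Finset.mem_Icc.mp l.2
          exact Finset.mem_Icc.mpr ⟨hl.1, by omega⟩⟩ ⊗ₜ[kq k]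
          qgSL k m 0 l ⟨j.1, by
            have hj := Finset.mem_Icc.mp j.2
            exact Finset.mem_Icc.mpr ⟨hj.1, by omega⟩⟩

/-- The defining property of the system of maps `E^q` on the generators. -/
def EqSysProp (k : Type) [Field k]
    (E : ∀ p q : PIdx, p ≤ q →
      (QMat k q.1.1 q.1.2 →ₐ[kq k] QMat k p.1.1 p.1.2)) : Prop :=
  ∀ (p q : PIdx) (h : p ≤ q) (i : RowI q.1.1 q.1.2) (j : ColI q.1.1),
    E p q h (av k q.1.1 q.1.2 i j) =
      if h2 : (i.1 ∈ Finset.Icc (-(p.1.1 : ℤ)) ((p.1.2 : ℤ) - 1)) ∧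
          (j.1 ∈ Finset.Icc (-(p.1.1 : ℤ)) (-1 : ℤ)) then
        av k p.1.1 p.1.2 ⟨i.1, h2.1⟩ ⟨j.1, h2.2⟩
      else if i.1 = j.1 then 1 else 0

/-!
Quantum minors are coinvariant because the quantum minors of a product of two quantum matrices with
commuting entries factor off the quantum determinant of the second one.

For the converse, let the generators `b_{i,j}` act on a Fock space by products of `q`-oscillators.
Applying `x` to the vacuum identifies `k_q[b]_{m,n}` with a free module on exponent matrices, so
that `x` is determined by its coefficients there. Specialising `k_q[SL_{m,0}]` to matrices that
differ from the identity only in two adjacent columns turns coinvariance of `x` into the statement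
that its coefficient vector has weight zero and is killed by the raising operator of a copy of
`U_q(sl₂)`, for each pair of adjacent columns. Looking at the colexicographically largest exponent
in the support, this forces the ballot condition: the exponent is the content of a rectangular
semistandard tableau. Reading the tableau column by column produces a product of quantum minors with
the same leading exponent and an invertible leading coefficient. Subtracting a multiple of that
product lowers the leading exponent, and the colexicographic order on exponents is well founded.
-/

namespace QuantumGrassmannian

section QuantumMatrix

/-- A family `X` of elements of a `K`-algebra satisfying the relations of the entries of a quantum
matrix with parameter `q`; the inverse parameter `qi` is a separate argument so that `K` need
only be a commutative ring. -/
structure IsQuantumMatrix {K A : Type*} [CommRing K] [Ring A] [Algebra K A] (q qi : K)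
    {R C : Type*} [LT R] [LT C] (X : R → C → A) : Prop where
  col : ∀ i i' j, i < i' → X i j * X i' j = qi • (X i' j * X i j)
  row : ∀ i j j', j < j' → X i j * X i j' = qi • (X i j' * X i j)
  comm : ∀ i i' j j', i < i' → j' < j → X i j * X i' j' = X i' j' * X i j
  qcomm : ∀ i i' j j', i < i' → j < j' →
    X i j * X i' j' = X i' j' * X i j + (qi - q) • (X i' j * X i j')

variable {K A : Type*} [CommRing K] [Ring A] [Algebra K A] {q qi : K}
variable {R C L : Type*}

theorem sum_sum_eq_of_swap [LinearOrder L] {M : Type*} [AddCommGroup M] (S : Finset L)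
    {F G : L → L → M}
    (hdiag : ∀ l, F l l = G l l) (hoff : ∀ l l', l < l' → F l l' + F l' l = G l l' + G l' l) :
    ∑ l ∈ S, ∑ l' ∈ S, F l l' = ∑ l ∈ S, ∑ l' ∈ S, G l l' := by
  simp only [← Finset.sum_product']
  rw [← sub_eq_zero, ← Finset.sum_sub_distrib]
  refine Finset.sum_involution (fun p _ => p.swap) ?_ ?_ ?_ fun p _ => p.swap_swap
  · rintro ⟨a, b⟩ _
    rcases lt_trichotomy a b with h | rfl | h
    · simp only [Prod.swap, sub_add_sub_comm, hoff _ _ h, sub_self]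
    · simp only [Prod.swap, hdiag, sub_self, add_zero]
    · rw [add_comm]
      simp only [Prod.swap, sub_add_sub_comm, hoff _ _ h, sub_self]
  · rintro ⟨a, b⟩ _ hne h
    obtain rfl : b = a := congrArg Prod.fst h
    exact hne (sub_eq_zero.mpr (hdiag b))
  · rintro ⟨a, b⟩ h
    simpa only [Finset.mem_product, Prod.swap, and_comm] using h

theorem sum_mul_mul_sum_mul {X : R → L → A} {Y : L → C → A}
    (hc : ∀ i l l' j, X i l * Y l' j = Y l' j * X i l) (S : Finset L) (i i' : R) (j j' : C) :
    (∑ l ∈ S, X i l * Y l j) * (∑ l ∈ S, X i' l * Y l j') =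
      ∑ l ∈ S, ∑ l' ∈ S, (X i l * X i' l') * (Y l j * Y l' j') := by
  rw [Finset.sum_mul_sum]
  refine Finset.sum_congr rfl fun l _ => Finset.sum_congr rfl fun l' _ => ?_
  rw [mul_assoc, ← mul_assoc (Y l j), ← hc, mul_assoc, mul_assoc]

variable [Preorder R] [Preorder C] [LinearOrder L]

namespace IsQuantumMatrix

protected theorem mul {X : R → L → A} {Y : L → C → A} (hq : q * qi = 1)
    (hX : IsQuantumMatrix q qi X) (hY : IsQuantumMatrix q qi Y)
    (hc : ∀ i l l' j, X i l * Y l' j = Y l' j * X i l) (S : Finset L) :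
    IsQuantumMatrix q qi (fun i j => ∑ l ∈ S, X i l * Y l j) := by
  constructor
  case col =>
    intro i i' j h
    simp only [sum_mul_mul_sum_mul hc, Finset.smul_sum]
    refine sum_sum_eq_of_swap S (fun l => ?_) fun l l' hl => ?_
    · rw [hX.col _ _ _ h, smul_mul_assoc]
    · rw [hX.qcomm _ _ _ _ h hl, hX.comm _ _ _ _ h hl, hY.col _ _ _ hl]
      simp only [smul_mul_assoc, mul_smul_comm, add_mul]
      linear_combination (norm := module) (-hq) • (X i' l * X i l' * (Y l' j * Y l j))
  case row =>
    intro i j j' h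
    simp only [sum_mul_mul_sum_mul hc, Finset.smul_sum]
    refine sum_sum_eq_of_swap S (fun l => ?_) fun l l' hl => ?_
    · rw [hY.row _ _ _ h, mul_smul_comm]
    · rw [hY.qcomm _ _ _ _ hl h, hX.row _ _ _ hl, hY.comm _ _ _ _ hl h]
      simp only [smul_mul_assoc, mul_smul_comm, mul_add]
      linear_combination (norm := module) (-hq) • (X i l' * X i l * (Y l' j * Y l j'))
  case comm =>
    intro i i' j j' h h'
    simp only [sum_mul_mul_sum_mul hc]
    refine sum_sum_eq_of_swap S (fun l => ?_) fun l l' hl => ?_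
    · rw [hX.col _ _ _ h, hY.row _ _ _ h', smul_mul_assoc, mul_smul_comm]
    · rw [hX.qcomm _ _ _ _ h hl, hX.comm _ _ _ _ h hl, hY.qcomm _ _ _ _ hl h',
        hY.comm _ _ _ _ hl h']
      simp only [mul_smul_comm, mul_add, add_mul, smul_mul_assoc]
      abel
  case qcomm =>
    intro i i' j j' h h'
    simp only [sum_mul_mul_sum_mul hc, Finset.smul_sum, ← Finset.sum_add_distrib]
    refine sum_sum_eq_of_swap S (fun l => ?_) fun l l' hl => ?_
    · rw [hX.col _ _ _ h, hY.row _ _ _ h']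
      simp only [smul_mul_assoc, mul_smul_comm]
      linear_combination (norm := module) hq • (X i' l * X i l * (Y l j' * Y l j))
    · rw [hX.qcomm _ _ _ _ h hl, hX.comm _ _ _ _ h hl, hY.qcomm _ _ _ _ hl h',
        hY.comm _ _ _ _ hl h']
      simp only [smul_mul_assoc, mul_smul_comm, mul_add, add_mul]
      module

theorem comp {X : R → C → A} (hX : IsQuantumMatrix q qi X) {R' C' : Type*} [Preorder R']
    [Preorder C'] {f : R' → R} {g : C' → C} (hf : StrictMono f) (hg : StrictMono g) :
    IsQuantumMatrix q qi (fun i j => X (f i) (g j)) :=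
  ⟨fun _ _ _ h => hX.col _ _ _ (hf h), fun _ _ _ h => hX.row _ _ _ (hg h),
    fun _ _ _ _ h h' => hX.comm _ _ _ _ (hf h) (hg h'),
    fun _ _ _ _ h h' => hX.qcomm _ _ _ _ (hf h) (hg h')⟩

theorem map {B : Type*} [Ring B] [Algebra K B] {X : R → C → A} (hX : IsQuantumMatrix q qi X)
    (φ : A →ₐ[K] B) : IsQuantumMatrix q qi (fun i j => φ (X i j)) where
  col i i' j h := by simp only [← map_mul, ← map_smul, hX.col _ _ _ h]
  row i j j' h := by simp only [← map_mul, ← map_smul, hX.row _ _ _ h]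
  comm i i' j j' h h' := by simp only [← map_mul, hX.comm _ _ _ _ h h']
  qcomm i i' j j' h h' := by simp only [← map_mul, ← map_smul, ← map_add, hX.qcomm _ _ _ _ h h']

end IsQuantumMatrix

/-- A finite matrix, indexed from `0`, extended by zero to all of `ℕ × ℕ`. -/
def extendZero {N m : ℕ} (X : Fin N → Fin m → A) (i j : ℕ) : A :=
  if h : i < N ∧ j < m then X ⟨i, h.1⟩ ⟨j, h.2⟩ else 0

theorem isQuantumMatrix_extendZero {N m : ℕ} {X : Fin N → Fin m → A}
    (hX : IsQuantumMatrix q qi X) : IsQuantumMatrix q qi (extendZero X) := by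
  constructor
  case col =>
    intro i i' j h
    by_cases h' : i' < N ∧ j < m
    · simpa only [extendZero, h.trans h'.1, h', and_self, dif_pos]
        using hX.col _ _ _ h
    · simp only [extendZero, h', dif_neg, not_false_eq_true, mul_zero,
        zero_mul, smul_zero]
  case row =>
    intro i j j' h
    by_cases h' : i < N ∧ j' < m
    · simpa only [extendZero, h.trans h'.2, h', and_self, dif_pos]
        using hX.row _ _ _ h
    · simp only [extendZero, h', dif_neg, not_false_eq_true, mul_zero,
        zero_mul, smul_zero]
  case comm =>
    intro i i' j j' h h'
    by_cases hi : i' < N ∧ j < m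
    · simpa only [extendZero, h.trans hi.1, h'.trans hi.2, hi, and_self,
        dif_pos] using hX.comm _ _ _ _ h h'
    · rcases not_and_or.mp hi with hi | hj
      · simp [extendZero, hi]
      · simp [extendZero, hj]
  case qcomm =>
    intro i i' j j' h h'
    by_cases hi : i' < N ∧ j' < m
    · simpa only [extendZero, h.trans hi.1, h'.trans hi.2, hi, and_self,
        dif_pos] using hX.qcomm _ _ _ _ h h'
    · rcases not_and_or.mp hi with hi | hj
      · simp [extendZero, hi]
      · simp [extendZero, hj]

/-- The infinite identity matrix with the rows and columns `s`, `s + 1` replaced by the block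
`!![a, b; c, d]`. -/
def blockOne (s : ℕ) (a b c d : A) (i j : ℕ) : A :=
  if i = s then (if j = s then a else if j = s + 1 then b else 0)
  else if i = s + 1 then (if j = s then c else if j = s + 1 then d else 0)
  else if i = j then 1 else 0

theorem isQuantumMatrix_blockOne (s : ℕ) {a b c d : A} (hab : a * b = qi • (b * a))
    (hcd : c * d = qi • (d * c)) (hac : a * c = qi • (c * a)) (hbd : b * d = qi • (d * b))
    (hbc : b * c = c * b) (had : a * d = d * a + (qi - q) • (c * b)) :
    IsQuantumMatrix q qi (blockOne s a b c d) := by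
  constructor <;> intros <;> unfold blockOne <;> split_ifs <;>
    first | omega | simp [*]

theorem isQuantumMatrix_one (m : ℕ) :
    IsQuantumMatrix q qi (fun i j : ℕ => if i = j ∧ i < m then (1 : A) else 0) := by
  constructor <;> intros <;> split_ifs <;> first | omega | simp

/-- The product of a matrix `X` with rows indexed by `ℕ` with `blockOne s a b c d` on the left. -/
def blockMul (s : ℕ) (a b c d : A) (X : ℕ → C → A) (i : ℕ) (j : C) : A :=
  if i = s then a * X s j + b * X (s + 1) j
  else if i = s + 1 then c * X s j + d * X (s + 1) j
  else X i j

theorem sum_blockOne_mul {C : Type*} (s : ℕ) (a b c d : A) (X : ℕ → C → A) {i M : ℕ}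
    (hi : i + s + 1 < M) (j : C) :
    ∑ l ∈ Finset.range M, blockOne s a b c d i l * X l j = blockMul s a b c d X i j := by
  unfold blockOne blockMul
  have hs : s < M := by omega
  split_ifs with h1 h2
  · rw [Finset.sum_eq_add_of_mem s (s + 1) (by simpa using hs) (by simp; omega) (by simp)]
    · simp
    · intro l _ hl
      simp [hl.1, hl.2]
  · rw [Finset.sum_eq_add_of_mem s (s + 1) (by simpa using hs) (by simp; omega) (by simp)]
    · simp
    · intro l _ hl
      simp [hl.1, hl.2]
  · rw [Finset.sum_eq_single_of_mem i (by simp; omega)]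
    · simp
    · intro l _ hl
      simp [hl.symm]

theorem isQuantumMatrix_blockMul (hq : q * qi = 1) {s : ℕ} {a b c d : A} {X : ℕ → C → A}
    (hB : IsQuantumMatrix q qi (blockOne s a b c d)) (hX : IsQuantumMatrix q qi X)
    (hc : ∀ x ∈ ({a, b, c, d} : Set A), ∀ l j, x * X l j = X l j * x) :
    IsQuantumMatrix q qi (blockMul s a b c d X) := by
  have hcomm : ∀ i l l' j, blockOne s a b c d i l * X l' j = X l' j * blockOne s a b c d i l := by
    intro i l l' j
    unfold blockOne
    split_ifs <;> simp_all
  have hprod := fun M => IsQuantumMatrix.mul hq hB hX hcomm (Finset.range M)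
  constructor
  case col =>
    intro i i' j h
    have := (hprod (i' + s + 2)).col i i' j h
    rwa [sum_blockOne_mul _ _ _ _ _ _ (by omega), sum_blockOne_mul _ _ _ _ _ _ (by omega)] at this
  case row =>
    intro i j j' h
    have := (hprod (i + s + 2)).row i j j' h
    rwa [sum_blockOne_mul _ _ _ _ _ _ (by omega), sum_blockOne_mul _ _ _ _ _ _ (by omega)] at this
  case comm =>
    intro i i' j j' h h'
    have := (hprod (i' + s + 2)).comm i i' j j' h h'
    rwa [sum_blockOne_mul _ _ _ _ _ _ (by omega), sum_blockOne_mul _ _ _ _ _ _ (by omega)] at this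
  case qcomm =>
    intro i i' j j' h h'
    have := (hprod (i' + s + 2)).qcomm i i' j j' h h'
    simpa only [sum_blockOne_mul (i := i) (M := i' + s + 2) s a b c d X (by omega),
      sum_blockOne_mul (i := i') (M := i' + s + 2) s a b c d X (by omega)] using this

end QuantumMatrix

section UniversalProperty

variable {k : Type} [Field k] {R C : Type} [LinearOrder R] [LinearOrder C]

@[simp] theorem qParam_mul_qInv : qParam k * qInv k = 1 := by
  rw [qParam, qInv, ← LaurentPolynomial.T_add, add_neg_cancel, LaurentPolynomial.T_zero]

theorem isQuantumMatrix_qgen : IsQuantumMatrix (qParam k) (qInv k) (qgen k R C) where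
  col i i' j h := by
    simpa only [qgen, map_mul, map_smul] using
      RingQuot.mkAlgHom_rel (kq k) (QMRel.col (k := k) i i' j h)
  row i j j' h := by
    simpa only [qgen, map_mul, map_smul] using
      RingQuot.mkAlgHom_rel (kq k) (QMRel.row (k := k) i j j' h)
  comm i i' j j' h h' := by
    simpa only [qgen, map_mul] using
      RingQuot.mkAlgHom_rel (kq k) (QMRel.comm (k := k) i i' j j' h h')
  qcomm i i' j j' h h' := by
    simpa only [qgen, map_sub, map_mul, map_smul, sub_eq_iff_eq_add'] using
      RingQuot.mkAlgHom_rel (kq k) (QMRel.qcomm (k := k) i i' j j' h h')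

theorem qMat_algHom_ext {A : Type*} [Semiring A] [Algebra (kq k) A]
    {f g : QMatG k R C →ₐ[kq k] A}
    (h : ∀ i j, f (qgen k R C i j) = g (qgen k R C i j)) : f = g := by
  refine RingQuot.ringQuot_ext' _ _ _ (FreeAlgebra.hom_ext ?_)
  funext p
  exact h p.1 p.2

theorem adjoin_qgen : Algebra.adjoin (kq k) {x | ∃ i j, x = qgen k R C i j} = ⊤ := by
  have himage : {x | ∃ i j, x = qgen k R C i j} =
      RingQuot.mkAlgHom (kq k) (QMRel k R C) '' Set.range (FreeAlgebra.ι (kq k)) := by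
    ext x
    simp only [Set.mem_ofPred_eq, Set.mem_image, Set.exists_range_iff, Prod.exists, qgen, eq_comm]
  rw [himage, ← AlgHom.map_adjoin, FreeAlgebra.adjoin_range_ι, Algebra.map_top,
    AlgHom.range_eq_top]
  exact RingQuot.mkAlgHom_surjective _ _

variable {A : Type} [Ring A] [Algebra (kq k) A]

/-- The universal property of the quantum matrix algebra. -/
def qMatLift (X : R → C → A) (hX : IsQuantumMatrix (qParam k) (qInv k) X) :
    QMatG k R C →ₐ[kq k] A :=
  RingQuot.liftAlgHom (kq k) ⟨FreeAlgebra.lift (kq k) fun p : R × C => X p.1 p.2, by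
    intro x y h
    induction h with
    | col i i' j h => simp [hX.col _ _ _ h]
    | row i j j' h => simp [hX.row _ _ _ h]
    | comm i i' j j' h h' => simp [hX.comm _ _ _ _ h h']
    | qcomm i i' j j' h h' => simp [hX.qcomm _ _ _ _ h h']⟩

@[simp] theorem qMatLift_qgen (X : R → C → A) (hX : IsQuantumMatrix (qParam k) (qInv k) X)
    (i : R) (j : C) : qMatLift X hX (qgen k R C i j) = X i j := by
  simp [qMatLift, qgen]

end UniversalProperty

section Coaction

variable {k : Type} [Field k]

/-- The ring structure of `k_q[b]_{m,n} ⊗ k_q[SL_{m,0}]`, which instance search does not find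
because `k_q[SL_{m,0}]` is a quotient formed at the level of semirings. -/
@[reducible] def coactionRing (m n : ℕ) : Ring (QMat k m n ⊗[kq k] QSL k m 0) :=
  Algebra.semiringToRing (kq k)

attribute [local instance] coactionRing

/-- The column index of `k_q[b]_{m,n}` corresponding to an index of `k_q[SL_{m,0}]`. -/
def colOfSL {m : ℕ} (l : RowI m 0) : ColI m :=
  ⟨l.1, by simp⟩

/-- The index of `k_q[SL_{m,0}]` corresponding to a column index of `k_q[b]_{m,n}`. -/
def slOfCol {m : ℕ} (j : ColI m) : RowI m 0 :=
  ⟨j.1, by simp⟩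

theorem exists_coaction (m n : ℕ) :
    ∃ ρ : QMat k m n →ₐ[kq k] QMat k m n ⊗[kq k] QSL k m 0, rhoqProp k m n ρ := by
  have hb : IsQuantumMatrix (qParam k) (qInv k) fun (i : RowI m n) (l : RowI m 0) =>
      av k m n i (colOfSL l) ⊗ₜ[kq k] (1 : QSL k m 0) :=
    (isQuantumMatrix_qgen.comp (g := colOfSL) strictMono_id fun _ _ h => h).map
      (Algebra.TensorProduct.includeLeft : QMat k m n →ₐ[kq k] QMat k m n ⊗[kq k] QSL k m 0)
  have hg : IsQuantumMatrix (qParam k) (qInv k) fun (l : RowI m 0) (j : ColI m) =>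
      (1 : QMat k m n) ⊗ₜ[kq k] qgSL k m 0 l (slOfCol j) :=
    (isQuantumMatrix_qgen.comp (g := slOfCol) strictMono_id fun _ _ h => h).map
      ((Algebra.TensorProduct.includeRight : QSL k m 0 →ₐ[kq k] QMat k m n ⊗[kq k] QSL k m 0).comp
        (qslMk k m 0))
  refine ⟨qMatLift _ (hb.mul qParam_mul_qInv hg (by simp) Finset.univ), fun i j => ?_⟩
  rw [av, qMatLift_qgen]
  simp only [Algebra.TensorProduct.tmul_mul_tmul, mul_one, one_mul]
  rfl

theorem coaction_unique {m n : ℕ} {ρ ρ' : QMat k m n →ₐ[kq k] QMat k m n ⊗[kq k] QSL k m 0}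
    (h : rhoqProp k m n ρ) (h' : rhoqProp k m n ρ') : ρ = ρ' :=
  qMat_algHom_ext fun i j => (h i j).trans (h' i j).symm

end Coaction

section Inversions

theorem inversions_eq_zero_of_monotone {n b : ℕ} {f : Fin n → Fin b} (hf : Monotone f) :
    inversions f = 0 := by
  rw [inversions, Finset.card_eq_zero, Finset.filter_eq_empty_iff]
  rintro ⟨x, y⟩ _ ⟨hxy, hlt⟩
  exact hlt.not_ge (hf hxy.le)

theorem inversions_comp_swap {n b : ℕ} {f : Fin (n + 1) → Fin b} {t : Fin n}
    (h : f t.castSucc < f t.succ) :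
    inversions (f ∘ Equiv.swap t.castSucc t.succ) = inversions f + 1 := by
  set τ := Equiv.swap t.castSucc t.succ with hτ
  have hττ : ∀ x, τ (τ x) = x := fun x => Equiv.swap_apply_self _ _ _
  have hlt : ∀ x y, x < y → (x, y) ≠ (t.castSucc, t.succ) → τ x < τ y := by
    intro x y hxy hne
    have : ¬(x = t.castSucc ∧ y = t.succ) := fun hh => hne (by rw [hh.1, hh.2])
    simp only [hτ, Equiv.swap_apply_def]
    split_ifs <;>
      simp only [Fin.lt_def, Fin.ext_iff, Fin.val_castSucc, Fin.val_succ] at * <;> omega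
  have hmem : (t.castSucc, t.succ) ∈ (Finset.univ : Finset (Fin (n + 1) × Fin (n + 1))).filter
      fun p => p.1 < p.2 ∧ (f ∘ τ) p.2 < (f ∘ τ) p.1 := by
    simp [hτ, h]
  rw [inversions, inversions, ← Finset.card_erase_add_one hmem]
  congr 1
  refine Finset.card_nbij' (fun p => (τ p.1, τ p.2)) (fun p => (τ p.1, τ p.2)) ?_ ?_ ?_ ?_
  · rintro ⟨x, y⟩ hp
    simp only [Finset.coe_erase, Finset.coe_filter, Finset.mem_univ, true_and, Set.mem_sdiff,
      Set.mem_ofPred_eq, Set.mem_singleton_iff, Function.comp] at hp ⊢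
    exact ⟨hlt _ _ hp.1.1 hp.2, hp.1.2⟩
  · rintro ⟨x, y⟩ hp
    simp only [Finset.coe_erase, Finset.coe_filter, Finset.mem_univ, true_and, Set.mem_sdiff,
      Set.mem_ofPred_eq, Set.mem_singleton_iff, Function.comp, hττ] at hp ⊢
    refine ⟨⟨hlt _ _ hp.1 ?_, hp.2⟩, ?_⟩
    · rintro ⟨rfl, rfl⟩
      exact lt_asymm hp.2 h
    · intro hxy
      obtain ⟨hx, hy⟩ := Prod.mk.inj hxy
      rw [← hττ x, ← hττ y, hx, hy, hτ, Equiv.swap_apply_left, Equiv.swap_apply_right] at hp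
      exact absurd hp.1 Fin.castSucc_lt_succ.asymm
  · rintro ⟨x, y⟩ _
    simp only [hττ]
  · rintro ⟨x, y⟩ _
    simp only [hττ]

theorem exists_prod_ofFn_eq_mul_adjacent_mul {M : Type*} [Monoid M] {n : ℕ} (t : Fin n)
    (x : Fin (n + 1) → M) :
    ∃ a b : M, ∀ y : Fin (n + 1) → M, (∀ u, u ≠ t.castSucc → u ≠ t.succ → y u = x u) →
      (List.ofFn y).prod = a * (y t.castSucc * y t.succ) * b := by
  induction n with
  | zero => exact t.elim0
  | succ n ih =>
    cases t using Fin.cases with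
    | zero =>
      refine ⟨1, (List.ofFn fun u : Fin n => x u.succ.succ).prod, fun y hy => ?_⟩
      have htail : (fun u : Fin n => y u.succ.succ) = fun u => x u.succ.succ :=
        funext fun u => hy _ (by simp [Fin.ext_iff]) (by simp [Fin.ext_iff])
      rw [List.ofFn_succ, List.ofFn_succ]
      simp [mul_assoc, htail]
    | succ t =>
      obtain ⟨a, b, hab⟩ := ih t fun u => x u.succ
      refine ⟨x 0 * a, b, fun y hy => ?_⟩
      rw [List.ofFn_succ, List.prod_cons, hy 0 (by simp [Fin.ext_iff]) (by simp [Fin.ext_iff]),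
        hab _ fun u hu hu' => hy _ (by simpa [Fin.ext_iff] using hu)
          (by simpa [Fin.ext_iff] using hu')]
      simp only [mul_assoc]
      rfl

theorem sum_perm_eq_zero_of_swap_adjacent {M : Type*} [AddCommGroup M] {n : ℕ} (t : Fin n)
    {h : Equiv.Perm (Fin (n + 1)) → M}
    (hswap : ∀ σ, σ t.castSucc < σ t.succ → h σ + h (σ * Equiv.swap t.castSucc t.succ) = 0) :
    ∑ σ, h σ = 0 := by
  have hne : t.castSucc ≠ t.succ := Fin.castSucc_lt_succ.ne
  refine Finset.sum_involution (fun σ _ => σ * Equiv.swap t.castSucc t.succ) ?_ ?_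
    (fun _ _ => Finset.mem_univ _) fun σ _ => by
      rw [mul_assoc, Equiv.swap_mul_self, mul_one]
  · intro σ _
    rcases lt_or_gt_of_ne (σ.injective.ne hne) with hlt | hgt
    · exact hswap σ hlt
    · have := hswap (σ * Equiv.swap t.castSucc t.succ) (by simpa using hgt)
      rwa [mul_assoc, Equiv.swap_mul_self, mul_one, add_comm] at this
  · intro σ _ _ hfix
    exact hne (Equiv.swap_eq_one_iff.mp (mul_eq_left.mp hfix))

end Inversions

section RowDet

/-- The quantum minor of a matrix `X` on all of its columns and on the rows `f 0, f 1, …`, which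
may be repeated or out of order; the weight `c` of an inversion is `-q⁻¹` in all applications. -/
def rowDet {K A R : Type*} [CommRing K] [Semiring A] [Algebra K A] (c : K) {m : ℕ}
    (X : R → Fin m → A) (f : Fin m → R) : A :=
  ∑ σ : Equiv.Perm (Fin m), c ^ inversions σ • (List.ofFn fun t => X (f t) (σ t)).prod

theorem map_rowDet {K A B R : Type*} [CommRing K] [Semiring A] [Algebra K A] [Semiring B]
    [Algebra K B] (φ : A →ₐ[K] B) (c : K) {m : ℕ} (X : R → Fin m → A) (f : Fin m → R) :
    φ (rowDet c X f) = rowDet c (fun i j => φ (X i j)) f := by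
  simp only [rowDet, map_sum, map_smul, map_list_prod, List.map_ofFn]
  rfl

variable {K A : Type*} [CommRing K] [Ring A] [Algebra K A] {q qi : K} {R : Type*} [LinearOrder R]

theorem rowDet_eq_zero_of_adjacent_eq {n : ℕ} {X : R → Fin (n + 1) → A}
    (hX : IsQuantumMatrix q qi X) {f : Fin (n + 1) → R} {t : Fin n}
    (hf : f t.castSucc = f t.succ) : rowDet (-qi) X f = 0 := by
  refine sum_perm_eq_zero_of_swap_adjacent t fun σ hσ => ?_
  obtain ⟨a, b, hab⟩ := exists_prod_ofFn_eq_mul_adjacent_mul t fun u => X (f u) (σ u)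
  rw [Equiv.Perm.coe_mul, inversions_comp_swap hσ, hab _ fun _ _ _ => rfl,
    hab _ fun u hu hu' => by simp [Equiv.swap_apply_of_ne_of_ne hu hu']]
  simp only [Function.comp, Equiv.swap_apply_left, Equiv.swap_apply_right]
  rw [hf, hX.row _ _ _ hσ, mul_smul_comm, smul_mul_assoc, pow_succ]
  module

theorem rowDet_comp_swap (hq : q * qi = 1) {n : ℕ} {X : R → Fin (n + 1) → A}
    (hX : IsQuantumMatrix q qi X) {f : Fin (n + 1) → R} {t : Fin n}
    (hf : f t.castSucc < f t.succ) :
    rowDet (-qi) X (f ∘ Equiv.swap t.castSucc t.succ) = -qi • rowDet (-qi) X f := by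
  rw [← sub_eq_zero, rowDet, rowDet, Finset.smul_sum, ← Finset.sum_sub_distrib]
  refine sum_perm_eq_zero_of_swap_adjacent t fun σ hσ => ?_
  obtain ⟨a, b, hab⟩ := exists_prod_ofFn_eq_mul_adjacent_mul t fun u => X (f u) (σ u)
  have hfix : ∀ u, u ≠ t.castSucc → u ≠ t.succ → Equiv.swap t.castSucc t.succ u = u :=
    fun u hu hu' => Equiv.swap_apply_of_ne_of_ne hu hu'
  rw [Equiv.Perm.coe_mul, inversions_comp_swap hσ, hab _ fun u hu hu' => by simp [hfix u hu hu'],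
    hab _ fun _ _ _ => rfl, hab _ fun u hu hu' => by simp [hfix u hu hu'],
    hab _ fun u hu hu' => by simp [hfix u hu hu']]
  simp only [Function.comp, Equiv.swap_apply_left, Equiv.swap_apply_right]
  rw [hX.qcomm _ _ _ _ hf hσ, hX.comm _ _ _ _ hf hσ]
  simp only [mul_smul_comm, smul_mul_assoc, mul_add, add_mul, pow_succ]
  linear_combination (norm := module) (-((-qi) ^ inversions σ * hq)) •
    (a * (X (f t.succ) (σ t.castSucc) * X (f t.castSucc) (σ t.succ)) * b)

theorem rowDet_eq_ite (hq : q * qi = 1) {m : ℕ} {X : Fin m → Fin m → A}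
    (hX : IsQuantumMatrix q qi X) (f : Fin m → Fin m) :
    rowDet (-qi) X f =
      if f.Injective then (-qi) ^ inversions f • rowDet (-qi) X id else 0 := by
  induction hN : inversions f using Nat.strong_induction_on generalizing f with
  | _ N ih =>
    by_cases hm : StrictMono f
    · obtain rfl : f = id := hm.eq_id
      rw [if_pos Function.injective_id, ← hN, inversions_eq_zero_of_monotone monotone_id,
        pow_zero, one_smul]
    · cases m with
      | zero => exact absurd (Subsingleton.strictMono f) hm
      | succ n =>
        rw [Fin.strictMono_iff_lt_succ] at hm
        push Not at hm
        obtain ⟨t, ht⟩ := hm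
        rcases ht.lt_or_eq with hlt | heq
        · obtain ⟨g, rfl⟩ : ∃ g, f = g ∘ Equiv.swap t.castSucc t.succ :=
            ⟨f ∘ Equiv.swap t.castSucc t.succ, by ext u; simp⟩
          have hg : g t.castSucc < g t.succ := by simpa using hlt
          rw [inversions_comp_swap hg] at hN
          simp only [Equiv.injective_comp]
          rw [rowDet_comp_swap hq hX hg, ih _ (by omega) g rfl, ← hN, smul_ite, smul_zero,
            smul_smul, pow_succ']
        · rw [rowDet_eq_zero_of_adjacent_eq hX heq.symm, if_neg]
          exact fun h => Fin.castSucc_lt_succ.ne' (h heq)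

theorem prod_ofFn_mul_of_commute {M : Type*} [Monoid M] {n : ℕ} {x y : Fin n → M}
    (h : ∀ s t, Commute (x s) (y t)) :
    (List.ofFn fun t => x t * y t).prod = (List.ofFn x).prod * (List.ofFn y).prod := by
  induction n with
  | zero => simp
  | succ n ih =>
    have hcomm : Commute (y 0) (List.ofFn fun t : Fin n => x t.succ).prod :=
      Commute.list_prod_right _ _ fun a ha => by
        obtain ⟨t, rfl⟩ := (List.mem_ofFn.mp ha)
        exact (h t.succ 0).symm
    simp only [List.ofFn_succ, List.prod_cons, ih fun s t => h s.succ t.succ]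
    rw [mul_assoc, ← mul_assoc (y 0), hcomm.eq]
    simp only [mul_assoc]

theorem rowDet_sum_mul {ι : Type*} (hq : q * qi = 1) {m : ℕ} {X : ι → Fin m → A}
    {Y : Fin m → Fin m → A} (hY : IsQuantumMatrix q qi Y)
    (hc : ∀ i l l' j, Commute (X i l) (Y l' j)) (f : Fin m → ι) :
    rowDet (-qi) (fun i j => ∑ l, X i l * Y l j) f = rowDet (-qi) X f * rowDet (-qi) Y id := by
  have hexpand : ∀ σ : Equiv.Perm (Fin m),
      (List.ofFn fun t => ∑ l, X (f t) l * Y l (σ t)).prod =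
        ∑ g : Fin m → Fin m, (List.ofFn fun t => X (f t) (g t)).prod *
          (List.ofFn fun t => Y (g t) (σ t)).prod := by
    intro σ
    simpa only [MultilinearMap.mkPiAlgebraFin_apply, prod_ofFn_mul_of_commute fun _ _ =>
      hc _ _ _ _] using
      (MultilinearMap.mkPiAlgebraFin K m A).map_sum fun t l => X (f t) l * Y l (σ t)
  calc rowDet (-qi) (fun i j => ∑ l, X i l * Y l j) f
      = ∑ g : Fin m → Fin m, (List.ofFn fun t => X (f t) (g t)).prod * rowDet (-qi) Y g := by
        simp only [rowDet, hexpand, Finset.smul_sum, Finset.mul_sum, mul_smul_comm]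
        exact Finset.sum_comm
    _ = ∑ σ : Equiv.Perm (Fin m),
          (List.ofFn fun t => X (f t) (σ t)).prod * rowDet (-qi) Y σ := by
        symm
        refine Finset.sum_of_injOn (fun σ : Equiv.Perm (Fin m) => (σ : Fin m → Fin m))
          DFunLike.coe_injective.injOn (fun _ _ => Finset.mem_coe.mpr (Finset.mem_univ _))
          (fun g _ hg => ?_) fun _ _ => rfl
        rw [rowDet_eq_ite hq hY, if_neg, mul_zero]
        intro hinj
        exact hg ⟨Equiv.ofBijective g (Finite.injective_iff_bijective.mp hinj), by simp, rfl⟩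
    _ = rowDet (-qi) X f * rowDet (-qi) Y id := by
        rw [rowDet.eq_def _ X, Finset.sum_mul]
        refine Finset.sum_congr rfl fun σ _ => ?_
        rw [rowDet_eq_ite hq hY, if_pos σ.injective, mul_smul_comm, smul_mul_assoc]

end RowDet

section MinorsAreCoinvariant

variable {k : Type} [Field k]

/-- The `t`-th row index of `k_q[b]_{m,n}`, counted from the top starting with `0`. -/
def rowIdx (m n : ℕ) (t : Fin (m + n)) : RowI m n :=
  ⟨-(m : ℤ) + (t : ℕ), by have := t.2; simp only [Finset.mem_Icc]; omega⟩

/-- The `t`-th column index of `k_q[b]_{m,n}`, counted from the left starting with `0`. -/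
def colIdx (m : ℕ) (t : Fin m) : ColI m :=
  ⟨-(m : ℤ) + (t : ℕ), by have := t.2; simp only [Finset.mem_Icc]; omega⟩

theorem rowIdx_strictMono (m n : ℕ) : StrictMono (rowIdx m n) := fun s t hst => by
  rw [rowIdx, rowIdx, Subtype.mk_lt_mk]
  have := Fin.lt_def.mp hst
  omega

theorem colIdx_strictMono (m : ℕ) : StrictMono (colIdx m) := fun s t hst => by
  rw [colIdx, colIdx, Subtype.mk_lt_mk]
  have := Fin.lt_def.mp hst
  omega

theorem strictMono_toNat_add (m : ℕ) (b : ℤ) :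
    StrictMono fun i : ↥(Finset.Icc (-(m : ℤ)) b) => (i.1 + m).toNat := fun i i' h => by
  have := Finset.mem_Icc.mp i.2
  have := Subtype.coe_lt_coe.mpr h
  dsimp only
  omega

theorem rowIdx_surjective (m n : ℕ) : Function.Surjective (rowIdx m n) := fun ⟨i, hi⟩ => by
  have := Finset.mem_Icc.mp hi
  exact ⟨⟨(i + m).toNat, by omega⟩, Subtype.ext (by simp only [rowIdx]; omega)⟩

theorem colIdx_surjective (m : ℕ) : Function.Surjective (colIdx m) := fun ⟨j, hj⟩ => by
  have := Finset.mem_Icc.mp hj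
  exact ⟨⟨(j + m).toNat, by omega⟩, Subtype.ext (by simp only [colIdx]; omega)⟩

theorem qCoeff_eq_pow (l : ℕ) : qCoeff k l = (-qInv k) ^ l := by
  rw [qCoeff, qInv, neg_pow (LaurentPolynomial.T (-1) : kq k), LaurentPolynomial.T_pow, mul_neg_one]

theorem qMinor_eq_rowDet (m n : ℕ) (I : Finset ℤ) (hI : I.card = m)
    (hsub : I ⊆ Finset.Icc (-(m : ℤ)) ((n : ℤ) - 1)) :
    qMinor k m n I hI hsub = rowDet (-qInv k) (fun i t => av k m n i (colIdx m t))
      fun s => ⟨I.orderEmbOfFin hI s, hsub (I.orderEmbOfFin_mem hI s)⟩ := by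
  simp only [qMinor, qMinorG, qCoeff_eq_pow]
  rfl

theorem sqDet_eq_rowDet (m : ℕ) : sqDet k m 0 =
    rowDet (-qInv k) (fun i t : Fin m => qgen k _ _ (rowIdx m 0 i) (rowIdx m 0 t)) id := by
  have hcast : ∀ (s : ℕ) (h : s = m) (row : Fin s → RowI m 0),
      (∀ t, row t = rowIdx m 0 (Fin.cast h t)) → qMinorG k _ _ s row row =
        rowDet (-qInv k) (fun i t : Fin m => qgen k _ _ (rowIdx m 0 i) (rowIdx m 0 t)) id := by
    rintro s rfl row hrow
    simp only [qMinorG, qCoeff_eq_pow, hrow]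
    rfl
  have hN : NN m 0 = m := by simp [NN]
  refine hcast _ hN _ fun t => Subtype.ext ?_
  have hunique := Finset.orderEmbOfFin_unique (s := Finset.Icc (-(m : ℤ)) (((0 : ℕ) : ℤ) - 1)) rfl
    (f := fun t => (rowIdx m 0 (Fin.cast hN t)).1) (fun t => (rowIdx m 0 _).2)
    fun _ _ h => rowIdx_strictMono m 0 h
  exact (Finset.coe_orderIsoOfFin_apply _ _ _).trans (congrFun hunique t).symm

theorem qslMk_sqDet (m n : ℕ) : qslMk k m n (sqDet k m n) = 1 :=
  (RingQuot.mkAlgHom_rel (kq k) (s := fun x y : SqMat k m n => x = sqDet k m n ∧ y = 1)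
    ⟨rfl, rfl⟩).trans (map_one _)

theorem coaction_av_colIdx {m n : ℕ} {ρ : QMat k m n →ₐ[kq k] QMat k m n ⊗[kq k] QSL k m 0}
    (hρ : rhoqProp k m n ρ) (i : RowI m n) (j : Fin m) :
    ρ (av k m n i (colIdx m j)) =
      ∑ l : Fin m, av k m n i (colIdx m l) ⊗ₜ[kq k] qgSL k m 0 (rowIdx m 0 l) (rowIdx m 0 j) := by
  rw [hρ]
  exact (Function.Bijective.sum_comp ⟨(rowIdx_strictMono m 0).injective, rowIdx_surjective m 0⟩
    fun l : RowI m 0 => av k m n i (colOfSL l) ⊗ₜ[kq k] qgSL k m 0 l (rowIdx m 0 j)).symm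

attribute [local instance] coactionRing

theorem coaction_qMinor {m n : ℕ} {ρ : QMat k m n →ₐ[kq k] QMat k m n ⊗[kq k] QSL k m 0}
    (hρ : rhoqProp k m n ρ) (I : Finset ℤ) (hI : I.card = m)
    (hsub : I ⊆ Finset.Icc (-(m : ℤ)) ((n : ℤ) - 1)) :
    ρ (qMinor k m n I hI hsub) = qMinor k m n I hI hsub ⊗ₜ[kq k] 1 := by
  let inl : QMat k m n →ₐ[kq k] QMat k m n ⊗[kq k] QSL k m 0 := Algebra.TensorProduct.includeLeft
  let inr : SqMat k m 0 →ₐ[kq k] QMat k m n ⊗[kq k] QSL k m 0 :=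
    (Algebra.TensorProduct.includeRight).comp (qslMk k m 0)
  have hentry : ∀ i j, ρ (av k m n i (colIdx m j)) = ∑ l : Fin m,
      inl (av k m n i (colIdx m l)) * inr (qgen k _ _ (rowIdx m 0 l) (rowIdx m 0 j)) := by
    intro i j
    rw [coaction_av_colIdx hρ]
    refine Finset.sum_congr rfl fun l _ => ?_
    simp [inl, inr, qgSL]
  have hdet : inr (sqDet k m 0) = 1 := by
    simp only [inr, AlgHom.comp_apply, qslMk_sqDet, map_one]
  have hmono : StrictMono fun t : Fin m => rowIdx m 0 t := rowIdx_strictMono m 0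
  rw [qMinor_eq_rowDet]
  refine (map_rowDet ρ _ _ _).trans ?_
  simp only [hentry]
  rw [rowDet_sum_mul qParam_mul_qInv ((isQuantumMatrix_qgen.comp hmono hmono).map inr)
      (fun i l l' j => by simp [inl, inr, Commute, SemiconjBy]),
    ← map_rowDet inl, ← map_rowDet inr, ← sqDet_eq_rowDet, hdet, mul_one]
  rfl

theorem coaction_eq_of_mem_QDeltaSub {m n : ℕ}
    {ρ : QMat k m n →ₐ[kq k] QMat k m n ⊗[kq k] QSL k m 0} (hρ : rhoqProp k m n ρ)
    {x : QMat k m n} (hx : x ∈ QDeltaSub k m n) : ρ x = x ⊗ₜ[kq k] 1 := by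
  have hle : QDeltaSub k m n ≤ AlgHom.equalizer ρ Algebra.TensorProduct.includeLeft := by
    refine Algebra.adjoin_le ?_
    rintro _ ⟨I, hI, hsub, rfl⟩
    exact coaction_qMinor hρ I hI hsub
  exact hle hx

end MinorsAreCoinvariant

section SortedWords

variable {K A : Type*} [CommRing K] [Ring A] [Algebra K A] {q qi : K}
variable {R C : Type*} {X : R → C → A}

/-- The product of the entries of `X` at the positions listed in `l`. -/
def wordProd (X : R → C → A) (l : List (R ×ₗ C)) : A :=
  (l.map fun p => X (ofLex p).1 (ofLex p).2).prod

theorem mul_mem_of_mem_span {S : Set A} {T : Submodule K A} {a : A} (h : ∀ x ∈ S, a * x ∈ T)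
    {y : A} (hy : y ∈ Submodule.span K S) : a * y ∈ T :=
  Submodule.span_le.mpr (show S ⊆ T.comap (LinearMap.mulLeft K a) from h) hy

theorem wordProd_cons (p : R ×ₗ C) (l : List (R ×ₗ C)) :
    wordProd X (p :: l) = X (ofLex p).1 (ofLex p).2 * wordProd X l := by
  simp only [wordProd, List.map_cons, List.prod_cons]

variable [LinearOrder R] [LinearOrder C]

/-- The span of the products of `n` entries of `X` at positions `≥ p` in increasing order, where
positions are read row by row. -/
def sortedWordSpan (K : Type*) [CommRing K] [Algebra K A] (X : R → C → A) (p : R ×ₗ C) (n : ℕ) :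
    Submodule K A :=
  Submodule.span K
    (wordProd X '' {l | l.Pairwise (· ≤ ·) ∧ (∀ a ∈ l, p ≤ a) ∧ l.length = n})

theorem sortedWordSpan_anti {p p' : R ×ₗ C} (h : p ≤ p') (n : ℕ) :
    sortedWordSpan K X p' n ≤ sortedWordSpan K X p n :=
  Submodule.span_mono (Set.image_mono fun _ hl => ⟨hl.1, fun a ha => h.trans (hl.2.1 a ha), hl.2.2⟩)

theorem entry_mul_mem_sortedWordSpan_of_le {p : R ×ₗ C} {n : ℕ} {y : A}
    (hy : y ∈ sortedWordSpan K X p n) :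
    X (ofLex p).1 (ofLex p).2 * y ∈ sortedWordSpan K X p (n + 1) := by
  refine mul_mem_of_mem_span ?_ hy
  rintro _ ⟨l, ⟨hl, hle, hlen⟩, rfl⟩
  refine Submodule.subset_span ⟨p :: l, ⟨List.pairwise_cons.mpr ⟨hle, hl⟩, ?_, ?_⟩,
    wordProd_cons p l⟩
  · simpa only [List.forall_mem_cons] using ⟨le_rfl, hle⟩
  · rw [List.length_cons, hlen]

namespace IsQuantumMatrix

theorem exists_entry_mul_entry_mul (hq : q * qi = 1) (hX : IsQuantumMatrix q qi X)
    {p p' : R ×ₗ C} (h : p < p') :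
    (∃ c : K, ∀ y, X (ofLex p').1 (ofLex p').2 * (X (ofLex p).1 (ofLex p).2 * y) =
        c • (X (ofLex p).1 (ofLex p).2 * (X (ofLex p').1 (ofLex p').2 * y))) ∨
      ((ofLex p).1 < (ofLex p').1 ∧ (ofLex p).2 < (ofLex p').2 ∧ ∃ c : K, ∀ y,
        X (ofLex p').1 (ofLex p').2 * (X (ofLex p).1 (ofLex p).2 * y) =
          X (ofLex p).1 (ofLex p).2 * (X (ofLex p').1 (ofLex p').2 * y) +
            c • (X (ofLex p).1 (ofLex p').2 * (X (ofLex p').1 (ofLex p).2 * y))) := by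
  induction p using Lex.rec with | _ p
  induction p' using Lex.rec with | _ p'
  obtain ⟨i, j⟩ := p
  obtain ⟨i', j'⟩ := p'
  simp only [ofLex_toLex]
  have hswap {u v : A} (huv : u * v = qi • (v * u)) (y : A) : v * (u * y) = q • (u * (v * y)) := by
    rw [← mul_assoc, ← mul_assoc, huv, smul_mul_assoc, smul_smul, hq, one_smul]
  rcases Prod.Lex.toLex_lt_toLex.mp h with hi | ⟨rfl, hj⟩
  · rcases lt_trichotomy j j' with hj | rfl | hj
    · refine Or.inr ⟨hi, hj, q - qi, fun y => ?_⟩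
      simp only [← mul_assoc, hX.qcomm _ _ _ _ hi hj, hX.comm _ _ _ _ hi hj, add_mul,
        smul_mul_assoc]
      module
    · exact Or.inl ⟨q, hswap (hX.col _ _ _ hi)⟩
    · exact Or.inl ⟨1, fun y => by
        rw [one_smul, ← mul_assoc, ← mul_assoc, hX.comm _ _ _ _ hi hj]⟩
  · exact Or.inl ⟨q, hswap (hX.row _ _ _ hj)⟩

theorem entry_mul_mem_sortedWordSpan [WellFoundedLT R] [WellFoundedLT C] (hq : q * qi = 1)
    (hX : IsQuantumMatrix q qi X) (n : ℕ) (p : R ×ₗ C) :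
    ∀ p₀ ≤ p, ∀ y ∈ sortedWordSpan K X p₀ n,
      X (ofLex p).1 (ofLex p).2 * y ∈ sortedWordSpan K X p₀ (n + 1) := by
  induction n generalizing p with
  | zero =>
    intro p₀ hp y hy
    have hy' : y ∈ sortedWordSpan K X p 0 := by
      refine Submodule.span_mono (Set.image_mono fun l hl => ?_) hy
      rw [List.eq_nil_of_length_eq_zero hl.2.2]
      simp
    exact sortedWordSpan_anti hp 1 (entry_mul_mem_sortedWordSpan_of_le hy')
  | succ n ihn =>
    induction p using WellFoundedLT.induction with | ind p ihp
    intro p₀ hp y hy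
    refine mul_mem_of_mem_span ?_ hy
    rintro _ ⟨_ | ⟨p₁, l⟩, ⟨hl, hle, hlen⟩, rfl⟩
    · simp at hlen
    · obtain ⟨hl₁, hl⟩ := List.pairwise_cons.mp hl
      obtain ⟨hp₁, -⟩ := List.forall_mem_cons.mp hle
      have hw : wordProd X l ∈ sortedWordSpan K X p₁ n :=
        Submodule.subset_span ⟨l, ⟨hl, hl₁, by simpa using hlen⟩, rfl⟩
      rw [wordProd_cons]
      rcases le_or_gt p p₁ with h | h
      · exact sortedWordSpan_anti hp _ (entry_mul_mem_sortedWordSpan_of_le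
          (sortedWordSpan_anti h _ (entry_mul_mem_sortedWordSpan_of_le hw)))
      refine sortedWordSpan_anti hp₁ _ ?_
      have hfront := entry_mul_mem_sortedWordSpan_of_le (ihn p p₁ h.le _ hw)
      rcases hX.exists_entry_mul_entry_mul hq h with ⟨c, hc⟩ | ⟨hi, hj, c, hc⟩
      · rw [hc]
        exact Submodule.smul_mem _ c hfront
      · rw [hc]
        refine Submodule.add_mem _ hfront (Submodule.smul_mem _ c ?_)
        have hlower := ihn (toLex ((ofLex p).1, (ofLex p₁).2)) p₁
          (Prod.Lex.toLex_le_toLex.mpr (Or.inl hi)) _ hw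
        exact ihp (toLex ((ofLex p₁).1, (ofLex p).2)) (Prod.Lex.toLex_lt_toLex.mpr (Or.inl hi)) p₁
          (Prod.Lex.toLex_le_toLex.mpr (Or.inr ⟨rfl, hj.le⟩)) _ hlower

theorem adjoin_le_span_sortedWords [WellFoundedLT R] [WellFoundedLT C] [OrderBot R] [OrderBot C]
    (hq : q * qi = 1) (hX : IsQuantumMatrix q qi X) :
    Subalgebra.toSubmodule (Algebra.adjoin K {x | ∃ i j, x = X i j}) ≤
      Submodule.span K (wordProd X '' {l | l.Pairwise (· ≤ ·)}) := by
  set S := Submodule.span K (wordProd X '' {l | l.Pairwise (· ≤ ·)})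
  have hS (n : ℕ) : sortedWordSpan K X ⊥ n ≤ S :=
    Submodule.span_mono (Set.image_mono fun _ hl => hl.1)
  have hmul : ∀ x ∈ Algebra.adjoin K {x | ∃ i j, x = X i j}, ∀ y ∈ S, x * y ∈ S := by
    intro x hx
    induction hx using Algebra.adjoin_induction with
    | mem x hx =>
      obtain ⟨i, j, rfl⟩ := hx
      intro y hy
      refine mul_mem_of_mem_span ?_ hy
      rintro _ ⟨l, hl, rfl⟩
      exact hS _ (hX.entry_mul_mem_sortedWordSpan hq _ (toLex (i, j)) ⊥ bot_le _
        (Submodule.subset_span ⟨l, ⟨hl, fun _ _ => bot_le, rfl⟩, rfl⟩))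
    | algebraMap c =>
      intro y hy
      simpa only [Algebra.algebraMap_eq_smul_one, smul_mul_assoc, one_mul] using S.smul_mem c hy
    | add x y _ _ hx hy =>
      intro z hz
      simpa only [add_mul] using S.add_mem (hx z hz) (hy z hz)
    | mul x y _ _ hx hy =>
      intro z hz
      simpa only [mul_assoc] using hx _ (hy _ hz)
  intro x hx
  simpa only [mul_one] using hmul x hx 1 (Submodule.subset_span ⟨[], List.Pairwise.nil, rfl⟩)

end IsQuantumMatrix

end SortedWords

section FockSpace

variable {k : Type} [Field k]

/-- Exponents of monomials in variables at the positions `(i, j)` of an infinite matrix, read row by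
row. They are compared through `toColex`, that is, at the last position where they differ. -/
abbrev Exponent : Type := ℕ ×ₗ ℕ →₀ ℕ

/-- The free module on the monomials, on which quantum matrices act by `q`-oscillators. -/
abbrev Fock (k : Type) [Field k] : Type := Exponent →₀ kq k

/-- The operator sending the monomial `e` to `c e` times the monomial `f e`. -/
def weightedShift (c : Exponent → kq k) (f : Exponent → Exponent) : Module.End (kq k) (Fock k) :=
  Finsupp.linearCombination (kq k) fun e => Finsupp.single (f e) (c e)

@[simp]
theorem weightedShift_single (c : Exponent → kq k) (f : Exponent → Exponent) (e : Exponent)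
    (a : kq k) : weightedShift c f (Finsupp.single e a) = Finsupp.single (f e) (a * c e) := by
  rw [weightedShift, Finsupp.linearCombination_single, Finsupp.smul_single, smul_eq_mul]

/-- The diagonal operator scaling the monomial `e` by `q ^ w e`. -/
def qDiag (w : Exponent → ℤ) : Module.End (kq k) (Fock k) :=
  weightedShift (fun e => LaurentPolynomial.T (w e)) id

/-- Multiplication by the variable at the position `p`. -/
def create (p : ℕ ×ₗ ℕ) : Module.End (kq k) (Fock k) :=
  weightedShift 1 (· + Finsupp.single p 1)

/-- The matrix coefficient `q⁻¹ (q ^ (2 n) - 1)` of `annihilate`. -/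
def annihilateCoeff (k : Type) [Field k] (n : ℕ) : kq k :=
  LaurentPolynomial.T (2 * n - 1) - LaurentPolynomial.T (-1)

/-- The `q`-derivative with respect to the variable at the position `p`, up to a scalar; the junk
exponent `e - 1` at `e p = 0` comes with the coefficient `0`. -/
def annihilate (p : ℕ ×ₗ ℕ) : Module.End (kq k) (Fock k) :=
  weightedShift (fun e => annihilateCoeff k (e p)) (· - Finsupp.single p 1)

/-- The operator scaling the monomial `e` by `q ^ e p`. -/
def qWeight (p : ℕ ×ₗ ℕ) : Module.End (kq k) (Fock k) :=
  qDiag fun e => e p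

theorem annihilateCoeff_zero : annihilateCoeff k 0 = 0 := by
  simp [annihilateCoeff]

theorem fock_end_ext {x y : Module.End (kq k) (Fock k)}
    (h : ∀ e, x (Finsupp.single e 1) = y (Finsupp.single e 1)) : x = y :=
  Finsupp.lhom_ext' fun e => LinearMap.ext_ring (h e)

theorem eq_zero_or_exists_eq_add_single (e : Exponent) (p : ℕ ×ₗ ℕ) :
    e p = 0 ∨ ∃ e', e = e' + Finsupp.single p 1 := by
  refine or_iff_not_imp_left.mpr fun h => ⟨e - Finsupp.single p 1, ?_⟩
  exact (tsub_add_cancel_of_le (Finsupp.single_le_iff.mpr (Nat.one_le_iff_ne_zero.mpr h))).symm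

@[simp]
theorem create_single (p : ℕ ×ₗ ℕ) (e : Exponent) (a : kq k) :
    create p (Finsupp.single e a) = Finsupp.single (e + Finsupp.single p 1) a := by
  simp only [create, weightedShift_single, Pi.one_apply, mul_one]

@[simp]
theorem qDiag_single (w : Exponent → ℤ) (e : Exponent) (a : kq k) :
    qDiag w (Finsupp.single e a) = Finsupp.single e (a * LaurentPolynomial.T (w e)) := by
  simp only [qDiag, weightedShift_single, id]

@[simp]
theorem qWeight_single (p : ℕ ×ₗ ℕ) (e : Exponent) (a : kq k) :
    qWeight p (Finsupp.single e a) = Finsupp.single e (a * LaurentPolynomial.T (e p)) :=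
  qDiag_single _ e a

theorem annihilate_single_of_eq_zero {p : ℕ ×ₗ ℕ} {e : Exponent} (h : e p = 0) (a : kq k) :
    annihilate p (Finsupp.single e a) = 0 := by
  simp only [annihilate, weightedShift_single, h, annihilateCoeff_zero, mul_zero,
    Finsupp.single_zero]

@[simp]
theorem annihilate_single_add (p : ℕ ×ₗ ℕ) (e : Exponent) (a : kq k) :
    annihilate p (Finsupp.single (e + Finsupp.single p 1) a) =
      Finsupp.single e (a * annihilateCoeff k (e p + 1)) := by
  simp only [annihilate, weightedShift_single, Finsupp.add_apply, Finsupp.single_eq_same,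
    add_tsub_cancel_right]

theorem create_mul_qWeight (p : ℕ ×ₗ ℕ) :
    (create p * qWeight p : Module.End (kq k) (Fock k)) = qInv k • (qWeight p * create p) := by
  refine fock_end_ext fun e => ?_
  simp only [Module.End.mul_apply, qWeight_single, create_single, LinearMap.smul_apply,
    Finsupp.smul_single, smul_eq_mul, qInv, Finsupp.add_apply, Finsupp.single_eq_same]
  push_cast
  rw [LaurentPolynomial.T_add, one_mul, one_mul, mul_left_comm, ← LaurentPolynomial.T_add,
    neg_add_cancel, LaurentPolynomial.T_zero, mul_one]

theorem qWeight_mul_annihilate (p : ℕ ×ₗ ℕ) :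
    (qWeight p * annihilate p : Module.End (kq k) (Fock k)) =
      qInv k • (annihilate p * qWeight p) := by
  refine fock_end_ext fun e => ?_
  rcases eq_zero_or_exists_eq_add_single e p with h | ⟨e, rfl⟩
  · simp [Module.End.mul_apply, annihilate_single_of_eq_zero h, h]
  · simp only [Module.End.mul_apply, qWeight_single, annihilate_single_add, LinearMap.smul_apply,
      Finsupp.smul_single, smul_eq_mul, qInv, Finsupp.add_apply, Finsupp.single_eq_same]
    push_cast
    rw [LaurentPolynomial.T_add, one_mul, one_mul, ← mul_assoc, mul_left_comm,
      ← LaurentPolynomial.T_add, neg_add_cancel, LaurentPolynomial.T_zero, mul_one, mul_comm]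

theorem annihilateCoeff_succ (n : ℕ) :
    annihilateCoeff k (n + 1) = annihilateCoeff k n +
      (qParam k - qInv k) * (LaurentPolynomial.T n * LaurentPolynomial.T n) := by
  simp only [annihilateCoeff, qInv, qParam, sub_mul, ← LaurentPolynomial.T_add]
  push_cast
  ring_nf

theorem create_mul_annihilate (p : ℕ ×ₗ ℕ) :
    (create p * annihilate p : Module.End (kq k) (Fock k)) =
      annihilate p * create p + (qInv k - qParam k) • (qWeight p * qWeight p) := by
  refine fock_end_ext fun e => ?_
  simp only [LinearMap.add_apply, LinearMap.smul_apply, Module.End.mul_apply, create_single,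
    qWeight_single, annihilate_single_add, annihilateCoeff_succ, Finsupp.smul_single, smul_eq_mul,
    ← Finsupp.single_add]
  rcases eq_zero_or_exists_eq_add_single e p with h | ⟨e, rfl⟩
  · rw [annihilate_single_of_eq_zero h, map_zero, h, annihilateCoeff_zero, eq_comm,
      Finsupp.single_eq_zero]
    ring
  · rw [annihilate_single_add, create_single, Finsupp.add_apply, Finsupp.single_eq_same,
      Nat.cast_add, Nat.cast_one]
    congr 1
    ring

/-- The operators that only look at and only change the exponent at the position `p`. -/
def siteOps (k : Type) [Field k] (p : ℕ ×ₗ ℕ) : Set (Module.End (kq k) (Fock k)) :=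
  {x | ∃ (c : ℕ → kq k) (f : ℕ → ℕ),
    x = weightedShift (fun e => c (e p)) fun e => e.update p (f (e p))}

theorem create_mem_siteOps (p : ℕ ×ₗ ℕ) : create p ∈ siteOps k p := by
  refine ⟨1, (· + 1), ?_⟩
  simp only [create]
  congr with e p'
  by_cases h : p' = p <;> simp [h]

theorem annihilate_mem_siteOps (p : ℕ ×ₗ ℕ) : annihilate p ∈ siteOps k p := by
  refine ⟨annihilateCoeff k, (· - 1), ?_⟩
  simp only [annihilate]
  congr with e p'
  by_cases h : p' = p <;> simp [h]

theorem qDiag_mem_siteOps (p : ℕ ×ₗ ℕ) (w : ℕ → ℤ) :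
    qDiag (fun e => w (e p)) ∈ siteOps k p := by
  refine ⟨fun n => LaurentPolynomial.T (w n), id, ?_⟩
  simp only [qDiag, id, Finsupp.update_self]
  rfl

theorem qWeight_mem_siteOps (p : ℕ ×ₗ ℕ) : qWeight p ∈ siteOps k p :=
  qDiag_mem_siteOps p fun n => n

theorem commute_of_mem_siteOps {p p' : ℕ ×ₗ ℕ} (h : p ≠ p') {x y : Module.End (kq k) (Fock k)}
    (hx : x ∈ siteOps k p) (hy : y ∈ siteOps k p') : Commute x y := by
  obtain ⟨c, f, rfl⟩ := hx
  obtain ⟨c', f', rfl⟩ := hy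
  refine fock_end_ext fun e => ?_
  simp only [Module.End.mul_apply, weightedShift_single, Finsupp.update_apply, if_neg h,
    if_neg h.symm, one_mul, mul_comm, Finsupp.update_comm _ h]

/-- The algebra generated by the operators at the positions in `S`. -/
def sitesAlg (k : Type) [Field k] (S : Set (ℕ ×ₗ ℕ)) :
    Subalgebra (kq k) (Module.End (kq k) (Fock k)) :=
  Algebra.adjoin (kq k) (⋃ p ∈ S, siteOps k p)

theorem sitesAlg_mono {S S' : Set (ℕ ×ₗ ℕ)} (h : S ⊆ S') : sitesAlg k S ≤ sitesAlg k S' :=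
  Algebra.adjoin_mono (Set.biUnion_subset_biUnion_left h)

theorem siteOps_subset_sitesAlg {S : Set (ℕ ×ₗ ℕ)} {p : ℕ ×ₗ ℕ} (hp : p ∈ S) :
    siteOps k p ⊆ sitesAlg k S := fun _ hx =>
  Algebra.subset_adjoin (Set.mem_biUnion hp hx)

theorem sitesAlg_le {S : Set (ℕ ×ₗ ℕ)} {A : Subalgebra (kq k) (Module.End (kq k) (Fock k))}
    (h : ∀ p ∈ S, siteOps k p ⊆ A) : sitesAlg k S ≤ A :=
  Algebra.adjoin_le (Set.iUnion₂_subset h)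

theorem commute_of_mem_sitesAlg {S S' : Set (ℕ ×ₗ ℕ)} (hS : Disjoint S S')
    {x y : Module.End (kq k) (Fock k)} (hx : x ∈ sitesAlg k S) (hy : y ∈ sitesAlg k S') :
    Commute x y := by
  have hle : sitesAlg k S' ≤ Subalgebra.centralizer (kq k) (sitesAlg k S) := by
    refine sitesAlg_le fun p' hp' y hy => Set.mem_centralizer_iff.mpr fun x hx => ?_
    have hle : sitesAlg k S ≤ Subalgebra.centralizer (kq k) {y} := by
      refine sitesAlg_le fun p hp x hx => Set.mem_centralizer_iff.mpr ?_
      rintro _ rfl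
      exact commute_of_mem_siteOps (hS.ne_of_mem hp hp').symm hy hx
    exact (Set.mem_centralizer_iff.mp (hle hx) y rfl).symm
  exact Set.mem_centralizer_iff.mp (hle hy) x hx

end FockSpace

section FockMatrix

variable {k : Type} [Field k]

/-- The row `∑ r, K s * ⋯ * K (r - 1) * z r * P r` with `z r`, `K r` the operators `create (i, r)`,
`qWeight (i, r)` and `s ≤ r < m`: what a rectangular quantum matrix `P` contributes to the
rows above it when a row of oscillators is multiplied to it from the left. -/
def carry (m : ℕ) (P : ℕ → ℕ → Module.End (kq k) (Fock k)) (i s j : ℕ) :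
    Module.End (kq k) (Fock k) :=
  if s < m then create (toLex (i, s)) * P s j + qWeight (toLex (i, s)) * carry m P i (s + 1) j
  else 0
termination_by m - s

/-- The square quantum matrix left over, below the first `i` rows, by the oscillators of these
rows. -/
def border (m : ℕ) : ℕ → ℕ → ℕ → Module.End (kq k) (Fock k)
  | 0, s, j => if s = j ∧ s < m then 1 else 0
  | i + 1, s, j =>
    qWeight (toLex (i, s)) * border m i s j +
      annihilate (toLex (i, s)) * carry m (border m i) i (s + 1) j

/-- The quantum matrix with `m` columns acting on the Fock space. -/
def fockEntry (m i j : ℕ) : Module.End (kq k) (Fock k) :=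
  carry m (border m i) i 0 j

/-- The stages of the construction of `fockEntry`: `fockStack m i s` has been multiplied by the
oscillators of the rows before `i` and by those of the row `i` in the columns from `s` on. -/
def fockStack (m i s r j : ℕ) : Module.End (kq k) (Fock k) :=
  if r < i then fockEntry m r j
  else if r < i + s then border m i (r - i) j
  else if r = i + s then carry m (border m i) i s j
  else border m (i + 1) (r - i - 1) j

theorem carry_of_lt {m s : ℕ} (hs : s < m) (P : ℕ → ℕ → Module.End (kq k) (Fock k)) (i j : ℕ) :
    carry m P i s j =
      create (toLex (i, s)) * P s j + qWeight (toLex (i, s)) * carry m P i (s + 1) j := by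
  rw [carry, if_pos hs]

theorem carry_of_le {m s : ℕ} (hs : m ≤ s) (P : ℕ → ℕ → Module.End (kq k) (Fock k)) (i j : ℕ) :
    carry m P i s j = 0 := by
  rw [carry, if_neg hs.not_gt]

theorem border_of_le {m s : ℕ} (hs : m ≤ s) (i j : ℕ) : border (k := k) m i s j = 0 := by
  induction i with
  | zero => rw [border, if_neg fun h => h.2.not_ge hs]
  | succ i ih => rw [border, ih, carry_of_le (hs.trans s.le_succ), mul_zero, mul_zero, add_zero]

theorem fockStack_eq_blockMul {m s : ℕ} (hs : s < m) (i : ℕ) :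
    fockStack (k := k) m i s = blockMul (i + s) (create (toLex (i, s))) (qWeight (toLex (i, s)))
      (qWeight (toLex (i, s))) (annihilate (toLex (i, s))) (fockStack m i (s + 1)) := by
  funext r j
  have h₁ : fockStack (k := k) m i (s + 1) (i + s) j = border m i s j := by
    rw [fockStack, if_neg (by omega), if_pos (by omega), Nat.add_sub_cancel_left]
  have h₂ : fockStack (k := k) m i (s + 1) (i + s + 1) j = carry m (border m i) i (s + 1) j := by
    rw [fockStack, if_neg (by omega), if_neg (by omega), if_pos (by omega)]
  rw [blockMul, h₁, h₂]
  split_ifs with h h'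
  · rw [fockStack, if_neg (by omega), if_neg (by omega), if_pos h, carry_of_lt hs]
  · rw [fockStack, if_neg (by omega), if_neg (by omega), if_neg h,
      show r - i - 1 = s by omega, border]
  · unfold fockStack
    split_ifs <;> first | omega | rfl

theorem fockStack_succ (m i : ℕ) : fockStack (k := k) m (i + 1) m = fockStack m i 0 := by
  funext r j
  rcases lt_trichotomy r i with h | rfl | h
  · rw [fockStack, fockStack, if_pos h, if_pos (by omega)]
  · rw [fockStack, fockStack, if_pos (by omega), if_neg (by omega), if_neg (by omega),
      if_pos (by omega), fockEntry]
  · have h₀ : fockStack (k := k) m i 0 r j = border m (i + 1) (r - i - 1) j := by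
      rw [fockStack, if_neg (by omega), if_neg (by omega), if_neg (by omega)]
    rw [h₀, fockStack, if_neg (by omega), ← Nat.sub_sub]
    split_ifs with h' h''
    · rfl
    · rw [carry_of_le le_rfl, border_of_le (by omega)]
    · rw [border_of_le (by omega), border_of_le (by omega)]

theorem fockStack_zero (m : ℕ) :
    fockStack (k := k) m 0 m = fun r j => if r = j ∧ r < m then 1 else 0 := by
  funext r j
  rw [fockStack, if_neg (by omega)]
  split_ifs with h h' h'' h''
  any_goals omega
  · rw [border, Nat.sub_zero, if_pos h']
  · rw [border, Nat.sub_zero, if_neg h']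
  · rw [carry_of_le le_rfl]
  · rw [border_of_le (by omega)]

theorem isQuantumMatrix_oscillatorBlock (p : ℕ ×ₗ ℕ) (r : ℕ) :
    IsQuantumMatrix (qParam k) (qInv k)
      (blockOne r (create p) (qWeight p) (qWeight p) (annihilate p) :
        ℕ → ℕ → Module.End (kq k) (Fock k)) :=
  isQuantumMatrix_blockOne r (create_mul_qWeight p) (qWeight_mul_annihilate p)
    (create_mul_qWeight p) (qWeight_mul_annihilate p) rfl (create_mul_annihilate p)

/-- The positions whose oscillators occur in `fockStack m i s`. -/
def sitesFrom (i s : ℕ) : Set (ℕ ×ₗ ℕ) :=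
  {p | (ofLex p).1 < i ∨ (ofLex p).1 = i ∧ s ≤ (ofLex p).2}

theorem fockStack_step {m s : ℕ} (hs : s < m) (i : ℕ)
    (hmem : ∀ r j, fockStack m i (s + 1) r j ∈ sitesAlg k (sitesFrom i (s + 1)))
    (hX : IsQuantumMatrix (qParam k) (qInv k) (fockStack (k := k) m i (s + 1))) :
    (∀ r j, fockStack m i s r j ∈ sitesAlg k (sitesFrom i s)) ∧
      IsQuantumMatrix (qParam k) (qInv k) (fockStack (k := k) m i s) := by
  have hsite {x} (hx : x ∈ siteOps k (toLex (i, s))) : x ∈ sitesAlg k (sitesFrom i s) :=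
    siteOps_subset_sitesAlg (Or.inr ⟨rfl, le_rfl⟩) hx
  have hmono : sitesAlg k (sitesFrom i (s + 1)) ≤ sitesAlg k (sitesFrom i s) :=
    sitesAlg_mono fun p => Or.imp_right (And.imp_right s.le_succ.trans)
  have hdisj : Disjoint {toLex (i, s)} (sitesFrom i (s + 1)) :=
    Set.disjoint_singleton_left.mpr (by simp [sitesFrom])
  rw [fockStack_eq_blockMul hs]
  refine ⟨fun r j => ?_, isQuantumMatrix_blockMul qParam_mul_qInv
    (isQuantumMatrix_oscillatorBlock _ _) hX fun x hx l j => ?_⟩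
  · unfold blockMul
    split_ifs
    · exact add_mem (mul_mem (hsite (create_mem_siteOps _)) (hmono (hmem _ _)))
        (mul_mem (hsite (qWeight_mem_siteOps _)) (hmono (hmem _ _)))
    · exact add_mem (mul_mem (hsite (qWeight_mem_siteOps _)) (hmono (hmem _ _)))
        (mul_mem (hsite (annihilate_mem_siteOps _)) (hmono (hmem _ _)))
    · exact hmono (hmem _ _)
  · have hx' : x ∈ siteOps k (toLex (i, s)) := by
      rcases hx with rfl | rfl | rfl | rfl
      exacts [create_mem_siteOps _, qWeight_mem_siteOps _, qWeight_mem_siteOps _,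
        annihilate_mem_siteOps _]
    exact commute_of_mem_sitesAlg hdisj (siteOps_subset_sitesAlg (Set.mem_singleton _) hx')
      (hmem l j)

theorem fockStack_spec {m s : ℕ} (hs : s ≤ m) (i : ℕ) :
    (∀ r j, fockStack m i s r j ∈ sitesAlg k (sitesFrom i s)) ∧
      IsQuantumMatrix (qParam k) (qInv k) (fockStack (k := k) m i s) := by
  induction i generalizing s with
  | zero =>
    induction hs using Nat.decreasingInduction with
    | self =>
      rw [fockStack_zero]
      refine ⟨fun r j => ?_, isQuantumMatrix_one m⟩
      dsimp only
      split_ifs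
      exacts [one_mem _, zero_mem _]
    | of_succ s hs ih => exact fockStack_step hs 0 ih.1 ih.2
  | succ i ihi =>
    induction hs using Nat.decreasingInduction with
    | self =>
      rw [fockStack_succ]
      refine ⟨fun r j => sitesAlg_mono (fun p hp => ?_) ((ihi m.zero_le).1 r j),
        (ihi m.zero_le).2⟩
      exact Or.inl (hp.elim Nat.lt_succ_of_lt fun h => Nat.lt_succ_of_le h.1.le)
    | of_succ s hs ih => exact fockStack_step hs (i + 1) ih.1 ih.2

theorem isQuantumMatrix_fockEntry (m : ℕ) :
    IsQuantumMatrix (qParam k) (qInv k) (fockEntry (k := k) m) := by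
  have h n := (fockStack_spec (k := k) m.zero_le n).2
  have hrow {n r : ℕ} (hr : r ≤ n) (j : ℕ) : fockStack (k := k) m n 0 r j = fockEntry m r j := by
    rcases hr.lt_or_eq with hr | rfl
    · rw [fockStack, if_pos hr]
    · rw [fockStack, if_neg (by omega), if_neg (by omega), if_pos (by omega), fockEntry]
  constructor
  · intro i i' j hi
    simpa only [hrow hi.le, hrow le_rfl] using (h i').col i i' j hi
  · intro i j j' hj
    simpa only [hrow le_rfl] using (h i).row i j j' hj
  · intro i i' j j' hi hj
    simpa only [hrow hi.le, hrow le_rfl] using (h i').comm i i' j j' hi hj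
  · intro i i' j j' hi hj
    simpa only [hrow hi.le, hrow le_rfl] using (h i').qcomm i i' j j' hi hj

end FockMatrix

section Vacuum

variable {k : Type} [Field k]

theorem carry_single {m s : ℕ} (hs : s ≤ m) {P : ℕ → ℕ → Module.End (kq k) (Fock k)} {e : Exponent}
    {j : ℕ} {a : kq k}
    (hP : ∀ s, P s j (Finsupp.single e a) = if s = j ∧ s < m then Finsupp.single e a else 0)
    (i : ℕ) : carry m P i s j (Finsupp.single e a) =
      if s ≤ j ∧ j < m then Finsupp.single (e + Finsupp.single (toLex (i, j)) 1)
        (a * LaurentPolynomial.T (∑ r ∈ Finset.Ico s j, (e (toLex (i, r)) : ℤ)))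
      else 0 := by
  induction hs using Nat.decreasingInduction with
  | self => rw [carry_of_le le_rfl, if_neg (by omega), LinearMap.zero_apply]
  | of_succ s hs ih =>
    rw [carry_of_lt hs, LinearMap.add_apply, Module.End.mul_apply, Module.End.mul_apply, hP, ih]
    rcases lt_trichotomy s j with h | rfl | h
    · rw [if_neg (by omega), map_zero, zero_add]
      by_cases hj : j < m
      · have hne : toLex (i, s) ≠ toLex (i, j) := by rw [Ne, toLex_inj, Prod.mk.injEq]; omega
        rw [if_pos ⟨h, hj⟩, if_pos ⟨h.le, hj⟩, qWeight_single, Finsupp.add_apply,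
          Finsupp.single_eq_of_ne hne, add_zero, mul_assoc, ← LaurentPolynomial.T_add,
          Finset.sum_eq_sum_Ico_succ_bot h, add_comm (∑ r ∈ _, _)]
      · rw [if_neg (by omega), if_neg (by omega), map_zero]
    · rw [if_pos ⟨rfl, hs⟩, if_neg (by omega), if_pos ⟨le_rfl, hs⟩, map_zero, add_zero,
        create_single, Finset.Ico_self, Finset.sum_empty, LaurentPolynomial.T_zero, mul_one]
    · rw [if_neg (by omega), if_neg (by omega), if_neg (by omega), map_zero, map_zero, add_zero]

theorem border_single {m i : ℕ} (s j : ℕ) {e : Exponent} (he : ∀ p, (ofLex p).1 < i → e p = 0)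
    (a : kq k) : border m i s j (Finsupp.single e a) =
      if s = j ∧ s < m then Finsupp.single e a else 0 := by
  induction i generalizing s with
  | zero =>
    rw [border]
    split_ifs <;> rfl
  | succ i ih =>
    have hi s := ih s fun p hp => he p (Nat.lt_succ_of_lt hp)
    have hes : e (toLex (i, s)) = 0 := he _ i.lt_succ_self
    rcases le_or_gt m s with hs | hs
    · rw [border_of_le hs, if_neg (by omega), LinearMap.zero_apply]
    rw [border, LinearMap.add_apply, Module.End.mul_apply, Module.End.mul_apply, hi,
      carry_single hs hi]
    have hann : annihilate (toLex (i, s)) (if s + 1 ≤ j ∧ j < m then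
        Finsupp.single (e + Finsupp.single (toLex (i, j)) 1)
          (a * LaurentPolynomial.T (∑ r ∈ Finset.Ico (s + 1) j, (e (toLex (i, r)) : ℤ)))
        else 0) = 0 := by
      split_ifs with h
      · have hne : toLex (i, s) ≠ toLex (i, j) := by rw [Ne, toLex_inj, Prod.mk.injEq]; omega
        refine annihilate_single_of_eq_zero ?_ _
        rw [Finsupp.add_apply, Finsupp.single_eq_of_ne hne, hes, add_zero]
      · exact map_zero _
    rw [hann, add_zero, apply_ite (qWeight (toLex (i, s))), map_zero, qWeight_single, hes,
      Nat.cast_zero, LaurentPolynomial.T_zero, mul_one]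

theorem fockEntry_single {m i j : ℕ} (hj : j < m) {e : Exponent}
    (he : ∀ p, (ofLex p).1 < i → e p = 0) (a : kq k) :
    fockEntry m i j (Finsupp.single e a) =
      Finsupp.single (e + Finsupp.single (toLex (i, j)) 1)
        (a * LaurentPolynomial.T (∑ r ∈ Finset.range j, (e (toLex (i, r)) : ℤ))) := by
  rw [fockEntry, carry_single m.zero_le fun s => border_single s j he a, if_pos ⟨j.zero_le, hj⟩,
    Finset.range_eq_Ico]

end Vacuum

section FockRepresentation

variable {k : Type} [Field k]

/-- The generators of `k_q[b]_{m,n}` with rows and columns counted from `0`, extended by zero. -/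
def gen (k : Type) [Field k] (m n : ℕ) : ℕ → ℕ → QMat k m n :=
  extendZero fun i j => av k m n (rowIdx m n i) (colIdx m j)

theorem isQuantumMatrix_gen (m n : ℕ) : IsQuantumMatrix (qParam k) (qInv k) (gen k m n) :=
  isQuantumMatrix_extendZero
    (isQuantumMatrix_qgen.comp (rowIdx_strictMono m n) (colIdx_strictMono m))

theorem gen_of_lt {m n i j : ℕ} (hi : i < m + n) (hj : j < m) :
    gen k m n i j = av k m n (rowIdx m n ⟨i, hi⟩) (colIdx m ⟨j, hj⟩) :=
  dif_pos ⟨hi, hj⟩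

/-- The representation of `k_q[b]_{m,n}` on the Fock space. -/
def fockRep (k : Type) [Field k] (m n : ℕ) : QMat k m n →ₐ[kq k] Module.End (kq k) (Fock k) :=
  qMatLift (fun (i : RowI m n) (j : ColI m) => fockEntry m (i.1 + m).toNat (j.1 + m).toNat)
    ((isQuantumMatrix_fockEntry m).comp (strictMono_toNat_add m _) (strictMono_toNat_add m _))

theorem fockRep_gen {m n i j : ℕ} (hi : i < m + n) (hj : j < m) :
    fockRep k m n (gen k m n i j) = fockEntry m i j := by
  rw [gen_of_lt hi hj, fockRep, av, qMatLift_qgen]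
  congr 1
  · simp only [rowIdx]
    omega
  · simp only [colIdx]
    omega

/-- The coefficients of an element of `k_q[b]_{m,n}` in the basis of sorted monomials in the
generators, read off from the action on the vacuum. -/
def fockCoeff (k : Type) [Field k] (m n : ℕ) : QMat k m n →ₗ[kq k] Fock k :=
  LinearMap.applyₗ (Finsupp.single 0 1) ∘ₗ (fockRep k m n).toLinearMap

theorem fockCoeff_apply {m n : ℕ} (x : QMat k m n) :
    fockCoeff k m n x = fockRep k m n x (Finsupp.single 0 1) :=
  rfl

theorem fockCoeff_mul {m n : ℕ} (x y : QMat k m n) :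
    fockCoeff k m n (x * y) = fockRep k m n x (fockCoeff k m n y) := by
  rw [fockCoeff_apply, fockCoeff_apply, map_mul, Module.End.mul_apply]

theorem fockEntry_single_of_forall_lt {m i j : ℕ} (hj : j < m) {e : Exponent}
    (he : ∀ p < toLex (i, j), e p = 0) (a : kq k) :
    fockEntry m i j (Finsupp.single e a) =
      Finsupp.single (e + Finsupp.single (toLex (i, j)) 1) a := by
  have hrow : ∀ p, (ofLex p).1 < i → e p = 0 := fun p hp =>
    he p (Prod.Lex.lt_iff.mpr (Or.inl hp))
  have hcol : ∑ r ∈ Finset.range j, (e (toLex (i, r)) : ℤ) = 0 := Finset.sum_eq_zero fun r hr => by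
    have hlt : toLex (i, r) < toLex (i, j) :=
      Prod.Lex.toLex_lt_toLex.mpr (Or.inr ⟨rfl, Finset.mem_range.mp hr⟩)
    rw [he _ hlt, Nat.cast_zero]
  rw [fockEntry_single hj hrow, hcol, LaurentPolynomial.T_zero, mul_one]

theorem toFinsupp_eq_zero_of_lt {l : List (ℕ ×ₗ ℕ)} {p p' : ℕ ×ₗ ℕ} (hl : ∀ a ∈ l, p ≤ a)
    (hp : p' < p) : Multiset.toFinsupp (l : Multiset (ℕ ×ₗ ℕ)) p' = 0 := by
  rw [Multiset.toFinsupp_apply, Multiset.count_eq_zero, Multiset.mem_coe]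
  exact fun h => (hl _ h).not_gt hp

theorem toFinsupp_coe_cons (p : ℕ ×ₗ ℕ) (l : List (ℕ ×ₗ ℕ)) :
    Multiset.toFinsupp ((p :: l : List (ℕ ×ₗ ℕ)) : Multiset (ℕ ×ₗ ℕ)) =
      Multiset.toFinsupp (l : Multiset (ℕ ×ₗ ℕ)) + Finsupp.single p 1 := by
  rw [← Multiset.cons_coe, ← Multiset.singleton_add, Multiset.toFinsupp_add,
    Multiset.toFinsupp_singleton, add_comm]

/-- The positions of the entries of a matrix with `m + n` rows and `m` columns. -/
def box (m n : ℕ) : Set (ℕ ×ₗ ℕ) :=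
  {p | (ofLex p).1 < m + n ∧ (ofLex p).2 < m}

theorem fockCoeff_wordProd {m n : ℕ} {l : List (ℕ ×ₗ ℕ)} (hl : l.Pairwise (· ≤ ·))
    (hbox : ∀ p ∈ l, p ∈ box m n) : fockCoeff k m n (wordProd (gen k m n) l) =
      Finsupp.single (Multiset.toFinsupp (l : Multiset (ℕ ×ₗ ℕ))) 1 := by
  induction l with
  | nil => simp [wordProd, fockCoeff_apply]
  | cons p l ih =>
    obtain ⟨hp, hl⟩ := List.pairwise_cons.mp hl
    obtain ⟨hpbox, hbox⟩ := List.forall_mem_cons.mp hbox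
    rw [wordProd_cons, fockCoeff_mul, ih hl hbox, fockRep_gen hpbox.1 hpbox.2,
      toFinsupp_coe_cons]
    exact fockEntry_single_of_forall_lt hpbox.2 (fun p' hp' => toFinsupp_eq_zero_of_lt hp hp') 1

theorem adjoin_gen (m n : ℕ) : Algebra.adjoin (kq k) {x | ∃ i j, x = gen k m n i j} = ⊤ := by
  refine eq_top_iff.mpr (adjoin_qgen.ge.trans (Algebra.adjoin_mono ?_))
  rintro _ ⟨i, j, rfl⟩
  obtain ⟨i, rfl⟩ := rowIdx_surjective m n i
  obtain ⟨j, rfl⟩ := colIdx_surjective m j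
  exact ⟨i, j, (gen_of_lt i.2 j.2).symm⟩

theorem span_sortedWords_eq_top (m n : ℕ) : Submodule.span (kq k) (wordProd (gen k m n) ''
    {l | l.Pairwise (· ≤ ·) ∧ ∀ p ∈ l, p ∈ box m n}) = ⊤ := by
  refine eq_top_iff.mpr ?_
  rw [← Algebra.top_toSubmodule, ← adjoin_gen]
  refine ((isQuantumMatrix_gen m n).adjoin_le_span_sortedWords qParam_mul_qInv).trans ?_
  refine Submodule.span_le.mpr ?_
  rintro _ ⟨l, hl, rfl⟩
  by_cases hbox : ∀ p ∈ l, p ∈ box m n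
  · exact Submodule.subset_span ⟨l, ⟨hl, hbox⟩, rfl⟩
  · push Not at hbox
    obtain ⟨p, hp, hpbox⟩ := hbox
    have hzero : wordProd (gen k m n) l = 0 :=
      List.prod_eq_zero (List.mem_map.mpr ⟨p, hp, dif_neg hpbox⟩)
    rw [hzero]
    exact Submodule.zero_mem _

theorem fockCoeff_injective (m n : ℕ) : Function.Injective (fockCoeff k m n) := by
  let inv : Fock k →ₗ[kq k] QMat k m n := Finsupp.linearCombination (kq k) fun e =>
    wordProd (gen k m n) ((Finsupp.toMultiset e).sort (· ≤ ·))
  have hinv : inv ∘ₗ fockCoeff k m n = LinearMap.id := by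
    refine LinearMap.ext_on (span_sortedWords_eq_top m n) ?_
    rintro _ ⟨l, ⟨hl, hbox⟩, rfl⟩
    rw [LinearMap.comp_apply, fockCoeff_wordProd hl hbox, Finsupp.linearCombination_single,
      one_smul, Multiset.toFinsupp_toMultiset, LinearMap.id_apply]
    congr 1
    exact (Multiset.coe_eq_coe.mp (Multiset.sort_eq _ _)).eq_of_pairwise
      (fun _ _ _ _ => le_antisymm) (Multiset.pairwise_sort _ _) hl
  exact Function.LeftInverse.injective (g := inv) (LinearMap.congr_fun hinv)

theorem fockCoeff_mem_supported {m n : ℕ} (x : QMat k m n) :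
    fockCoeff k m n x ∈ Finsupp.supported (kq k) (kq k) {e | ∀ p, e p ≠ 0 → p ∈ box m n} := by
  suffices h : (⊤ : Submodule (kq k) (QMat k m n)) ≤ (Finsupp.supported (kq k) (kq k)
      {e | ∀ p, e p ≠ 0 → p ∈ box m n}).comap (fockCoeff k m n) from h Submodule.mem_top
  rw [← span_sortedWords_eq_top, Submodule.span_le]
  rintro _ ⟨l, ⟨hl, hbox⟩, rfl⟩
  rw [SetLike.mem_coe, Submodule.mem_comap, fockCoeff_wordProd hl hbox]
  refine Finsupp.single_mem_supported _ _ fun p hp => hbox p ?_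
  rwa [Multiset.toFinsupp_apply, Multiset.count_ne_zero, Multiset.mem_coe] at hp

end FockRepresentation

section LocalSupport

variable {k : Type} [Field k]

theorem weightedShift_id_apply (c : Exponent → kq k) (v : Fock k) (e : Exponent) :
    weightedShift c id v e = c e * v e := by
  induction v using Finsupp.induction_linear with
  | zero => rw [map_zero, Finsupp.zero_apply, mul_zero]
  | add v w hv hw => rw [map_add, Finsupp.add_apply, hv, hw, Finsupp.add_apply, mul_add]
  | single e' a =>
    rw [weightedShift_single, id, Finsupp.single_apply, Finsupp.single_apply]
    split_ifs with h
    · rw [h, mul_comm]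
    · rw [mul_zero]

theorem commute_weightedShift_id {S : Set (ℕ ×ₗ ℕ)} {c : Exponent → kq k}
    (hc : ∀ p ∈ S, ∀ e n, c (e.update p n) = c e) {x : Module.End (kq k) (Fock k)}
    (hx : x ∈ sitesAlg k S) : Commute (weightedShift c id) x := by
  have hle : sitesAlg k S ≤ Subalgebra.centralizer (kq k) {weightedShift c id} := by
    refine sitesAlg_le fun p hp x hx => Set.mem_centralizer_iff.mpr ?_
    rintro _ rfl
    obtain ⟨c', f, rfl⟩ := hx
    refine fock_end_ext fun e => ?_
    simp only [Module.End.mul_apply, weightedShift_single, id, hc p hp, one_mul, mul_one,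
      mul_comm]
  exact Set.mem_centralizer_iff.mp (hle hx) _ rfl

theorem eq_of_sitesAlg_single_apply_ne_zero {S : Set (ℕ ×ₗ ℕ)} {x : Module.End (kq k) (Fock k)}
    (hx : x ∈ sitesAlg k S) {e e' : Exponent} (h : x (Finsupp.single e 1) e' ≠ 0)
    {p : ℕ ×ₗ ℕ} (hp : p ∉ S) : e' p = e p := by
  by_contra hne
  let c : Exponent → kq k := fun f => if f p = e p then 1 else 0
  have hc : Commute (weightedShift c id) x := commute_weightedShift_id (fun p' hp' f n => by
    rw [show c (f.update p' n) = c f by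
      simp only [c, Finsupp.update_apply, if_neg (ne_of_mem_of_not_mem hp' hp).symm]]) hx
  refine h ?_
  calc x (Finsupp.single e 1) e' = x (weightedShift c id (Finsupp.single e 1)) e' := by
        simp [c]
    _ = c e' * x (Finsupp.single e 1) e' := by
        rw [← Module.End.mul_apply, ← hc.eq, Module.End.mul_apply, weightedShift_id_apply]
    _ = 0 := by simp only [c, if_neg hne, zero_mul]

end LocalSupport

section LeadingShift

variable {k : Type} [Field k]

/-- The span of the monomials that precede `e`. -/
def lowerSpan (k : Type) [Field k] (e : Exponent) : Submodule (kq k) (Fock k) :=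
  Finsupp.supported (kq k) (kq k) {e' | toColex e' < toColex e}

/-- `x` acts like multiplication by the monomial `d`, up to units and up to preceding monomials. -/
def HasLeadingShift (d : Exponent) (x : Module.End (kq k) (Fock k)) : Prop :=
  ∀ e, ∃ a : kq k, IsUnit a ∧
    x (Finsupp.single e 1) - Finsupp.single (e + d) a ∈ lowerSpan k (e + d)

theorem single_mem_lowerSpan {e e' : Exponent} (h : toColex e' < toColex e) (a : kq k) :
    Finsupp.single e' a ∈ lowerSpan k e :=
  Finsupp.single_mem_supported _ _ h

theorem lowerSpan_mono {e e' : Exponent} (h : toColex e' ≤ toColex e) :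
    lowerSpan k e' ≤ lowerSpan k e :=
  Finsupp.supported_mono fun _ hf => lt_of_lt_of_le hf h

theorem HasLeadingShift.apply_single_mem_lowerSpan {d f e : Exponent}
    {x : Module.End (kq k) (Fock k)} (hx : HasLeadingShift d x)
    (h : toColex (e + d) < toColex f) : x (Finsupp.single e 1) ∈ lowerSpan k f := by
  obtain ⟨a, -, ha⟩ := hx e
  rw [← sub_add_cancel (x (Finsupp.single e 1)) (Finsupp.single (e + d) a)]
  exact add_mem (lowerSpan_mono h.le ha) (single_mem_lowerSpan h a)

theorem HasLeadingShift.apply_mem_lowerSpan {d f : Exponent} {x : Module.End (kq k) (Fock k)}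
    (hx : HasLeadingShift d x) {v : Fock k} (hv : v ∈ lowerSpan k f) :
    x v ∈ lowerSpan k (f + d) := by
  rw [lowerSpan, Finsupp.supported_eq_span_single] at hv
  induction hv using Submodule.span_induction with
  | mem v hv =>
    obtain ⟨e, he, rfl⟩ := hv
    exact hx.apply_single_mem_lowerSpan (add_lt_add_left (α := Colex Exponent) he (toColex d))
  | zero => rw [map_zero]; exact zero_mem _
  | add v w _ _ hv hw => rw [map_add]; exact add_mem hv hw
  | smul a v _ hv => rw [map_smul]; exact Submodule.smul_mem _ a hv

theorem HasLeadingShift.one : HasLeadingShift 0 (1 : Module.End (kq k) (Fock k)) := fun e =>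
  ⟨1, isUnit_one, by rw [add_zero, Module.End.one_apply, sub_self]; exact zero_mem _⟩

theorem HasLeadingShift.mul {d d' : Exponent} {x y : Module.End (kq k) (Fock k)}
    (hx : HasLeadingShift d x) (hy : HasLeadingShift d' y) : HasLeadingShift (d + d') (x * y) := by
  intro e
  obtain ⟨b, hb, hyb⟩ := hy e
  obtain ⟨a, ha, hxa⟩ := hx (e + d')
  refine ⟨b * a, hb.mul ha, ?_⟩
  rw [add_comm d d', ← add_assoc]
  have h : (x * y) (Finsupp.single e 1) - Finsupp.single (e + d' + d) (b * a) =
      x (y (Finsupp.single e 1) - Finsupp.single (e + d') b) +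
        b • (x (Finsupp.single (e + d') 1) - Finsupp.single (e + d' + d) a) := by
    rw [map_sub, smul_sub, ← map_smul, Finsupp.smul_single, Finsupp.smul_single, smul_eq_mul,
      smul_eq_mul, mul_one, Module.End.mul_apply, sub_add_sub_cancel]
  rw [h]
  exact add_mem (hx.apply_mem_lowerSpan hyb) (Submodule.smul_mem _ b hxa)

theorem HasLeadingShift.add_of_lower {d : Exponent} {x y : Module.End (kq k) (Fock k)}
    (hx : HasLeadingShift d x) (hy : ∀ e, y (Finsupp.single e 1) ∈ lowerSpan k (e + d)) :
    HasLeadingShift d (x + y) := by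
  intro e
  obtain ⟨a, ha, hxa⟩ := hx e
  refine ⟨a, ha, ?_⟩
  rw [LinearMap.add_apply, add_sub_right_comm]
  exact add_mem hxa (hy e)

theorem hasLeadingShift_qDiag (w : Exponent → ℤ) : HasLeadingShift 0 (qDiag (k := k) w) := by
  refine fun e => ⟨LaurentPolynomial.T (w e), LaurentPolynomial.isUnit_T _, ?_⟩
  rw [qDiag_single, add_zero, one_mul, sub_self]
  exact zero_mem _

theorem hasLeadingShift_create (p : ℕ ×ₗ ℕ) :
    HasLeadingShift (Finsupp.single p 1) (create (k := k) p) := by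
  refine fun e => ⟨1, isUnit_one, ?_⟩
  rw [create_single, sub_self]
  exact zero_mem _

theorem sitesAlg_Iio_single_mem_lowerSpan {p : ℕ ×ₗ ℕ} {x : Module.End (kq k) (Fock k)}
    (hx : x ∈ sitesAlg k (Set.Iio p)) (e : Exponent) :
    x (Finsupp.single e 1) ∈ lowerSpan k (e + Finsupp.single p 1) := by
  refine (Finsupp.mem_supported _ _).mpr fun e' he' => Finsupp.Colex.lt_iff.mpr ⟨p, ?_⟩
  have heq {p' : ℕ ×ₗ ℕ} (hp' : p ≤ p') : e' p' = e p' :=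
    eq_of_sitesAlg_single_apply_ne_zero hx (Finsupp.mem_support_iff.mp he') hp'.not_gt
  refine ⟨fun p' hp' => ?_, ?_⟩
  · simp [heq hp'.le, Finsupp.single_eq_of_ne hp'.ne']
  · simp [heq le_rfl]

theorem border_mem_sitesAlg (m i s j : ℕ) :
    border m i s j ∈ sitesAlg k {p | (ofLex p).1 < i} := by
  cases i with
  | zero =>
    rw [border]
    split_ifs
    exacts [one_mem _, zero_mem _]
  | succ i =>
    have h : border (k := k) m (i + 1) s j = fockStack m i 0 (i + 1 + s) j := by
      rw [fockStack, if_neg (by omega), if_neg (by omega), if_neg (by omega),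
        show i + 1 + s - i - 1 = s by omega]
    rw [h]
    refine sitesAlg_mono (fun p hp => ?_) ((fockStack_spec m.zero_le i).1 _ j)
    exact Nat.lt_succ_of_le (hp.elim Nat.le_of_lt fun h => h.1.le)

theorem carry_eq_zero {m s j : ℕ} (hs : s ≤ m) {P : ℕ → ℕ → Module.End (kq k) (Fock k)}
    (hP : ∀ s' ≥ s, P s' j = 0) (i : ℕ) : carry m P i s j = 0 := by
  induction hs using Nat.decreasingInduction with
  | self => exact carry_of_le le_rfl P i j
  | of_succ s hs ih =>
    rw [carry_of_lt hs, hP s le_rfl, ih fun s' hs' => hP s' (s.le_succ.trans hs'), mul_zero,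
      mul_zero, add_zero]

theorem border_eq_zero {m j s : ℕ} (hj : j < s) (i : ℕ) : border (k := k) m i s j = 0 := by
  rcases le_or_gt m s with hs | hs
  · exact border_of_le hs i j
  induction i generalizing s with
  | zero => rw [border, if_neg fun h => hj.ne' h.1]
  | succ i ih =>
    have hborder : ∀ s' ≥ s + 1, border (k := k) m i s' j = 0 := fun s' hs' =>
      (le_or_gt m s').elim (border_of_le · i j) (ih (by omega))
    rw [border, ih hj hs, carry_eq_zero hs hborder, mul_zero, mul_zero, add_zero]

theorem carry_border_self {m j : ℕ} (hj : j < m) (i : ℕ) :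
    carry (k := k) m (border m i) i (j + 1) j = 0 :=
  carry_eq_zero hj (fun _ hs => border_eq_zero hs i) i

theorem hasLeadingShift_border_self {m j : ℕ} (hj : j < m) (i : ℕ) :
    HasLeadingShift 0 (border (k := k) m i j j) := by
  induction i with
  | zero => rw [border, if_pos ⟨rfl, hj⟩]; exact .one
  | succ i ih =>
    rw [border, carry_border_self hj, mul_zero, add_zero, ← add_zero (0 : Exponent)]
    exact (hasLeadingShift_qDiag _).mul ih

theorem hasLeadingShift_carry {m s j : ℕ} (hs : s ≤ j) (hj : j < m) (i : ℕ) :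
    HasLeadingShift (Finsupp.single (toLex (i, j)) 1) (carry (k := k) m (border m i) i s j) := by
  induction hs using Nat.decreasingInduction with
  | self =>
    rw [carry_of_lt hj, carry_border_self hj, mul_zero, add_zero,
      ← add_zero (Finsupp.single (toLex (i, j)) 1)]
    exact (hasLeadingShift_create _).mul (hasLeadingShift_border_self hj i)
  | of_succ s hs ih =>
    rw [carry_of_lt (hs.trans hj), add_comm, ← zero_add (Finsupp.single (toLex (i, j)) 1)]
    refine ((hasLeadingShift_qDiag _).mul ih).add_of_lower fun e => ?_
    rw [zero_add]
    refine sitesAlg_Iio_single_mem_lowerSpan (mul_mem ?_ ?_) e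
    · have hlt : toLex (i, s) < toLex (i, j) := Prod.Lex.toLex_lt_toLex.mpr (Or.inr ⟨rfl, hs⟩)
      exact siteOps_subset_sitesAlg (Set.mem_Iio.mpr hlt) (create_mem_siteOps _)
    · exact sitesAlg_mono (fun p hp => Prod.Lex.lt_iff.mpr (Or.inl hp))
        (border_mem_sitesAlg m i s j)

theorem hasLeadingShift_fockEntry {m j : ℕ} (hj : j < m) (i : ℕ) :
    HasLeadingShift (Finsupp.single (toLex (i, j)) 1) (fockEntry (k := k) m i j) :=
  hasLeadingShift_carry j.zero_le hj i

end LeadingShift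

section BorelRepresentation

theorem exists_apply_lt_of_ne_one {m : ℕ} {σ : Equiv.Perm (Fin m)} (hσ : σ ≠ 1) :
    ∃ t, σ t < t ∧ ∀ u, t < u → σ u = u := by
  have hne : σ.support.Nonempty :=
    Finset.nonempty_iff_ne_empty.mpr (Equiv.Perm.support_eq_empty_iff.not.mpr hσ)
  have hmax : ∀ u, σ.support.max' hne < u → σ u = u := fun u hu =>
    Equiv.Perm.notMem_support.mp fun h => (σ.support.le_max' u h).not_gt hu
  refine ⟨σ.support.max' hne, lt_of_le_of_ne (not_lt.mp fun h => ?_) ?_, hmax⟩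
  · exact h.ne' (σ.injective (hmax _ h))
  · exact Equiv.Perm.mem_support.mp (σ.support.max'_mem hne)

theorem rowDet_of_upperTriangular {K A : Type*} [CommRing K] [Ring A] [Algebra K A] (c : K)
    {m : ℕ} {X : Fin m → Fin m → A} (hX : ∀ i j, j < i → X i j = 0) :
    rowDet c X id = (List.ofFn fun t => X t t).prod := by
  rw [rowDet, Finset.sum_eq_single 1]
  · rw [Equiv.Perm.coe_one, inversions_eq_zero_of_monotone monotone_id, pow_zero, one_smul]
    rfl
  · intro σ _ hσ
    obtain ⟨t, ht, -⟩ := exists_apply_lt_of_ne_one hσ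
    rw [List.prod_eq_zero (List.mem_ofFn.mpr ⟨t, hX t (σ t) ht⟩), smul_zero]
  · exact fun h => absurd (Finset.mem_univ _) h

variable {k : Type} [Field k]

/-- The weight of the column `j` for the torus of the `SL₂` acting on the columns `s`, `s + 1`. -/
def columnSign (s j : ℕ) : ℤ :=
  (if j = s + 1 then 1 else 0) - if j = s then 1 else 0

/-- The quantum matrix of the two-dimensional representation of the Borel subgroup of the `SL₂`
acting on the columns `s`, `s + 1`. -/
def borelEntry (k : Type) [Field k] (s : ℕ) : ℕ → ℕ → Matrix (Fin 2) (Fin 2) (kq k) :=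
  blockOne s !![qInv k, 0; 0, 1] !![0, qParam k - qInv k; 0, 0] 0 !![qParam k, 0; 0, 1]

theorem isQuantumMatrix_borelEntry (s : ℕ) :
    IsQuantumMatrix (qParam k) (qInv k) (borelEntry k s) := by
  have hzero : (0 : Fin 2 → kq k) = ![0, 0] := by
    ext i
    fin_cases i <;> rfl
  refine isQuantumMatrix_blockOne s ?_ ?_ ?_ ?_ ?_ ?_ <;>
    simp [Matrix.smul_of, mul_comm (qInv k), mul_right_comm _ _ (qInv k), hzero]

theorem borelEntry_eq (s i j : ℕ) : borelEntry k s i j =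
    (if i = j then !![LaurentPolynomial.T (columnSign s j), 0; 0, 1] else 0) +
      if i = s then (if j = s + 1 then !![0, qParam k - qInv k; 0, 0] else 0) else 0 := by
  have hone : !![LaurentPolynomial.T 0, 0; 0, 1] = (1 : Matrix (Fin 2) (Fin 2) (kq k)) := by
    rw [LaurentPolynomial.T_zero, Matrix.one_fin_two]
  unfold borelEntry blockOne columnSign qInv qParam
  split_ifs <;> first | omega | simp_all

theorem prod_borelEntry_diag {m s : ℕ} (hs : s + 1 < m) :
    (List.ofFn fun t : Fin m => borelEntry k s t t).prod = 1 := by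
  obtain ⟨m, rfl⟩ : ∃ m', m = m' + 1 := ⟨m - 1, by omega⟩
  obtain ⟨a, b, hab⟩ := exists_prod_ofFn_eq_mul_adjacent_mul (⟨s, by omega⟩ : Fin m)
    (1 : Fin (m + 1) → Matrix (Fin 2) (Fin 2) (kq k))
  have hone := hab 1 fun _ _ _ => rfl
  rw [hab _ fun u hu hu' => ?_]
  · have hblock : borelEntry k s s s * borelEntry k s (s + 1) (s + 1) = 1 := by
      simp [borelEntry, blockOne, Matrix.one_fin_two, mul_comm (qInv k)]
    simpa [hblock, Pi.one_def] using hone.symm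
  · have hu : (u : ℕ) ≠ s := fun h => hu (Fin.ext h)
    have hu' : (u : ℕ) ≠ s + 1 := fun h => hu' (Fin.ext h)
    simp [borelEntry, blockOne, hu, hu']

variable {m n s : ℕ}

/-- The two-dimensional representation of the Borel subgroup of the `SL₂` acting on the columns
`s`, `s + 1`, as a representation of `k_q[SL_{m,0}]`. -/
def slRep (k : Type) [Field k] (hs : s + 1 < m) :
    QSL k m 0 →ₐ[kq k] Matrix (Fin 2) (Fin 2) (kq k) :=
  RingQuot.liftAlgHom (kq k) ⟨qMatLift
    (fun i j : RowI m 0 => borelEntry k s (i.1 + m).toNat (j.1 + m).toNat)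
    ((isQuantumMatrix_borelEntry s).comp (strictMono_toNat_add m _) (strictMono_toNat_add m _)), by
    rintro _ _ ⟨rfl, rfl⟩
    simp only [sqDet_eq_rowDet, map_rowDet, qMatLift_qgen, map_one, rowIdx,
      neg_add_cancel_comm, Int.toNat_natCast]
    rw [rowDet_of_upperTriangular, prod_borelEntry_diag hs]
    intro i j hji
    rw [Fin.lt_def] at hji
    rw [borelEntry_eq, if_neg (by omega), zero_add]
    split_ifs <;> first | omega | rfl⟩

theorem slRep_qgSL (hs : s + 1 < m) (i j : Fin m) :
    slRep k hs (qgSL k m 0 (rowIdx m 0 i) (rowIdx m 0 j)) = borelEntry k s i j := by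
  rw [qgSL, slRep, qslMk, RingQuot.liftAlgHom_mkAlgHom_apply, qMatLift_qgen]
  simp only [rowIdx, neg_add_cancel_comm, Int.toNat_natCast]

theorem commute_scalar_map {K A ι : Type*} [CommRing K] [Ring A] [Algebra K A] [Fintype ι]
    [DecidableEq ι] (x : A) (M : Matrix ι ι K) :
    Commute (Matrix.scalarAlgHom ι K x) ((Algebra.ofId K A).mapMatrix M) :=
  Matrix.scalar_commute_iff.mpr (Matrix.ext fun i j => (Algebra.commutes (M i j) x).symm)

/-- The representation of `k_q[b]_{m,n} ⊗ k_q[SL_{m,0}]` on two copies of the Fock space. -/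
def tensorRep (k : Type) [Field k] (n : ℕ) (hs : s + 1 < m) :
    QMat k m n ⊗[kq k] QSL k m 0 →ₐ[kq k] Matrix (Fin 2) (Fin 2) (Module.End (kq k) (Fock k)) :=
  Algebra.TensorProduct.lift ((Matrix.scalarAlgHom (Fin 2) (kq k)).comp (fockRep k m n))
    ((Algebra.ofId (kq k) (Module.End (kq k) (Fock k))).mapMatrix.comp (slRep k hs)) fun x y =>
      commute_scalar_map (fockRep k m n x) (slRep k hs y)

theorem tensorRep_tmul (hs : s + 1 < m) (x : QMat k m n) (y : QSL k m 0) :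
    tensorRep k n hs (x ⊗ₜ y) = Matrix.scalar (Fin 2) (fockRep k m n x) *
      (slRep k hs y).map (algebraMap (kq k) (Module.End (kq k) (Fock k))) :=
  Algebra.TensorProduct.lift_tmul _ _ _ _ _

theorem tensorRep_tmul_one (hs : s + 1 < m) (x : QMat k m n) :
    tensorRep k n hs (x ⊗ₜ 1) = Matrix.scalar (Fin 2) (fockRep k m n x) := by
  rw [tensorRep_tmul, map_one, Matrix.map_one _ (map_zero _) (map_one _), mul_one]

theorem tensorRep_coaction_gen {ρ : QMat k m n →ₐ[kq k] QMat k m n ⊗[kq k] QSL k m 0}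
    (hρ : rhoqProp k m n ρ) (hs : s + 1 < m) {i j : ℕ} (hi : i < m + n) (hj : j < m) :
    tensorRep k n hs (ρ (gen k m n i j)) =
      !![(LaurentPolynomial.T (columnSign s j) : kq k) • fockEntry m i j,
          if j = s + 1 then (qParam k - qInv k) • fockEntry m i s else 0; 0, fockEntry m i j] := by
  have hterm (l : Fin m) : tensorRep k n hs (av k m n (rowIdx m n ⟨i, hi⟩) (colIdx m l) ⊗ₜ
      qgSL k m 0 (rowIdx m 0 l) (rowIdx m 0 ⟨j, hj⟩)) =
      (borelEntry k s l j).map fun c => (c : kq k) • fockEntry m i l := by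
    rw [tensorRep_tmul, slRep_qgSL, ← gen_of_lt hi l.2, fockRep_gen hi l.2]
    ext a b : 1
    simp [Matrix.diagonal_mul, Algebra.smul_def, Algebra.commutes]
  have hsum (l : ℕ) : ((borelEntry k s l j).map fun c => (c : kq k) • fockEntry (k := k) m i l) =
      (if j = l then !![(LaurentPolynomial.T (columnSign s j) : kq k) • fockEntry m i j, 0;
        0, fockEntry m i j] else 0) + if s = l then
        (if j = s + 1 then !![0, (qParam k - qInv k) • fockEntry m i s; 0, 0] else 0) else 0 := by
    rw [borelEntry_eq]
    ext a b : 1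
    fin_cases a <;> fin_cases b <;> split_ifs <;> first | omega | (subst_vars; simp)
  rw [gen_of_lt hi hj, coaction_av_colIdx hρ, map_sum, Finset.sum_congr rfl fun l _ => hterm l,
    Fin.sum_univ_eq_sum_range fun l => (borelEntry k s l j).map fun c =>
      (c : kq k) • fockEntry (k := k) m i l]
  simp only [hsum, Finset.sum_add_distrib, Finset.sum_ite_eq, Finset.mem_range, if_pos hj,
    if_pos (show s < m by omega)]
  split_ifs <;> simp

end BorelRepresentation

section RaisingOperator

variable {k : Type} [Field k]

/-- The operator moving one unit of exponent from the position `t` to the position `p`. -/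
def hop (p t : ℕ ×ₗ ℕ) : Module.End (kq k) (Fock k) :=
  create p * qDiag (fun e => -e p) * annihilate t

theorem hop_single_of_eq_zero (p : ℕ ×ₗ ℕ) {t : ℕ ×ₗ ℕ} {e : Exponent} (h : e t = 0) (a : kq k) :
    hop p t (Finsupp.single e a) = 0 := by
  rw [hop, Module.End.mul_apply, annihilate_single_of_eq_zero h, map_zero]

theorem hop_single_add (p t : ℕ ×ₗ ℕ) (e : Exponent) (a : kq k) :
    hop p t (Finsupp.single (e + Finsupp.single t 1) a) = Finsupp.single (e + Finsupp.single p 1)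
      (a * annihilateCoeff k (e t + 1) * LaurentPolynomial.T (-e p)) := by
  rw [hop, Module.End.mul_apply, Module.End.mul_apply, annihilate_single_add, qDiag_single,
    create_single]

/-- The weight of the first `r` rows of the exponent `e` for the torus of the `SL₂` acting on the
columns `s`, `s + 1`. -/
def colWeight (s r : ℕ) (e : Exponent) : ℤ :=
  ∑ i ∈ Finset.range r, ((e (toLex (i, s + 1)) : ℤ) - e (toLex (i, s)))

theorem colWeight_add (s r : ℕ) (e e' : Exponent) :
    colWeight s r (e + e') = colWeight s r e + colWeight s r e' := by
  simp only [colWeight, Finsupp.add_apply, ← Finset.sum_add_distrib]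
  push_cast
  exact Finset.sum_congr rfl fun _ _ => by ring

theorem colWeight_single (s r i j b : ℕ) : colWeight s r (Finsupp.single (toLex (i, j)) b) =
    if i < r then b * columnSign s j else 0 := by
  have hterm (i' : ℕ) : ((Finsupp.single (toLex (i, j)) b (toLex (i', s + 1)) : ℕ) : ℤ) -
      (Finsupp.single (toLex (i, j)) b (toLex (i', s)) : ℕ) =
        if i = i' then b * columnSign s j else 0 := by
    simp only [Finsupp.single_apply, toLex_inj, Prod.mk.injEq, columnSign]
    split_ifs <;> omega
  simp only [colWeight, hterm, Finset.sum_ite_eq, Finset.mem_range]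

theorem colWeight_eq_zero {s r : ℕ} {e : Exponent} (he : ∀ p, (ofLex p).1 < r → e p = 0) :
    colWeight s r e = 0 :=
  Finset.sum_eq_zero fun i hi => by
    rw [he (toLex (i, s + 1)) (Finset.mem_range.mp hi), he (toLex (i, s)) (Finset.mem_range.mp hi),
      sub_self]

/-- The summand of `raise` that only moves exponents in the row `r`. -/
def raiseRow (s r : ℕ) : Module.End (kq k) (Fock k) :=
  qDiag (colWeight s r) * hop (toLex (r, s)) (toLex (r, s + 1))

/-- The action on monomials with `N` rows of the raising operator of the `SL₂` acting on the columns
`s`, `s + 1`. -/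
def raise (s N : ℕ) : Module.End (kq k) (Fock k) :=
  ∑ r ∈ Finset.range N, raiseRow s r

theorem raiseRow_single_of_eq_zero {s r : ℕ} {e : Exponent} (h : e (toLex (r, s + 1)) = 0)
    (a : kq k) : raiseRow s r (Finsupp.single e a) = 0 := by
  rw [raiseRow, Module.End.mul_apply, hop_single_of_eq_zero _ h, map_zero]

theorem raiseRow_single_add (s r : ℕ) (e : Exponent) (a : kq k) :
    raiseRow s r (Finsupp.single (e + Finsupp.single (toLex (r, s + 1)) 1) a) =
      Finsupp.single (e + Finsupp.single (toLex (r, s)) 1)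
        (a * annihilateCoeff k (e (toLex (r, s + 1)) + 1) *
          LaurentPolynomial.T (colWeight s r e - e (toLex (r, s)))) := by
  rw [raiseRow, Module.End.mul_apply, hop_single_add, qDiag_single, colWeight_add,
    colWeight_single, if_neg (lt_irrefl r), add_zero, mul_assoc, ← LaurentPolynomial.T_add,
    neg_add_eq_sub]

theorem toLex_lt_toLex_succ (i s : ℕ) : toLex (i, s) < toLex (i, s + 1) :=
  Prod.Lex.toLex_lt_toLex.mpr (Or.inr ⟨rfl, s.lt_succ_self⟩)

theorem annihilateCoeff_succ_eq_sq_mul_add (n : ℕ) :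
    annihilateCoeff k (n + 1) = qParam k ^ 2 * annihilateCoeff k n + (qParam k - qInv k) := by
  simp only [annihilateCoeff, qInv, qParam, mul_sub, LaurentPolynomial.T_pow,
    ← LaurentPolynomial.T_add]
  push_cast
  ring_nf

variable {m s i j : ℕ} {e : Exponent}

theorem raiseRow_single_add_self (hs : s + 1 < m) (he : ∀ p < toLex (i, s + 1), e p = 0) :
    raiseRow s i (Finsupp.single (e + Finsupp.single (toLex (i, s + 1)) 1) (1 : kq k)) =
      qParam k • fockEntry m i (s + 1) (raiseRow s i (Finsupp.single e 1)) +
        (qParam k - qInv k) • fockEntry m i s (Finsupp.single e 1) := by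
  have hrow : ∀ p, (ofLex p).1 < i → e p = 0 := fun p hp =>
    he p (Prod.Lex.lt_iff.mpr (Or.inl hp))
  have hcol : ∀ r < s + 1, e (toLex (i, r)) = 0 := fun r hr =>
    he _ (Prod.Lex.toLex_lt_toLex.mpr (Or.inr ⟨rfl, hr⟩))
  rw [raiseRow_single_add, colWeight_eq_zero hrow, hcol s s.lt_succ_self,
    fockEntry_single_of_forall_lt (by omega) fun p hp => he p (hp.trans (toLex_lt_toLex_succ i s))]
  rcases eq_zero_or_exists_eq_add_single e (toLex (i, s + 1)) with h | ⟨e, rfl⟩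
  · rw [raiseRow_single_of_eq_zero h, h]
    simp [annihilateCoeff, qParam, qInv]
  · simp only [Finsupp.add_apply, add_eq_zero] at hrow hcol
    rw [raiseRow_single_add, colWeight_eq_zero fun p hp => (hrow p hp).1,
      (hcol s s.lt_succ_self).1, fockEntry_single hs]
    · have hsum : ∑ r ∈ Finset.range (s + 1),
          ((e + Finsupp.single (toLex (i, s)) 1 : Exponent) (toLex (i, r)) : ℤ) = 1 := by
        rw [Finset.sum_range_succ, Finset.sum_eq_zero fun r hr => ?_]
        · simp [(hcol s s.lt_succ_self).1]
        · have hr := Finset.mem_range.mp hr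
          simp [(hcol r (by omega)).1, hr.ne]
      rw [hsum, add_right_comm e, Finsupp.smul_single, Finsupp.smul_single, ← Finsupp.single_add]
      simp only [Finsupp.add_apply, Finsupp.single_eq_same, annihilateCoeff_succ_eq_sq_mul_add,
        Nat.cast_zero, sub_zero, LaurentPolynomial.T_zero, smul_eq_mul, one_mul, mul_one]
      rw [← qParam]
      congr 1
      ring
    · intro p hp
      have hne : p ≠ toLex (i, s) := by
        rintro rfl
        exact hp.false
      rw [Finsupp.add_apply, (hrow p hp).1, Finsupp.single_eq_of_ne hne, add_zero]

theorem raiseRow_single_add_of_ne (hj : j < m) (he : ∀ p < toLex (i, j), e p = 0) {r : ℕ}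
    (hr : toLex (i, j) ≠ toLex (r, s + 1)) :
    raiseRow s r (Finsupp.single (e + Finsupp.single (toLex (i, j)) 1) (1 : kq k)) =
      (LaurentPolynomial.T (columnSign s j) : kq k) •
        fockEntry m i j (raiseRow s r (Finsupp.single e 1)) := by
  rcases eq_zero_or_exists_eq_add_single e (toLex (r, s + 1)) with h | ⟨e, rfl⟩
  · rw [raiseRow_single_of_eq_zero h, raiseRow_single_of_eq_zero, map_zero, smul_zero]
    rw [Finsupp.add_apply, h, Finsupp.single_eq_of_ne hr.symm, add_zero]
  · have hlt : toLex (i, j) < toLex (r, s + 1) := lt_of_le_of_ne (not_lt.mp fun h => by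
      simpa using he _ h) hr
    have hle : toLex (i, j) ≤ toLex (r, s) := by
      rw [Prod.Lex.toLex_lt_toLex] at hlt
      rw [Prod.Lex.toLex_le_toLex]
      omega
    simp only [Finsupp.add_apply, add_eq_zero] at he
    rw [raiseRow_single_add, add_right_comm, raiseRow_single_add, fockEntry_single_of_forall_lt hj,
      Finsupp.smul_single, add_right_comm e, Finsupp.add_apply, Finsupp.single_eq_of_ne hr.symm,
      add_zero, colWeight_add, colWeight_single, Finsupp.add_apply, smul_eq_mul, mul_left_comm,
      ← LaurentPolynomial.T_add]
    · congr 3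
      rw [Prod.Lex.toLex_le_toLex] at hle
      simp only [columnSign, Finsupp.single_apply, toLex_inj, Prod.mk.injEq]
      split_ifs <;> omega
    · intro p hp
      rw [Finsupp.add_apply, (he p hp).1, Finsupp.single_eq_of_ne (hp.trans_le hle).ne, add_zero]

theorem raise_single_add (hs : s + 1 < m) (hj : j < m) (he : ∀ p < toLex (i, j), e p = 0) {N : ℕ}
    (hi : i < N) :
    raise s N (Finsupp.single (e + Finsupp.single (toLex (i, j)) 1) (1 : kq k)) =
      (LaurentPolynomial.T (columnSign s j) : kq k) •
        fockEntry m i j (raise s N (Finsupp.single e 1)) +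
      (if j = s + 1 then (qParam k - qInv k) • fockEntry m i s else 0) (Finsupp.single e 1) := by
  have hterm (r : ℕ) :
      raiseRow s r (Finsupp.single (e + Finsupp.single (toLex (i, j)) 1) (1 : kq k)) =
        (LaurentPolynomial.T (columnSign s j) : kq k) •
          fockEntry m i j (raiseRow s r (Finsupp.single e 1)) +
        if i = r then (if j = s + 1 then (qParam k - qInv k) • fockEntry m i s else 0)
          (Finsupp.single e 1) else 0 := by
    by_cases h : toLex (i, j) = toLex (r, s + 1)
    · obtain ⟨rfl, rfl⟩ := Prod.mk.injEq .. ▸ toLex_inj.mp h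
      rw [if_pos rfl, if_pos rfl, raiseRow_single_add_self hs he]
      simp [columnSign, qParam]
    · rw [raiseRow_single_add_of_ne hj he h, left_eq_add]
      split_ifs with hir hjs
      · exact absurd (by rw [hir, hjs]) h
      · rfl
      · rfl
  simp only [raise, LinearMap.sum_apply, hterm, Finset.sum_add_distrib, Finset.sum_ite_eq,
    Finset.mem_range, if_pos hi, map_sum, Finset.smul_sum]

variable {n : ℕ} {ρ : QMat k m n →ₐ[kq k] QMat k m n ⊗[kq k] QSL k m 0}

theorem tensorRep_coaction_wordProd (hρ : rhoqProp k m n ρ) (hs : s + 1 < m)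
    {l : List (ℕ ×ₗ ℕ)} (hl : l.Pairwise (· ≤ ·)) (hbox : ∀ p ∈ l, p ∈ box m n) :
    ∃ a b d, tensorRep k n hs (ρ (wordProd (gen k m n) l)) = !![a, b; 0, d] ∧
      a (Finsupp.single 0 1) = qDiag (colWeight s (m + n))
        (Finsupp.single (Multiset.toFinsupp (l : Multiset (ℕ ×ₗ ℕ))) 1) ∧
      b (Finsupp.single 0 1) = raise s (m + n)
        (Finsupp.single (Multiset.toFinsupp (l : Multiset (ℕ ×ₗ ℕ))) 1) ∧
      d (Finsupp.single 0 1) = Finsupp.single (Multiset.toFinsupp (l : Multiset (ℕ ×ₗ ℕ))) 1 := by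
  induction l with
  | nil =>
    refine ⟨1, 0, 1, ?_, ?_, ?_, ?_⟩
    · simp [wordProd, Matrix.one_fin_two]
    · simp [colWeight]
    · simp [raise, raiseRow_single_of_eq_zero]
    · simp
  | cons p l ih =>
    obtain ⟨hp, hl⟩ := List.pairwise_cons.mp hl
    obtain ⟨hpbox, hbox⟩ := List.forall_mem_cons.mp hbox
    obtain ⟨a, b, d, hM, ha, hb, hd⟩ := ih hl hbox
    obtain ⟨⟨i, j⟩, rfl⟩ := toLex.surjective p
    obtain ⟨hi, hj⟩ : i < m + n ∧ j < m := hpbox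
    have hlow : ∀ p < toLex (i, j), Multiset.toFinsupp (l : Multiset (ℕ ×ₗ ℕ)) p = 0 :=
      fun p' hp' => toFinsupp_eq_zero_of_lt hp hp'
    have hgen := tensorRep_coaction_gen hρ hs hi hj
    rw [wordProd_cons, map_mul, map_mul, hM, toFinsupp_coe_cons]
    refine ⟨_, _, _, (congrArg (· * _) hgen).trans (by
      rw [Matrix.mul_fin_two, mul_zero, mul_zero, zero_mul, zero_mul, add_zero, add_zero,
        zero_add]),
      ?_, ?_, ?_⟩
    · rw [Module.End.mul_apply, ha, qDiag_single, qDiag_single, LinearMap.smul_apply,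
        fockEntry_single_of_forall_lt hj hlow, colWeight_add, colWeight_single, if_pos hi,
        Nat.cast_one, one_mul (columnSign s j), Finsupp.smul_single, smul_eq_mul, mul_left_comm,
        ← LaurentPolynomial.T_add, add_comm (columnSign s j)]
    · rw [raise_single_add hs hj hlow hi, LinearMap.add_apply, Module.End.mul_apply,
        Module.End.mul_apply, hb, hd, LinearMap.smul_apply]
    · rw [Module.End.mul_apply, hd, fockEntry_single_of_forall_lt hj hlow]

theorem tensorRep_coaction_apply (hρ : rhoqProp k m n ρ) (hs : s + 1 < m) (x : QMat k m n) :
    tensorRep k n hs (ρ x) 0 0 (Finsupp.single 0 1) =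
        qDiag (colWeight s (m + n)) (fockCoeff k m n x) ∧
      tensorRep k n hs (ρ x) 0 1 (Finsupp.single 0 1) = raise s (m + n) (fockCoeff k m n x) := by
  have hx : x ∈ Submodule.span (kq k) (wordProd (gen k m n) ''
      {l | l.Pairwise (· ≤ ·) ∧ ∀ p ∈ l, p ∈ box m n}) := by
    rw [span_sortedWords_eq_top]
    exact Submodule.mem_top
  induction hx using Submodule.span_induction with
  | mem x hx =>
    obtain ⟨l, ⟨hl, hbox⟩, rfl⟩ := hx
    obtain ⟨a, b, d, hM, ha, hb, -⟩ := tensorRep_coaction_wordProd hρ hs hl hbox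
    rw [fockCoeff_wordProd hl hbox, hM]
    exact ⟨ha, hb⟩
  | zero => simp
  | add x y _ _ hx hy =>
    simp only [map_add, Matrix.add_apply, LinearMap.add_apply, hx.1, hx.2, hy.1, hy.2, and_self]
  | smul c x _ hx =>
    simp only [map_smul, Matrix.smul_apply, LinearMap.smul_apply, hx.1, hx.2, and_self]

theorem qDiag_fockCoeff_of_coinvariant (hρ : rhoqProp k m n ρ) (hs : s + 1 < m) {x : QMat k m n}
    (hx : ρ x = x ⊗ₜ[kq k] 1) :
    qDiag (colWeight s (m + n)) (fockCoeff k m n x) = fockCoeff k m n x := by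
  rw [← (tensorRep_coaction_apply hρ hs x).1, hx, tensorRep_tmul_one]
  rfl

theorem raise_fockCoeff_of_coinvariant (hρ : rhoqProp k m n ρ) (hs : s + 1 < m) {x : QMat k m n}
    (hx : ρ x = x ⊗ₜ[kq k] 1) : raise s (m + n) (fockCoeff k m n x) = 0 := by
  rw [← (tensorRep_coaction_apply hρ hs x).2, hx, tensorRep_tmul_one]
  rfl

end RaisingOperator

section QuantumSl2

variable {k : Type} [Field k]

/-- The relations of `U_q(sl₂)`, normalized so that `E` lowers the weight, that is the exponent of
the eigenvalue of `K`, by `2`, and with one factor `q - q⁻¹` absorbed by each of `E` and `F`. -/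
structure IsUqSl2 (k : Type) [Field k] {A : Type*} [Ring A] [Algebra (kq k) A] (E F K K' : A) :
    Prop where
  mul_inv : K * K' = 1
  inv_mul : K' * K = 1
  mul_raise : K * E = (LaurentPolynomial.T (-2) : kq k) • (E * K)
  mul_lower : K * F = (LaurentPolynomial.T 2 : kq k) • (F * K)
  raise_mul_lower : E * F = F * E + (qParam k - qInv k) • (K' - K)

namespace IsUqSl2

section Coproduct

variable {A : Type*} [Ring A] [Algebra (kq k) A] {E F K K' e f l l' : A}

theorem inv_mul_raise (h : IsUqSl2 k E F K K') :
    K' * E = (LaurentPolynomial.T 2 : kq k) • (E * K') := by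
  have hT : (LaurentPolynomial.T 2 * LaurentPolynomial.T (-2) : kq k) = 1 := by
    rw [← LaurentPolynomial.T_add, add_neg_cancel, LaurentPolynomial.T_zero]
  calc K' * E = (1 : kq k) • (K' * (E * (K * K'))) := by rw [h.mul_inv, mul_one, one_smul]
    _ = (LaurentPolynomial.T 2 : kq k) •
          (K' * ((LaurentPolynomial.T (-2) : kq k) • (E * K)) * K') := by
        rw [← hT, mul_smul_comm, smul_mul_assoc, smul_smul]
        simp only [mul_assoc]
    _ = (LaurentPolynomial.T 2 : kq k) • (E * K') := by
        rw [← h.mul_raise, ← mul_assoc, h.inv_mul, one_mul]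

theorem comul (h : IsUqSl2 k E F K K') (h' : IsUqSl2 k e f l l')
    (hcomm : ∀ x ∈ ({E, F, K, K'} : Set A), ∀ y ∈ ({e, f, l, l'} : Set A), Commute x y) :
    IsUqSl2 k (E + K * e) (F * l' + f) (K * l) (K' * l') := by
  have hEf : Commute E f := hcomm _ (by simp) _ (by simp)
  have hEl : Commute E l := hcomm _ (by simp) _ (by simp)
  have hEl' : Commute E l' := hcomm _ (by simp) _ (by simp)
  have hFl : Commute F l := hcomm _ (by simp) _ (by simp)
  have hFe : Commute F e := hcomm _ (by simp) _ (by simp)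
  have hKe : Commute K e := hcomm _ (by simp) _ (by simp)
  have hKf : Commute K f := hcomm _ (by simp) _ (by simp)
  have hKl : Commute K l := hcomm _ (by simp) _ (by simp)
  have hKl' : Commute K l' := hcomm _ (by simp) _ (by simp)
  have hll' : Commute l l' := h'.mul_inv.trans h'.inv_mul.symm
  have hK'l : Commute K' l := hcomm _ (by simp) _ (by simp)
  constructor
  case mul_inv =>
    rw [mul_assoc, ← mul_assoc l, ← hK'l.eq, mul_assoc K', h'.mul_inv, mul_one, h.mul_inv]
  case inv_mul =>
    rw [mul_assoc, ← mul_assoc l', ← hKl'.eq, mul_assoc K, h'.inv_mul, mul_one, h.inv_mul]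
  case mul_raise =>
    rw [mul_add, add_mul, smul_add, mul_assoc, ← hEl.eq, ← mul_assoc, h.mul_raise, smul_mul_assoc,
      mul_assoc E, mul_assoc K l, ← mul_assoc l K, ← hKl.eq, mul_assoc K l e, h'.mul_raise,
      mul_smul_comm, mul_smul_comm, mul_assoc K e, ← mul_assoc e K, ← hKe.eq, mul_assoc K e]
  case mul_lower =>
    rw [mul_add, add_mul, smul_add, mul_assoc, ← mul_assoc l F, ← hFl.eq, mul_assoc F l, hll'.eq,
      ← mul_assoc, h.mul_lower, smul_mul_assoc, mul_assoc K l f, h'.mul_lower, mul_smul_comm,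
      mul_assoc F K, ← mul_assoc K l', hKl'.eq, ← mul_assoc K f, hKf.eq]
    simp only [mul_assoc]
  case raise_mul_lower =>
    have hcross : K * e * (F * l') = F * l' * (K * e) :=
      calc K * e * (F * l') = K * F * (e * l') := by
            rw [mul_assoc, ← mul_assoc e, ← hFe.eq, mul_assoc F, mul_assoc]
        _ = F * K * (l' * e) := by
            rw [h.mul_lower, h'.inv_mul_raise, smul_mul_assoc, mul_smul_comm]
        _ = F * l' * (K * e) := by
            rw [mul_assoc, ← mul_assoc K, hKl'.eq, mul_assoc l', ← mul_assoc]
    have hdiag : E * (F * l') = F * l' * E + (qParam k - qInv k) • (K' * l' - K * l') := by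
      rw [← mul_assoc, h.raise_mul_lower, add_mul, mul_assoc, hEl'.eq, smul_mul_assoc, sub_mul,
        mul_assoc]
    have hdiag' : K * e * f = f * (K * e) + (qParam k - qInv k) • (K * l' - K * l) := by
      rw [mul_assoc, h'.raise_mul_lower, mul_add, ← mul_assoc, hKf.eq, mul_smul_comm, mul_sub,
        mul_assoc]
    rw [add_mul, mul_add, mul_add, hdiag, hcross, hdiag', hEf.eq, add_mul, mul_add, mul_add,
      ← sub_add_sub_cancel (K' * l') (K * l') (K * l), smul_add]
    abel

end Coproduct

section Representation

variable {V : Type*} [AddCommGroup V] [Module (kq k) V] {E F K K' : Module.End (kq k) V} {v : V}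
  {w : ℤ}

theorem apply_raise (h : IsUqSl2 k E F K K') (hw : K v = (LaurentPolynomial.T w : kq k) • v) :
    K (E v) = (LaurentPolynomial.T (w - 2) : kq k) • E v := by
  rw [← Module.End.mul_apply, h.mul_raise, LinearMap.smul_apply, Module.End.mul_apply, hw,
    map_smul, smul_smul, ← LaurentPolynomial.T_add, neg_add_eq_sub]

theorem apply_lower (h : IsUqSl2 k E F K K') (hw : K v = (LaurentPolynomial.T w : kq k) • v) :
    K (F v) = (LaurentPolynomial.T (w + 2) : kq k) • F v := by
  rw [← Module.End.mul_apply, h.mul_lower, LinearMap.smul_apply, Module.End.mul_apply, hw,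
    map_smul, smul_smul, ← LaurentPolynomial.T_add, add_comm]

theorem raise_lower_apply (h : IsUqSl2 k E F K K')
    (hw : K v = (LaurentPolynomial.T w : kq k) • v) :
    E (F v) = F (E v) + ((qParam k - qInv k) *
      (LaurentPolynomial.T (-w) - LaurentPolynomial.T w)) • v := by
  have hinv : K' v = (LaurentPolynomial.T (-w) : kq k) • v := by
    rw [← one_smul (kq k) (K' v), ← LaurentPolynomial.T_zero, ← neg_add_cancel w,
      LaurentPolynomial.T_add, mul_smul, ← map_smul, ← hw, ← Module.End.mul_apply, h.inv_mul,
      Module.End.one_apply]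
  rw [← Module.End.mul_apply, h.raise_mul_lower, LinearMap.add_apply, LinearMap.smul_apply,
    LinearMap.sub_apply, hw, hinv, ← sub_smul, smul_smul, Module.End.mul_apply]

theorem raise_pow_succ_lower_apply (h : IsUqSl2 k E F K K')
    (hw : K v = (LaurentPolynomial.T w : kq k) • v) (r : ℕ) :
    (E ^ (r + 1)) (F v) = F ((E ^ (r + 1)) v) +
      (LaurentPolynomial.T (2 * r + 1 - w) + LaurentPolynomial.T (w - 2 * r - 1) -
        LaurentPolynomial.T (w + 1) - LaurentPolynomial.T (-w - 1) : kq k) • (E ^ r) v := by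
  have hpow (r : ℕ) : K ((E ^ r) v) = (LaurentPolynomial.T (w - 2 * r) : kq k) • (E ^ r) v := by
    induction r with
    | zero => simpa using hw
    | succ r ih =>
      rw [pow_succ', Module.End.mul_apply, h.apply_raise ih, sub_sub]
      push_cast
      rw [mul_add_one]
  induction r with
  | zero =>
    rw [zero_add, pow_one, h.raise_lower_apply hw, pow_zero, Module.End.one_apply]
    congr 2
    simp only [qParam, qInv, sub_mul, mul_sub, ← LaurentPolynomial.T_add]
    push_cast
    ring_nf
  | succ r ih =>
    rw [pow_succ' E (r + 1), Module.End.mul_apply, ih, map_add, map_smul,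
      h.raise_lower_apply (hpow (r + 1)), ← Module.End.mul_apply E, ← pow_succ',
      ← Module.End.mul_apply E, ← pow_succ', add_assoc, ← add_smul]
    congr 2
    simp only [qParam, qInv, sub_mul, mul_sub, ← LaurentPolynomial.T_add]
    push_cast
    ring_nf

theorem eq_zero_of_lower_eq_zero [Module.IsTorsionFree (kq k) V]
    (h : IsUqSl2 k E F K K') (hF : F v = 0)
    (hw : K v = (LaurentPolynomial.T w : kq k) • v) {r : ℕ} (hr : (E ^ r) v = 0) (hrw : r ≤ w) :
    v = 0 := by
  induction r with
  | zero => simpa using hr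
  | succ r ih =>
    have hcoeff : (LaurentPolynomial.T (2 * r + 1 - w) + LaurentPolynomial.T (w - 2 * r - 1) -
        LaurentPolynomial.T (w + 1) - LaurentPolynomial.T (-w - 1) : kq k) ≠ 0 := by
      intro hzero
      have hlead := congrArg (fun c => c.coeff (w + 1)) hzero
      have h₁ : 2 * (r : ℤ) + 1 - w ≠ w + 1 := by omega
      have h₂ : w - 2 * r - 1 ≠ w + 1 := by omega
      have h₃ : -w - 1 ≠ w + 1 := by omega
      simp [h₁, h₂, h₃] at hlead
    have hsmul := h.raise_pow_succ_lower_apply hw r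
    rw [hF, hr, map_zero, map_zero, zero_add, eq_comm, smul_eq_zero] at hsmul
    exact ih (hsmul.resolve_left hcoeff) (by omega)

theorem eq_zero_of_raise_pow_eq_zero [Module.IsTorsionFree (kq k) V]
    (h : IsUqSl2 k E F K K') {t : ℕ} (ht : (F ^ t) v = 0)
    (hw : K v = (LaurentPolynomial.T w : kq k) • v) {r : ℕ} (hr : (E ^ r) v = 0) (hrw : r ≤ w) :
    v = 0 := by
  induction t generalizing v w r with
  | zero => simpa using ht
  | succ t ih =>
    have hF : F v = 0 := ih ?_ (h.apply_lower hw) (r := r + 1) ?_ (by omega)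
    · exact h.eq_zero_of_lower_eq_zero hF hw hr hrw
    · rwa [← Module.End.mul_apply, ← pow_succ]
    · rw [h.raise_pow_succ_lower_apply hw, pow_succ', Module.End.mul_apply, hr, map_zero, map_zero,
        smul_zero, add_zero]

end Representation

end IsUqSl2

end QuantumSl2

section LoweringOperator

variable {k : Type} [Field k]

theorem qDiag_mul_qDiag (w w' : Exponent → ℤ) :
    (qDiag w * qDiag w' : Module.End (kq k) (Fock k)) = qDiag (w + w') := by
  refine fock_end_ext fun e => ?_
  rw [Module.End.mul_apply, qDiag_single, qDiag_single, qDiag_single, Pi.add_apply, mul_assoc,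
    ← LaurentPolynomial.T_add, add_comm]

theorem qDiag_zero : (qDiag 0 : Module.End (kq k) (Fock k)) = 1 :=
  fock_end_ext fun e => by simp

theorem qDiag_mul_hop {p t : ℕ ×ₗ ℕ} {w : Exponent → ℤ} {c : ℤ}
    (hw : ∀ e, w (e + Finsupp.single p 1) = w (e + Finsupp.single t 1) + c) :
    (qDiag w * hop p t : Module.End (kq k) (Fock k)) =
      (LaurentPolynomial.T c : kq k) • (hop p t * qDiag w) := by
  refine fock_end_ext fun e => ?_
  rcases eq_zero_or_exists_eq_add_single e t with h | ⟨e, rfl⟩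
  · simp [Module.End.mul_apply, hop_single_of_eq_zero p h]
  · simp only [LinearMap.smul_apply, Module.End.mul_apply, qDiag_single, hop_single_add, hw,
      LaurentPolynomial.T_add, Finsupp.smul_single, smul_eq_mul]
    congr 1
    ring

theorem annihilateCoeff_succ_mul_T (n : ℕ) : annihilateCoeff k (n + 1) * LaurentPolynomial.T (-n) =
    LaurentPolynomial.T (n + 1) - LaurentPolynomial.T (-n - 1) := by
  rw [annihilateCoeff, sub_mul, ← LaurentPolynomial.T_add, ← LaurentPolynomial.T_add]
  push_cast
  ring_nf

theorem hop_hop_single {p t : ℕ ×ₗ ℕ} (h : p ≠ t) (e : Exponent) (a : kq k) :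
    hop p t (hop t p (Finsupp.single e a)) = Finsupp.single e
      (a * ((LaurentPolynomial.T (e p) - LaurentPolynomial.T (-e p)) *
        (LaurentPolynomial.T (e t + 1) - LaurentPolynomial.T (-e t - 1)))) := by
  rcases eq_zero_or_exists_eq_add_single e p with hp | ⟨e, rfl⟩
  · simp [hop_single_of_eq_zero t hp, hp]
  · rw [hop_single_add, hop_single_add]
    simp only [Finsupp.add_apply, Finsupp.single_eq_same, Finsupp.single_eq_of_ne h.symm, add_zero]
    push_cast
    rw [neg_add', ← annihilateCoeff_succ_mul_T, ← annihilateCoeff_succ_mul_T]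
    congr 1
    ring

theorem isUqSl2_hop {p t : ℕ ×ₗ ℕ} (h : p ≠ t) :
    IsUqSl2 k (hop p t : Module.End (kq k) (Fock k)) (hop t p)
      (qDiag fun e => (e t : ℤ) - e p) (qDiag fun e => (e p : ℤ) - e t) where
  mul_inv := by
    rw [qDiag_mul_qDiag, ← qDiag_zero (k := k)]
    congr 1
    funext e
    simp
  inv_mul := by
    rw [qDiag_mul_qDiag, ← qDiag_zero (k := k)]
    congr 1
    funext e
    simp
  mul_raise := qDiag_mul_hop fun e => by
    simp only [Finsupp.add_apply, Finsupp.single_eq_same, Finsupp.single_eq_of_ne h,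
      Finsupp.single_eq_of_ne h.symm]
    push_cast
    ring
  mul_lower := qDiag_mul_hop fun e => by
    simp only [Finsupp.add_apply, Finsupp.single_eq_same, Finsupp.single_eq_of_ne h,
      Finsupp.single_eq_of_ne h.symm]
    push_cast
    ring
  raise_mul_lower := fock_end_ext fun e => by
    simp only [LinearMap.add_apply, LinearMap.smul_apply, LinearMap.sub_apply,
      Module.End.mul_apply, hop_hop_single h, hop_hop_single h.symm, qDiag_single,
      Finsupp.smul_single, ← Finsupp.single_sub, ← Finsupp.single_add, smul_eq_mul, one_mul,
      qParam, qInv]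
    congr 1
    simp only [sub_mul, mul_sub, ← LaurentPolynomial.T_add]
    ring_nf

/-- The operator opposite to `raise s n`. -/
def lower (s : ℕ) : ℕ → Module.End (kq k) (Fock k)
  | 0 => 0
  | n + 1 =>
    lower s n * qDiag (fun e => (e (toLex (n, s)) : ℤ) - e (toLex (n, s + 1))) +
      hop (toLex (n, s + 1)) (toLex (n, s))

theorem raise_succ (s n : ℕ) : (raise s (n + 1) : Module.End (kq k) (Fock k)) =
    raise s n + qDiag (colWeight s n) * hop (toLex (n, s)) (toLex (n, s + 1)) :=
  Finset.sum_range_succ _ _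

theorem colWeight_succ (s n : ℕ) : colWeight s (n + 1) =
    colWeight s n + fun e => (e (toLex (n, s + 1)) : ℤ) - e (toLex (n, s)) :=
  funext fun _ => Finset.sum_range_succ _ _

theorem neg_colWeight_succ (s n : ℕ) : -colWeight s (n + 1) =
    -colWeight s n + fun e => (e (toLex (n, s)) : ℤ) - e (toLex (n, s + 1)) := by
  funext e
  simp only [colWeight_succ, Pi.neg_apply, Pi.add_apply]
  ring

variable {S : Set (ℕ ×ₗ ℕ)} {p t : ℕ ×ₗ ℕ}

theorem qDiag_sub_mem_sitesAlg (hp : p ∈ S) (ht : t ∈ S) :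
    qDiag (fun e => (e p : ℤ) - e t) ∈ sitesAlg k S := by
  have h := mul_mem (siteOps_subset_sitesAlg hp (qDiag_mem_siteOps (k := k) p fun n => n))
    (siteOps_subset_sitesAlg ht (qDiag_mem_siteOps t fun n => -n))
  rwa [qDiag_mul_qDiag] at h

theorem hop_mem_sitesAlg (hp : p ∈ S) (ht : t ∈ S) : hop p t ∈ sitesAlg k S :=
  mul_mem (mul_mem (siteOps_subset_sitesAlg hp (create_mem_siteOps p))
    (siteOps_subset_sitesAlg hp (qDiag_mem_siteOps p fun n => -n)))
    (siteOps_subset_sitesAlg ht (annihilate_mem_siteOps t))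

variable {s n : ℕ}

theorem qDiag_colWeight_mem_sitesAlg (hS : ∀ i < n, toLex (i, s) ∈ S ∧ toLex (i, s + 1) ∈ S) :
    qDiag (colWeight s n) ∈ sitesAlg k S ∧ qDiag (-colWeight s n) ∈ sitesAlg k S := by
  induction n with
  | zero =>
    have h : colWeight s 0 = 0 := funext fun _ => Finset.sum_range_zero _
    rw [h, neg_zero, qDiag_zero]
    exact ⟨one_mem _, one_mem _⟩
  | succ n ih =>
    obtain ⟨hn, hn'⟩ := hS n n.lt_succ_self
    obtain ⟨h, h'⟩ := ih fun i hi => hS i (hi.trans n.lt_succ_self)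
    rw [neg_colWeight_succ, colWeight_succ, ← qDiag_mul_qDiag, ← qDiag_mul_qDiag]
    exact ⟨mul_mem h (qDiag_sub_mem_sitesAlg hn' hn), mul_mem h' (qDiag_sub_mem_sitesAlg hn hn')⟩

theorem raise_mem_sitesAlg (hS : ∀ i < n, toLex (i, s) ∈ S ∧ toLex (i, s + 1) ∈ S) :
    raise s n ∈ sitesAlg k S :=
  sum_mem fun r hr => by
    have hr := Finset.mem_range.mp hr
    exact mul_mem (qDiag_colWeight_mem_sitesAlg fun i hi => hS i (hi.trans hr)).1
      (hop_mem_sitesAlg (hS r hr).1 (hS r hr).2)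

theorem lower_mem_sitesAlg (hS : ∀ i < n, toLex (i, s) ∈ S ∧ toLex (i, s + 1) ∈ S) :
    lower s n ∈ sitesAlg k S := by
  induction n with
  | zero => exact zero_mem _
  | succ n ih =>
    obtain ⟨hn, hn'⟩ := hS n n.lt_succ_self
    exact add_mem (mul_mem (ih fun i hi => hS i (hi.trans n.lt_succ_self))
      (qDiag_sub_mem_sitesAlg hn hn')) (hop_mem_sitesAlg hn' hn)

/-- The positions in the rows before `n`. -/
def rowsBelow (n : ℕ) : Set (ℕ ×ₗ ℕ) :=
  {p | (ofLex p).1 < n}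

theorem isUqSl2_raise_lower (s n : ℕ) : IsUqSl2 k (raise s n : Module.End (kq k) (Fock k))
    (lower s n) (qDiag (colWeight s n)) (qDiag (-colWeight s n)) := by
  induction n with
  | zero =>
    have h : colWeight s 0 = 0 := funext fun _ => Finset.sum_range_zero _
    rw [show raise s 0 = 0 from Finset.sum_range_zero _, lower, h, neg_zero, qDiag_zero]
    constructor <;> simp
  | succ n ih =>
    have hrow : toLex (n, s) ≠ toLex (n, s + 1) := (toLex_lt_toLex_succ n s).ne
    have hbelow : ∀ i < n, toLex (i, s) ∈ rowsBelow n ∧ toLex (i, s + 1) ∈ rowsBelow n :=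
      fun i hi => ⟨hi, hi⟩
    have hdisj : Disjoint (rowsBelow n) {p | (ofLex p).1 = n} :=
      Set.disjoint_left.mpr fun p hp hp' => hp.ne hp'
    rw [raise_succ, lower, neg_colWeight_succ, colWeight_succ, ← qDiag_mul_qDiag,
      ← qDiag_mul_qDiag]
    refine ih.comul (isUqSl2_hop hrow) fun x hx y hy => commute_of_mem_sitesAlg hdisj ?_ ?_
    · rcases hx with rfl | rfl | rfl | rfl
      exacts [raise_mem_sitesAlg hbelow, lower_mem_sitesAlg hbelow,
        (qDiag_colWeight_mem_sitesAlg hbelow).1, (qDiag_colWeight_mem_sitesAlg hbelow).2]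
    · rcases hy with rfl | rfl | rfl | rfl
      exacts [hop_mem_sitesAlg rfl rfl, hop_mem_sitesAlg rfl rfl,
        qDiag_sub_mem_sitesAlg rfl rfl, qDiag_sub_mem_sitesAlg rfl rfl]

end LoweringOperator

section BallotCondition

variable {k : Type} [Field k]

theorem laurentPolynomial_T_injective :
    Function.Injective (LaurentPolynomial.T : ℤ → kq k) := fun m n h => by
  simpa only [LaurentPolynomial.degree_T, WithBot.coe_inj] using congrArg LaurentPolynomial.degree h

theorem annihilateCoeff_ne_zero {n : ℕ} (hn : n ≠ 0) : annihilateCoeff k n ≠ 0 :=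
  sub_ne_zero.mpr fun h => hn (by have := laurentPolynomial_T_injective h; omega)

theorem exists_apply_single_ne_zero {x : Module.End (kq k) (Fock k)} {v : Fock k} {e : Exponent}
    (h : x v e ≠ 0) : ∃ e', v e' ≠ 0 ∧ x (Finsupp.single e' 1) e ≠ 0 := by
  by_contra! hzero
  refine h ?_
  rw [← Finsupp.sum_single v, map_finsuppSum, Finsupp.sum, Finsupp.finsetSum_apply]
  refine Finset.sum_eq_zero fun e' he' => ?_
  rw [← mul_one (v e'), ← smul_eq_mul, ← Finsupp.smul_single, map_smul, Finsupp.smul_apply,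
    hzero e' (Finsupp.mem_support_iff.mp he'), smul_zero]

theorem pow_apply_eq_zero_of_degree_lt {x : Module.End (kq k) (Fock k)} {d : Exponent → ℕ}
    (hx : ∀ e e', x (Finsupp.single e 1) e' ≠ 0 → d e' < d e) {t : ℕ} {v : Fock k}
    (hv : ∀ e, v e ≠ 0 → d e < t) : (x ^ t) v = 0 := by
  induction t generalizing v with
  | zero => exact Finsupp.ext fun e => not_not.mp fun h => Nat.not_lt_zero _ (hv e h)
  | succ t ih =>
    rw [pow_succ, Module.End.mul_apply]
    refine ih fun e he => ?_
    obtain ⟨e', hve', hxe'⟩ := exists_apply_single_ne_zero he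
    exact Nat.lt_of_lt_of_le (hx e' e hxe') (Nat.lt_succ_iff.mp (hv e' hve'))

/-- The degree of a monomial in the variables in the first `n` rows of the column `s`. -/
def colDegree (s n : ℕ) (e : Exponent) : ℕ :=
  ∑ i ∈ Finset.range n, e (toLex (i, s))

theorem exists_eq_add_single_of_hop_apply_ne_zero {p t : ℕ ×ₗ ℕ} {v : Fock k} {e : Exponent}
    (h : hop p t v e ≠ 0) : ∃ f, v (f + Finsupp.single t 1) ≠ 0 ∧ e = f + Finsupp.single p 1 := by
  obtain ⟨e', hv, he'⟩ := exists_apply_single_ne_zero h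
  rcases eq_zero_or_exists_eq_add_single e' t with ht | ⟨f, rfl⟩
  · exact absurd (by rw [hop_single_of_eq_zero p ht, Finsupp.zero_apply]) he'
  · refine ⟨f, hv, ?_⟩
    by_contra hne
    exact he' (by rw [hop_single_add, Finsupp.single_eq_of_ne hne])

theorem colDegree_lt_of_lower_single_apply_ne_zero {s n : ℕ} {e e' : Exponent}
    (h : lower (k := k) s n (Finsupp.single e 1) e' ≠ 0) : colDegree s n e' < colDegree s n e := by
  induction n with
  | zero => exact absurd rfl h
  | succ n ih =>
    rw [colDegree, colDegree, Finset.sum_range_succ, Finset.sum_range_succ, ← colDegree,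
      ← colDegree]
    rw [lower, LinearMap.add_apply, Finsupp.add_apply] at h
    by_cases hhop : hop (k := k) (toLex (n, s + 1)) (toLex (n, s)) (Finsupp.single e 1) e' = 0
    · rw [hhop, add_zero, Module.End.mul_apply, qDiag_single, one_mul,
        ← mul_one (LaurentPolynomial.T _), ← smul_eq_mul, ← Finsupp.smul_single, map_smul,
        Finsupp.smul_apply] at h
      have hlower := right_ne_zero_of_smul h
      have hmem : lower (k := k) s n ∈ sitesAlg k (rowsBelow n) :=
        lower_mem_sitesAlg fun i hi => ⟨hi, hi⟩
      rw [eq_of_sitesAlg_single_apply_ne_zero hmem hlower (lt_irrefl n)]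
      exact Nat.add_lt_add_right (ih hlower) _
    · obtain ⟨f, hf, rfl⟩ := exists_eq_add_single_of_hop_apply_ne_zero hhop
      rw [← (Finsupp.single_apply_ne_zero.mp hf).1]
      refine Nat.add_lt_add_of_le_of_lt (Finset.sum_le_sum fun i _ => ?_) ?_
      · simp [Finsupp.single_apply]
      · simp

open Classical in
/-- The projection onto the span of the monomials that agree with `f` on `S`. -/
def restrictTo (S : Set (ℕ ×ₗ ℕ)) (f : Exponent) : Module.End (kq k) (Fock k) :=
  weightedShift (fun e => if Set.EqOn e f S then 1 else 0) id

theorem restrictTo_apply_of_eqOn {S : Set (ℕ ×ₗ ℕ)} {e f : Exponent} (h : Set.EqOn e f S)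
    (v : Fock k) : restrictTo S f v e = v e := by
  rw [restrictTo, weightedShift_id_apply, if_pos h, one_mul]

theorem restrictTo_apply_ne_zero {S : Set (ℕ ×ₗ ℕ)} {e f : Exponent} {v : Fock k}
    (h : restrictTo S f v e ≠ 0) : Set.EqOn e f S ∧ v e ≠ 0 := by
  rw [restrictTo, weightedShift_id_apply] at h
  exact ⟨not_not.mp fun hne => h (by rw [if_neg hne, zero_mul]), right_ne_zero_of_mul h⟩

theorem commute_restrictTo {S S' : Set (ℕ ×ₗ ℕ)} (hS : Disjoint S S') (f : Exponent)
    {x : Module.End (kq k) (Fock k)} (hx : x ∈ sitesAlg k S') : Commute (restrictTo S f) x := by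
  refine commute_weightedShift_id (fun p hp e n => ?_) hx
  have h : Set.EqOn (e.update p n) e S := fun p' hp' => by
    rw [Finsupp.coe_update, Function.update_of_ne (hS.ne_of_mem hp' hp)]
  have hiff : Set.EqOn (e.update p n) f S ↔ Set.EqOn e f S := ⟨h.symm.trans, h.trans⟩
  split_ifs <;> tauto

theorem raiseRow_apply_add_single (s r : ℕ) (e : Exponent) : ∃ c : kq k, c ≠ 0 ∧ ∀ v : Fock k,
    raiseRow s r v (e + Finsupp.single (toLex (r, s)) 1) =
      c * v (e + Finsupp.single (toLex (r, s + 1)) 1) := by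
  refine ⟨annihilateCoeff k (e (toLex (r, s + 1)) + 1) *
    LaurentPolynomial.T (colWeight s r e - e (toLex (r, s))),
    mul_ne_zero (annihilateCoeff_ne_zero (Nat.succ_ne_zero _))
      (LaurentPolynomial.isUnit_T _).ne_zero, fun v => ?_⟩
  induction v using Finsupp.induction_linear with
  | zero => rw [map_zero, Finsupp.zero_apply, Finsupp.zero_apply, mul_zero]
  | add v w hv hw => rw [LinearMap.map_add, Finsupp.add_apply, hv, hw, Finsupp.add_apply, mul_add]
  | single f a =>
    rcases eq_zero_or_exists_eq_add_single f (toLex (r, s + 1)) with hf | ⟨f, rfl⟩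
    · rw [raiseRow_single_of_eq_zero hf, Finsupp.single_eq_of_ne, Finsupp.zero_apply, mul_zero]
      rintro rfl
      simp at hf
    · simp only [raiseRow_single_add, Finsupp.single_apply, add_left_inj]
      split_ifs with h
      · rw [h]
        ring
      · rw [mul_zero]

theorem raiseRow_pow_apply_add_single (s r b : ℕ) (e : Exponent) :
    ∃ c : kq k, c ≠ 0 ∧ ∀ v : Fock k,
      (raiseRow s r ^ b) v (e + Finsupp.single (toLex (r, s)) b) =
        c * v (e + Finsupp.single (toLex (r, s + 1)) b) := by
  induction b generalizing e with
  | zero => exact ⟨1, one_ne_zero, fun v => by simp⟩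
  | succ b ih =>
    obtain ⟨c, hc, hpow⟩ := ih (e + Finsupp.single (toLex (r, s)) 1)
    obtain ⟨c', hc', hrow⟩ :=
      raiseRow_apply_add_single (k := k) s r (e + Finsupp.single (toLex (r, s + 1)) b)
    refine ⟨c * c', mul_ne_zero hc hc', fun v => ?_⟩
    rw [pow_succ, Module.End.mul_apply, add_comm b, Finsupp.single_add, ← add_assoc, hpow,
      add_right_comm, hrow, mul_assoc, Finsupp.single_add, ← add_assoc, add_right_comm]

theorem exists_eq_add_single_of_raiseRow_apply_ne_zero {s r : ℕ} {v : Fock k} {e : Exponent}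
    (h : raiseRow s r v e ≠ 0) : ∃ f, v (f + Finsupp.single (toLex (r, s + 1)) 1) ≠ 0 ∧
      e = f + Finsupp.single (toLex (r, s)) 1 := by
  rw [raiseRow, Module.End.mul_apply, qDiag, weightedShift_id_apply] at h
  exact exists_eq_add_single_of_hop_apply_ne_zero (right_ne_zero_of_mul h)

theorem raise_mul_raiseRow (s r : ℕ) : (raise s r * raiseRow s r : Module.End (kq k) (Fock k)) =
    (LaurentPolynomial.T 2 : kq k) • (raiseRow s r * raise s r) := by
  have hdisj : Disjoint (rowsBelow r) {p | (ofLex p).1 = r} :=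
    Set.disjoint_left.mpr fun p hp hp' => hp.ne hp'
  have hcomm : Commute (raise s r : Module.End (kq k) (Fock k))
      (hop (toLex (r, s)) (toLex (r, s + 1))) :=
    commute_of_mem_sitesAlg hdisj (raise_mem_sitesAlg fun i hi => ⟨hi, hi⟩)
      (hop_mem_sitesAlg rfl rfl)
  rw [raiseRow, mul_assoc, ← hcomm.eq, ← mul_assoc, ← mul_assoc, ← smul_mul_assoc,
    (isUqSl2_raise_lower s r).mul_raise, smul_smul, ← LaurentPolynomial.T_add]
  simp

theorem exists_pow_apply_eq_smul_of_apply_eq_neg {R V : Type*} [CommRing R] [AddCommGroup V]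
    [Module R V] {x y : Module.End R V} {c : R} (hc : IsUnit c) (hxy : x * y = c • (y * x)) {v : V}
    (hv : x v = -y v) (j : ℕ) : ∃ a : R, IsUnit a ∧ (x ^ j) v = a • (y ^ j) v := by
  have hpow (j : ℕ) : x * y ^ j = c ^ j • (y ^ j * x) := by
    induction j with
    | zero => simp
    | succ j ih =>
      rw [pow_succ, ← mul_assoc, ih, smul_mul_assoc, mul_assoc, hxy, mul_smul_comm, smul_smul,
        ← pow_succ, mul_assoc]
  induction j with
  | zero => exact ⟨1, isUnit_one, by simp⟩
  | succ j ih =>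
    obtain ⟨a, ha, hj⟩ := ih
    refine ⟨-(a * c ^ j), (ha.mul (hc.pow j)).neg, ?_⟩
    rw [pow_succ', Module.End.mul_apply, hj, map_smul, ← Module.End.mul_apply, hpow,
      LinearMap.smul_apply, Module.End.mul_apply, hv, map_neg, smul_neg, smul_neg, neg_smul,
      mul_smul, pow_succ, Module.End.mul_apply]

variable {s N K : ℕ} {v : Fock k} {e₀ : Exponent}

theorem restrictTo_raiseRow_eq_zero (hmax : ∀ e, v e ≠ 0 → toColex e ≤ toColex e₀) {r : ℕ}
    {p : ℕ ×ₗ ℕ} (hp : p < toLex (r, s)) : restrictTo (Set.Ioi p) e₀ (raiseRow s r v) = 0 := by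
  ext1 e
  by_contra he
  obtain ⟨heq, he⟩ := restrictTo_apply_ne_zero he
  obtain ⟨f, hf, rfl⟩ := exists_eq_add_single_of_raiseRow_apply_ne_zero he
  have hs := toLex_lt_toLex_succ r s
  refine (hmax _ hf).not_gt (Finsupp.Colex.lt_iff.mpr ⟨toLex (r, s + 1), fun t ht => ?_, ?_⟩)
  · have ht' := heq (hp.trans (hs.trans ht))
    simpa [Finsupp.single_eq_of_ne ht.ne', Finsupp.single_eq_of_ne (hs.trans ht).ne'] using ht'.symm
  · have ht' := heq (hp.trans hs)
    simp only [Finsupp.add_apply, Finsupp.single_eq_of_ne hs.ne', add_zero] at ht'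
    simp [← ht']

theorem raise_restrictTo_eq_zero (hmax : ∀ e, v e ≠ 0 → toColex e ≤ toColex e₀) (hK : K < N)
    (hv : raise s N v = 0) :
    raise s (K + 1) (restrictTo (Set.Ioi (toLex (K, s + 1))) e₀ v) = 0 := by
  have hcomm : Commute (restrictTo (Set.Ioi (toLex (K, s + 1))) e₀) (raise (k := k) s (K + 1)) :=
    commute_restrictTo (Set.Iic_disjoint_Ioi le_rfl).symm e₀ <| raise_mem_sitesAlg fun i hi => by
      simp only [Set.mem_Iic, Prod.Lex.toLex_le_toLex]
      omega
  have hsplit := Finset.sum_range_add_sum_Ico (raiseRow (k := k) s) (Nat.succ_le_of_lt hK)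
  rw [← Module.End.mul_apply, ← hcomm.eq, Module.End.mul_apply]
  calc restrictTo (Set.Ioi (toLex (K, s + 1))) e₀ (raise s (K + 1) v)
      = restrictTo (Set.Ioi (toLex (K, s + 1))) e₀ (raise s N v) := by
        rw [raise, raise, ← hsplit, LinearMap.add_apply, map_add, left_eq_add,
          LinearMap.sum_apply, map_sum]
        exact Finset.sum_eq_zero fun r hr => restrictTo_raiseRow_eq_zero hmax
          (Prod.Lex.toLex_lt_toLex.mpr (Or.inl (Finset.mem_Ico.mp hr).1))
    _ = 0 := by rw [hv, map_zero]

end BallotCondition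

section MaximalExponent

variable {k : Type} [Field k] {s N K : ℕ} {v : Fock k} {e₀ : Exponent}

theorem exists_raise_pow_restrictTo_eq_smul (hmax : ∀ e, v e ≠ 0 → toColex e ≤ toColex e₀)
    (hK : K < N) (hv : raise s N v = 0) (j : ℕ) : ∃ a : kq k, IsUnit a ∧
      (raise s K ^ j) (restrictTo (Set.Ioi (toLex (K, s + 1))) e₀ v) =
        a • (raiseRow s K ^ j) (restrictTo (Set.Ioi (toLex (K, s + 1))) e₀ v) := by
  refine exists_pow_apply_eq_smul_of_apply_eq_neg (LaurentPolynomial.isUnit_T 2)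
    (raise_mul_raiseRow s K) (eq_neg_of_add_eq_zero_left ?_) j
  rw [← LinearMap.add_apply, ← raise_restrictTo_eq_zero hmax hK hv, raise_succ]
  rfl

theorem raiseRow_pow_restrictTo_eq_zero (hmax : ∀ e, v e ≠ 0 → toColex e ≤ toColex e₀) :
    (raiseRow s K ^ (e₀ (toLex (K, s + 1)) + 1))
      (restrictTo (Set.Ioi (toLex (K, s + 1))) e₀ v) = 0 := by
  refine pow_apply_eq_zero_of_degree_lt (d := fun e => e (toLex (K, s + 1)))
    (fun e e' h => ?_) fun e he => ?_
  · obtain ⟨f, hf, rfl⟩ := exists_eq_add_single_of_raiseRow_apply_ne_zero h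
    rw [← (Finsupp.single_apply_ne_zero.mp hf).1]
    simp [(toLex_lt_toLex_succ K s).ne']
  · obtain ⟨heq, he⟩ := restrictTo_apply_ne_zero he
    by_contra hlt
    refine (hmax e he).not_gt (Finsupp.Colex.lt_iff.mpr ⟨toLex (K, s + 1), fun t ht => ?_, ?_⟩)
    · exact (heq ht).symm
    · exact Nat.lt_of_succ_le (not_lt.mp hlt)

theorem colWeight_sub_colWeight_of_eqOn (hKN : K ≤ N) {e f : Exponent}
    (h : Set.EqOn e f (rowsBelow K)ᶜ) :
    colWeight s N e - colWeight s K e = colWeight s N f - colWeight s K f := by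
  simp only [colWeight, ← Finset.sum_Ico_eq_sub _ hKN]
  refine Finset.sum_congr rfl fun i hi => ?_
  have hi : ¬i < K := (Finset.mem_Ico.mp hi).1.not_gt
  rw [h hi, h hi]

theorem commute_restrictTo_raise_pow (s K r : ℕ) (f : Exponent) :
    Commute (restrictTo (rowsBelow K)ᶜ f) (raise (k := k) s K ^ r) :=
  (commute_restrictTo disjoint_compl_left f
    (raise_mem_sitesAlg fun _ hi => ⟨hi, hi⟩)).pow_right r

theorem eq_zero_of_raise_pow_restrictTo_eq_zero {f : Exponent} {r : ℕ} {w : ℤ}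
    (hw : ∀ e, v e ≠ 0 → Set.EqOn e f (rowsBelow K)ᶜ → colWeight s K e = w)
    (hv : (raise s K ^ r) v = 0) (hr : r ≤ w) : restrictTo (rowsBelow K)ᶜ f v = 0 := by
  refine (isUqSl2_raise_lower s K).eq_zero_of_raise_pow_eq_zero (w := w)
    (t := (restrictTo (rowsBelow K)ᶜ f v).support.sup (colDegree s K) + 1) ?_ ?_ ?_ hr
  · refine pow_apply_eq_zero_of_degree_lt (fun _ _ => colDegree_lt_of_lower_single_apply_ne_zero)
      fun e he => Nat.lt_succ_of_le ?_
    exact Finset.le_sup (f := colDegree s K) (Finsupp.mem_support_iff.mpr he)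
  · ext1 e
    rw [qDiag, weightedShift_id_apply, Finsupp.smul_apply, smul_eq_mul]
    by_cases he : restrictTo (rowsBelow K)ᶜ f v e = 0
    · rw [he, mul_zero, mul_zero]
    · obtain ⟨heq, he⟩ := restrictTo_apply_ne_zero he
      rw [hw e he heq]
  · rw [← Module.End.mul_apply, ← (commute_restrictTo_raise_pow s K r f).eq, Module.End.mul_apply,
      hv, map_zero]

theorem colWeight_add_apply_le_zero_of_raise_eq_zero (hK : K < N) (hv : raise s N v = 0)
    (hw : ∀ e, v e ≠ 0 → colWeight s N e = 0) (he₀ : v e₀ ≠ 0)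
    (hmax : ∀ e, v e ≠ 0 → toColex e ≤ toColex e₀) :
    colWeight s K e₀ + e₀ (toLex (K, s + 1)) ≤ 0 := by
  by_contra! hpos
  set p := toLex (K, s + 1)
  set b := e₀ p
  set u := restrictTo (Set.Ioi p) e₀ v
  obtain ⟨e₁, he₁⟩ : ∃ e₁, e₁ + Finsupp.single p b = e₀ := ⟨_, Finsupp.erase_add_single p e₀⟩
  set f : Exponent := e₁ + Finsupp.single (toLex (K, s)) b
  have hf (r : ℕ) : colWeight s r f = colWeight s r e₀ - if K < r then 2 * b else 0 := by
    rw [← he₁, colWeight_add, colWeight_add, colWeight_single, colWeight_single]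
    simp only [columnSign]
    split_ifs <;> omega
  have hzero : (raise s K ^ (b + 1)) u = 0 := by
    obtain ⟨a, -, ha⟩ := exists_raise_pow_restrictTo_eq_smul hmax hK hv (b + 1)
    rw [ha, raiseRow_pow_restrictTo_eq_zero hmax, smul_zero]
  have hne : (raise s K ^ b) u f ≠ 0 := by
    obtain ⟨a, ha, hau⟩ := exists_raise_pow_restrictTo_eq_smul hmax hK hv b
    obtain ⟨c, hc, hcu⟩ := raiseRow_pow_apply_add_single (k := k) s K b e₁
    rw [hau, Finsupp.smul_apply, hcu, he₁, restrictTo_apply_of_eqOn (Set.eqOn_refl _ _)]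
    exact smul_ne_zero ha.ne_zero (mul_ne_zero hc he₀)
  have hweight (e : Exponent) (he : u e ≠ 0) (heq : Set.EqOn e f (rowsBelow K)ᶜ) :
      colWeight s K e = colWeight s K e₀ + 2 * b := by
    have hef := colWeight_sub_colWeight_of_eqOn (s := s) hK.le heq
    rw [hw e (restrictTo_apply_ne_zero he).2, hf, hf, hw e₀ he₀, if_pos hK,
      if_neg (lt_irrefl K)] at hef
    omega
  have hrestrict : restrictTo (rowsBelow K)ᶜ f u = 0 :=
    eq_zero_of_raise_pow_restrictTo_eq_zero hweight hzero (by push_cast; omega)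
  refine hne ?_
  rw [← restrictTo_apply_of_eqOn (Set.eqOn_refl f (rowsBelow K)ᶜ), ← Module.End.mul_apply,
    (commute_restrictTo_raise_pow s K b f).eq, Module.End.mul_apply, hrestrict, map_zero,
    Finsupp.zero_apply]

end MaximalExponent

section Ballot

/-- The exponents of rectangular semistandard tableaux with `m` rows, where `e (i, j)` is the number
of entries `i` in the row `j`: the column of the matrix indexes the row of the tableau. -/
structure IsBallot (m n : ℕ) (e : Exponent) : Prop where
  mem_box : ∀ p, e p ≠ 0 → p ∈ box m n
  colWeight_eq_zero : ∀ s, s + 1 < m → colWeight s (m + n) e = 0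
  colWeight_add_le_zero : ∀ s K, s + 1 < m → K < m + n →
    colWeight s K e + e (toLex (K, s + 1)) ≤ 0

variable {k : Type} [Field k] {m n : ℕ}

theorem isBallot_of_coinvariant {ρ : QMat k m n →ₐ[kq k] QMat k m n ⊗[kq k] QSL k m 0}
    (hρ : rhoqProp k m n ρ) {x : QMat k m n} (hx : ρ x = x ⊗ₜ[kq k] 1) {e₀ : Exponent}
    (he₀ : fockCoeff k m n x e₀ ≠ 0)
    (hmax : ∀ e, fockCoeff k m n x e ≠ 0 → toColex e ≤ toColex e₀) : IsBallot m n e₀ := by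
  have hweight (s : ℕ) (hs : s + 1 < m) (e : Exponent) (he : fockCoeff k m n x e ≠ 0) :
      colWeight s (m + n) e = 0 := by
    have h := DFunLike.congr_fun (qDiag_fockCoeff_of_coinvariant hρ hs hx) e
    rw [qDiag, weightedShift_id_apply, mul_eq_right₀ he, ← LaurentPolynomial.T_zero] at h
    exact laurentPolynomial_T_injective h
  refine ⟨?_, fun s hs => hweight s hs e₀ he₀, fun s K hs hK => ?_⟩
  · exact (Finsupp.mem_supported _ _).mp (fockCoeff_mem_supported x)
      (Finsupp.mem_support_iff.mpr he₀)
  · exact colWeight_add_apply_le_zero_of_raise_eq_zero hK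
      (raise_fockCoeff_of_coinvariant hρ hs hx) (hweight s hs) he₀ hmax

/-- The exponent of the monomial of the permutation `σ` in the minor with the rows `r`. -/
def minorExponent (r : Fin m → ℕ) (σ : Equiv.Perm (Fin m)) : Exponent :=
  ∑ t, Finsupp.single (toLex (r t, (σ t : ℕ))) 1

theorem minorExponent_one_apply (r : Fin m → ℕ) (i : ℕ) (t : Fin m) :
    minorExponent r 1 (toLex (i, (t : ℕ))) = if r t = i then 1 else 0 := by
  rw [minorExponent, Finsupp.finsetSum_apply, Finset.sum_eq_single t]
  · simp [Finsupp.single_apply]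
  · intro t' _ ht'
    exact Finsupp.single_eq_of_ne fun h => ht' (Fin.ext (congrArg (fun p => (ofLex p).2) h).symm)
  · exact fun h => absurd (Finset.mem_univ t) h

theorem colWeight_minorExponent_one (r : Fin m → ℕ) {s : ℕ} (hs : s + 1 < m) (K : ℕ) :
    colWeight s K (minorExponent r 1) = (if r ⟨s + 1, hs⟩ < K then 1 else 0) -
      if r ⟨s, s.lt_succ_self.trans hs⟩ < K then 1 else 0 := by
  have hterm (i : ℕ) := minorExponent_one_apply r i ⟨s, s.lt_succ_self.trans hs⟩
  have hterm' (i : ℕ) := minorExponent_one_apply r i ⟨s + 1, hs⟩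
  simp only at hterm hterm'
  simp [colWeight, hterm, hterm']

theorem colWeight_eq_colDegree_sub (s K : ℕ) (e : Exponent) :
    colWeight s K e = colDegree (s + 1) K e - colDegree s K e := by
  simp only [colWeight, colDegree, Finset.sum_sub_distrib, Nat.cast_sum]

namespace IsBallot

variable {e : Exponent}

theorem colDegree_eq (he : IsBallot m n e) {j : ℕ} (hj : j < m) :
    colDegree j (m + n) e = colDegree 0 (m + n) e := by
  induction j with
  | zero => rfl
  | succ j ih =>
    have h := he.colWeight_eq_zero j hj
    rw [colWeight_eq_colDegree_sub, ih (j.lt_succ_self.trans hj)] at h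
    omega

theorem exists_apply_ne_zero (he : IsBallot m n e) (hne : e ≠ 0) {j : ℕ} (hj : j < m) :
    ∃ i < m + n, e (toLex (i, j)) ≠ 0 := by
  obtain ⟨p, hp⟩ := DFunLike.ne_iff.mp hne
  obtain ⟨⟨i, j'⟩, rfl⟩ := toLex.surjective p
  obtain ⟨hi, hj'⟩ : i < m + n ∧ j' < m := he.mem_box _ hp
  have hsum : colDegree j (m + n) e ≠ 0 := by
    rw [he.colDegree_eq hj, ← he.colDegree_eq hj']
    exact fun h => hp (Finset.sum_eq_zero_iff.mp h i (Finset.mem_range.mpr hi))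
  obtain ⟨i, hi, hij⟩ := Finset.exists_ne_zero_of_sum_ne_zero hsum
  exact ⟨i, Finset.mem_range.mp hi, hij⟩

theorem exists_first_rows (he : IsBallot m n e) (hne : e ≠ 0) : ∃ r : Fin m → ℕ,
    (∀ t, r t < m + n) ∧ (∀ t : Fin m, e (toLex (r t, (t : ℕ))) ≠ 0) ∧
      ∀ t : Fin m, ∀ i < r t, e (toLex (i, (t : ℕ))) = 0 := by
  have h (t : Fin m) : ∃ i, e (toLex (i, (t : ℕ))) ≠ 0 :=
    (he.exists_apply_ne_zero hne t.2).imp fun _ => And.right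
  refine ⟨fun t => Nat.find (h t), fun t => ?_, fun t => Nat.find_spec (h t), fun t i hi =>
    not_not.mp (Nat.find_min (h t) hi)⟩
  exact (he.mem_box _ (Nat.find_spec (h t))).1

variable {r : Fin m → ℕ}

theorem strictMono_first_rows (he : IsBallot m n e) (hlt : ∀ t, r t < m + n)
    (hr : ∀ t : Fin m, e (toLex (r t, (t : ℕ))) ≠ 0)
    (hr' : ∀ t : Fin m, ∀ i < r t, e (toLex (i, (t : ℕ))) = 0) : StrictMono r := by
  cases m with
  | zero => exact fun t => t.elim0
  | succ m =>
    refine Fin.strictMono_iff_lt_succ.mpr fun t => ?_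
    by_contra! hle
    have hballot := he.colWeight_add_le_zero t _ (Nat.succ_lt_succ t.2) (hlt t.succ)
    have hzero : colWeight t (r t.succ) e = 0 := Finset.sum_eq_zero fun i hi => by
      have hi := Finset.mem_range.mp hi
      rw [← Fin.val_succ, hr' t.succ i hi, ← Fin.val_castSucc, hr' _ i (hi.trans_le hle), sub_self]
    have := hr t.succ
    rw [Fin.val_succ] at this
    omega

theorem minorExponent_le (hr : ∀ t : Fin m, e (toLex (r t, (t : ℕ))) ≠ 0) :
    minorExponent r 1 ≤ e := by
  intro p
  obtain ⟨⟨i, j⟩, rfl⟩ := toLex.surjective p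
  by_cases hj : j < m
  · rw [minorExponent_one_apply r i ⟨j, hj⟩]
    split_ifs with h
    · exact h ▸ Nat.one_le_iff_ne_zero.mpr (hr ⟨j, hj⟩)
    · exact Nat.zero_le _
  · rw [minorExponent, Finsupp.finsetSum_apply, Finset.sum_eq_zero fun t _ => ?_]
    · exact Nat.zero_le _
    · refine Finsupp.single_eq_of_ne fun h => hj ?_
      obtain ⟨-, rfl⟩ := Prod.mk.injEq .. ▸ toLex_inj.mp h
      exact t.2

theorem of_add_minorExponent (he : IsBallot m n (e + minorExponent r 1)) (hlt : ∀ t, r t < m + n)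
    (hr : StrictMono r)
    (hr' : ∀ t : Fin m, ∀ i < r t, (e + minorExponent r 1) (toLex (i, (t : ℕ))) = 0) :
    IsBallot m n e where
  mem_box p hp := he.mem_box p (by rw [Finsupp.add_apply]; omega)
  colWeight_eq_zero s hs := by
    have h := he.colWeight_eq_zero s hs
    rwa [colWeight_add, colWeight_minorExponent_one r hs, if_pos (hlt _), if_pos (hlt _), sub_self,
      add_zero] at h
  colWeight_add_le_zero s K hs hK := by
    rcases lt_or_ge K (r ⟨s + 1, hs⟩) with hK' | hK'
    · have hzero (i : ℕ) (hi : i ≤ K) : e (toLex (i, s + 1)) = 0 :=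
        (add_eq_zero.mp (hr' ⟨s + 1, hs⟩ i (hi.trans_lt hK'))).1
      rw [hzero K le_rfl, Nat.cast_zero, add_zero]
      refine Finset.sum_nonpos fun i hi => ?_
      rw [hzero i (Finset.mem_range.mp hi).le]
      omega
    · have h := he.colWeight_add_le_zero s K hs hK
      have hmono : r ⟨s, s.lt_succ_self.trans hs⟩ < r ⟨s + 1, hs⟩ := hr s.lt_succ_self
      have happly := minorExponent_one_apply r K ⟨s + 1, hs⟩
      simp only at happly
      rw [colWeight_add, colWeight_minorExponent_one r hs, Finsupp.add_apply, happly] at h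
      split_ifs at h <;> push_cast at h <;> omega

end IsBallot

end Ballot

section LeadingMinors

theorem toColex_minorExponent_lt {m : ℕ} {r : Fin m → ℕ} (hr : StrictMono r)
    {σ : Equiv.Perm (Fin m)} (hσ : σ ≠ 1) :
    toColex (minorExponent r σ) < toColex (minorExponent r 1) := by
  obtain ⟨t, ht, hfix⟩ := exists_apply_lt_of_ne_one hσ
  have hlower {u : Fin m} {j : ℕ} (hu : u < t ∨ u = t ∧ j < t) {p : ℕ ×ₗ ℕ}
      (hp : toLex (r t, (t : ℕ)) ≤ p) : Finsupp.single (toLex (r u, j)) 1 p = 0 :=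
    Finsupp.single_eq_of_ne (ne_of_gt (lt_of_lt_of_le
      (Prod.Lex.toLex_lt_toLex.mpr (hu.imp (fun h => hr h) fun h => ⟨congrArg r h.1, h.2⟩)) hp))
  refine Finsupp.Colex.lt_iff.mpr ⟨toLex (r t, (t : ℕ)), fun p hp => ?_, ?_⟩
  · rw [ofColex_toColex, ofColex_toColex, minorExponent, minorExponent, Finsupp.finsetSum_apply,
      Finsupp.finsetSum_apply]
    refine Finset.sum_congr rfl fun u _ => ?_
    rw [Equiv.Perm.one_apply]
    rcases lt_trichotomy u t with hu | rfl | hu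
    · rw [hlower (Or.inl hu) hp.le, hlower (Or.inl hu) hp.le]
    · rw [hlower (Or.inr ⟨rfl, ht⟩) hp.le, Finsupp.single_eq_of_ne hp.ne']
    · rw [hfix u hu]
  · rw [ofColex_toColex, ofColex_toColex, minorExponent_one_apply, if_pos rfl, Nat.lt_one_iff,
      minorExponent, Finsupp.finsetSum_apply]
    refine Finset.sum_eq_zero fun u _ => ?_
    rcases lt_trichotomy u t with hu | rfl | hu
    · exact hlower (Or.inl hu) le_rfl
    · exact hlower (Or.inr ⟨rfl, ht⟩) le_rfl
    · exact Finsupp.single_eq_of_ne fun h =>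
        (hr hu).ne (congrArg (fun p => (ofLex p).1) h)

variable {k : Type} [Field k]

theorem HasLeadingShift.prod_ofFn {l : ℕ} {d : Fin l → Exponent}
    {x : Fin l → Module.End (kq k) (Fock k)} (h : ∀ t, HasLeadingShift (d t) (x t)) :
    HasLeadingShift (∑ t, d t) (List.ofFn x).prod := by
  induction l with
  | zero => exact .one
  | succ l ih =>
    rw [List.ofFn_succ, List.prod_cons, Fin.sum_univ_succ]
    exact (h 0).mul (ih fun t => h t.succ)

theorem hasLeadingShift_rowDet_fockEntry {m : ℕ} {r : Fin m → ℕ} (hr : StrictMono r) :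
    HasLeadingShift (minorExponent r 1)
      (rowDet (-qInv k) (fun i (t : Fin m) => fockEntry (k := k) m i t) r) := by
  have hmonomial (σ : Equiv.Perm (Fin m)) : HasLeadingShift (minorExponent r σ)
      (List.ofFn fun t => fockEntry (k := k) m (r t) (σ t)).prod :=
    .prod_ofFn fun t => hasLeadingShift_fockEntry (σ t).2 (r t)
  rw [rowDet, ← Finset.add_sum_erase _ _ (Finset.mem_univ 1), Equiv.Perm.coe_one,
    inversions_eq_zero_of_monotone monotone_id, pow_zero, one_smul]
  refine (hmonomial 1).add_of_lower fun e => ?_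
  rw [LinearMap.sum_apply]
  refine sum_mem fun σ hσ => Submodule.smul_mem _ _ ?_
  refine (hmonomial σ).apply_single_mem_lowerSpan ?_
  exact add_lt_add_right (α := Colex Exponent)
    (toColex_minorExponent_lt hr (Finset.ne_of_mem_erase hσ)) (toColex e)

theorem exists_hasLeadingShift_minorExponent {m n : ℕ} {r : Fin m → ℕ} (hr : StrictMono r)
    (hlt : ∀ t, r t < m + n) :
    ∃ D ∈ QDeltaSub k m n, HasLeadingShift (minorExponent r 1) (fockRep k m n D) := by
  let row (t : Fin m) : RowI m n := rowIdx m n ⟨r t, hlt t⟩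
  have hrow : StrictMono fun t => (row t : ℤ) := fun _ _ h => rowIdx_strictMono m n (hr h)
  let I : Finset ℤ := Finset.univ.map ⟨_, hrow.injective⟩
  have hI : I.card = m := by rw [Finset.card_map, Finset.card_fin]
  have hmem (t : Fin m) : (row t : ℤ) ∈ I := Finset.mem_map_of_mem _ (Finset.mem_univ t)
  have hsub : I ⊆ Finset.Icc (-(m : ℤ)) ((n : ℤ) - 1) := fun _ hi => by
    obtain ⟨t, -, rfl⟩ := Finset.mem_map.mp hi
    exact (row t).2
  refine ⟨_, Algebra.subset_adjoin ⟨I, hI, hsub, rfl⟩, ?_⟩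
  have hrows (t : Fin m) : (⟨I.orderEmbOfFin hI t, hsub (I.orderEmbOfFin_mem hI t)⟩ : RowI m n) =
      row t := Subtype.ext (congrFun (Finset.orderEmbOfFin_unique hI hmem hrow) t).symm
  have hentry (s t : Fin m) :
      fockRep k m n (av k m n (row s) (colIdx m t)) = fockEntry m (r s) t := by
    rw [← fockRep_gen (hlt s) t.2, gen_of_lt (hlt s) t.2]
  convert hasLeadingShift_rowDet_fockEntry (k := k) hr using 1
  rw [qMinor_eq_rowDet, map_rowDet]
  simp only [rowDet, hrows, hentry]

end LeadingMinors

section Descent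

theorem mem_of_add_mem {R M : Type*} [Ring R] [AddCommMonoid M] [Module R M] {S : Submodule R M}
    {x a : M} (hxa : x + a ∈ S) (ha : a ∈ S) : x ∈ S := by
  have hx : x + a + (-1 : R) • a = x := by
    rw [add_assoc, ← one_smul R a, smul_smul, ← add_smul, mul_one, add_neg_cancel, zero_smul,
      add_zero]
  exact hx ▸ add_mem hxa (S.smul_mem _ ha)

variable {k : Type} [Field k] {m n : ℕ}

theorem minorExponent_ne_zero (hm : 0 < m) (r : Fin m → ℕ) : minorExponent r 1 ≠ 0 := fun h => by
  have happly := minorExponent_one_apply r (r ⟨0, hm⟩) ⟨0, hm⟩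
  rw [h, if_pos rfl] at happly
  exact zero_ne_one happly

theorem IsBallot.exists_hasLeadingShift {e : Exponent} (he : IsBallot m n e) :
    ∃ a ∈ QDeltaSub k m n, HasLeadingShift e (fockRep k m n a) := by
  induction e using WellFoundedLT.induction with
  | ind e ih =>
    rcases eq_or_ne e 0 with rfl | hne
    · exact ⟨1, one_mem _, by rw [map_one]; exact .one⟩
    obtain ⟨r, hlt, hr, hr'⟩ := he.exists_first_rows hne
    have hmono : StrictMono r := he.strictMono_first_rows hlt hr hr'
    obtain ⟨p, hp⟩ := DFunLike.ne_iff.mp hne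
    have hm : 0 < m := (he.mem_box p hp).2.pos
    obtain ⟨e, rfl⟩ := le_iff_exists_add'.mp (minorExponent_le hr)
    have hlt_add : e < e + minorExponent r 1 :=
      lt_add_of_pos_right e (pos_iff_ne_zero.mpr (minorExponent_ne_zero hm r))
    obtain ⟨a, ha, hlead⟩ := ih e hlt_add (he.of_add_minorExponent hlt hmono hr')
    obtain ⟨D, hD, hDlead⟩ := exists_hasLeadingShift_minorExponent (k := k) hmono hlt
    exact ⟨a * D, mul_mem ha hD, by rw [map_mul]; exact hlead.mul hDlead⟩

theorem exists_mem_QDeltaSub_fockCoeff_add_mem_lowerSpan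
    {ρ : QMat k m n →ₐ[kq k] QMat k m n ⊗[kq k] QSL k m 0} (hρ : rhoqProp k m n ρ)
    {x : QMat k m n} (hx : ρ x = x ⊗ₜ[kq k] 1) (hne : x ≠ 0) :
    ∃ e₀, fockCoeff k m n x e₀ ≠ 0 ∧
      ∃ a ∈ QDeltaSub k m n, fockCoeff k m n (x + a) ∈ lowerSpan k e₀ := by
  have hsupp : (fockCoeff k m n x).support.Nonempty := Finsupp.support_nonempty_iff.mpr
    fun h => hne (fockCoeff_injective m n (h.trans (map_zero _).symm))
  obtain ⟨e₀, he₀, hmax⟩ := Finset.exists_max_image _ toColex hsupp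
  simp only [Finsupp.mem_support_iff] at he₀ hmax
  obtain ⟨a, ha, hlead⟩ := (isBallot_of_coinvariant hρ hx he₀ hmax).exists_hasLeadingShift (k := k)
  obtain ⟨_, ⟨u, rfl⟩, hau⟩ := hlead 0
  rw [zero_add, ← fockCoeff_apply] at hau
  let c : kq k := -(fockCoeff k m n x e₀ * ↑u⁻¹)
  refine ⟨e₀, he₀, c • a, Subalgebra.smul_mem _ ha c, ?_⟩
  have hrest : fockCoeff k m n x + c • Finsupp.single e₀ (u : kq k) ∈ lowerSpan k e₀ := by
    refine (Finsupp.mem_supported _ _).mpr fun e he => ?_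
    rw [Finset.mem_coe, Finsupp.mem_support_iff, Finsupp.add_apply, Finsupp.smul_apply] at he
    have hee : e ≠ e₀ := by
      rintro rfl
      simp [c] at he
    rw [Finsupp.single_eq_of_ne hee, smul_zero, add_zero] at he
    exact lt_of_le_of_ne (hmax e he) (toColex.injective.ne hee)
  have hsplit : fockCoeff k m n (x + c • a) = fockCoeff k m n x + c • Finsupp.single e₀ (u : kq k) +
      c • (fockCoeff k m n a - Finsupp.single e₀ (u : kq k)) := by
    rw [map_add, map_smul]
    module
  rw [hsplit]
  exact add_mem hrest (Submodule.smul_mem _ c hau)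

theorem mem_QDeltaSub_of_coinvariant {ρ : QMat k m n →ₐ[kq k] QMat k m n ⊗[kq k] QSL k m 0}
    (hρ : rhoqProp k m n ρ) {x : QMat k m n} (hx : ρ x = x ⊗ₜ[kq k] 1) : x ∈ QDeltaSub k m n := by
  have hadd {x a : QMat k m n} (hx : ρ x = x ⊗ₜ[kq k] 1) (ha : a ∈ QDeltaSub k m n) :
      ρ (x + a) = (x + a) ⊗ₜ[kq k] 1 := by
    rw [map_add, hx, coaction_eq_of_mem_QDeltaSub hρ ha, TensorProduct.add_tmul]
  have hlower (f : Colex Exponent) {x : QMat k m n} (hx : ρ x = x ⊗ₜ[kq k] 1)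
      (hf : fockCoeff k m n x ∈ lowerSpan k (ofColex f)) : x ∈ QDeltaSub k m n := by
    induction f using WellFoundedLT.induction generalizing x with
    | ind f ih =>
      rcases eq_or_ne x 0 with rfl | hne
      · exact zero_mem _
      obtain ⟨e₀, he₀, a, ha, hxa⟩ := exists_mem_QDeltaSub_fockCoeff_add_mem_lowerSpan hρ hx hne
      have hlt : toColex e₀ < f :=
        (Finsupp.mem_supported _ _).mp hf (Finsupp.mem_support_iff.mpr he₀)
      exact mem_of_add_mem (S := (QDeltaSub k m n).toSubmodule) (ih _ hlt (hadd hx ha) hxa) ha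
  rcases eq_or_ne x 0 with rfl | hne
  · exact zero_mem _
  obtain ⟨e₀, -, a, ha, hxa⟩ := exists_mem_QDeltaSub_fockCoeff_add_mem_lowerSpan hρ hx hne
  exact mem_of_add_mem (S := (QDeltaSub k m n).toSubmodule)
    (hlower (toColex e₀) (hadd hx ha) hxa) ha

end Descent

end QuantumGrassmannian

theorem stmt19_general (k : Type) [Field k] :
    (∀ m n : ℕ,
      ∃! ρ : QMat k m n →ₐ[kq k] QMat k m n ⊗[kq k] QSL k m 0, rhoqProp k m n ρ) ∧
    ∀ (m n : ℕ) (ρ : QMat k m n →ₐ[kq k] QMat k m n ⊗[kq k] QSL k m 0), rhoqProp k m n ρ →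
      ∀ x : QMat k m n, ρ x = x ⊗ₜ[kq k] (1 : QSL k m 0) ↔ x ∈ QDeltaSub k m n := by
  refine ⟨fun m n => ?_, fun m n ρ hρ x =>
    ⟨QuantumGrassmannian.mem_QDeltaSub_of_coinvariant hρ,
      QuantumGrassmannian.coaction_eq_of_mem_QDeltaSub hρ⟩⟩
  obtain ⟨ρ, hρ⟩ := QuantumGrassmannian.exists_coaction (k := k) m n
  exact ⟨ρ, hρ, fun _ h => QuantumGrassmannian.coaction_unique h hρ⟩

/-- over an algebraically closed field of characteristic 0, the quantum
coactions `ρ^q_{(m,n)}` exist and are unique, and a compatible family `x ∈ k_q[M_∞]` is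
coinvariant for all of them iff each component lies in the quantum grassmannian
`k_q[Δ_{m,n}]`; that is, `k_q[M_∞]^{k_q[SL_{∞,0}]} = k̂_q[Δ_∞]`. -/
theorem stmt19 (k : Type) [Field k] [IsAlgClosed k] [CharZero k] :
    (∀ m n : ℕ, 0 < m → 0 < n →
      ∃! ρ : QMat k m n →ₐ[kq k] QMat k m n ⊗[kq k] QSL k m 0, rhoqProp k m n ρ) ∧
    (∀ E : ∀ p q : PIdx, p ≤ q →
        (QMat k q.1.1 q.1.2 →ₐ[kq k] QMat k p.1.1 p.1.2),
      EqSysProp k E →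
      ∀ ρfam : ∀ p : PIdx, QMat k p.1.1 p.1.2 →ₐ[kq k]
        QMat k p.1.1 p.1.2 ⊗[kq k] QSL k p.1.1 0,
      (∀ p : PIdx, rhoqProp k p.1.1 p.1.2 (ρfam p)) →
      ∀ x : ↥(ringInvLim (fun p : PIdx => QMat k p.1.1 p.1.2)
        (fun p q h => (E p q h).toRingHom)),
        (∀ p : PIdx, ρfam p (x.1 p) =
          (x.1 p) ⊗ₜ[kq k] (1 : QSL k p.1.1 0)) ↔
        (∀ p : PIdx, x.1 p ∈ QDeltaSub k p.1.1 p.1.2)) :=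
  ⟨fun m n _ _ => (stmt19_general k).1 m n, fun _ _ _ hρ _ =>
    forall_congr' fun p => (stmt19_general k).2 _ _ _ (hρ p) _⟩

end
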